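/- arXiv:0712.0469 — 6 statements merged into one kernel-verified Lean document; each statement's English description precedes it below -/
import Mathlib

section
/- Assume C is an n×n nonnegative irreducible matrix and g is an admissible weight function. Then for every x ∈ Σ, the unique invariant measure u_g(x) of M_g(x) is given by u_g(x) = h(x)/⟨h(x), 1⟩, where for every index r, h(x)_r = (Σ_k C_{rk} g(x_k)) · (Σ_{R ∈ A_r(M)} Π_{(i,j)∈R} C_{ij} g(x_j)), the sum being over all spanning arborescences R of the directed graph of M_g(x) rooted at r, and ⟨h(x),1⟩ = Σ_i h(x)_i. -/
open Set Matrix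

open scoped Classical

/-- An admissible weight function. -/
def IsAdmissible (g g' : ℝ → ℝ) : Prop :=
  (∀ x ∈ Set.Icc (0:ℝ) 1, HasDerivWithinAt g (g' x) (Set.Icc (0:ℝ) 1) x) ∧
  ContinuousOn g' (Set.Icc (0:ℝ) 1) ∧
  g 0 = 1 ∧
  (∀ x ∈ Set.Icc (0:ℝ) 1, 0 < g x) ∧
  (∀ x ∈ Set.Icc (0:ℝ) 1, 0 < g' x)

/-- `C` is irreducible: its directed graph (edge `(i,j)` iff `C i j > 0`) is strongly
connected; for a nonnegative matrix this means some power has a positive `(i,j)` entry. -/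
def IsIrred {n : ℕ} (C : Matrix (Fin n) (Fin n) ℝ) : Prop :=
  ∀ i j : Fin n, ∃ m : ℕ, 0 < m ∧ 0 < (C ^ m) i j

/-- The stochastic matrix `M_g(x)`. -/
noncomputable def Mg {n : ℕ} (C : Matrix (Fin n) (Fin n) ℝ) (g : ℝ → ℝ)
    (x : Fin n → ℝ) : Matrix (Fin n) (Fin n) ℝ :=
  Matrix.of fun i j => C i j * g (x j) / ∑ k, C i k * g (x k)

/-- A spanning arborescence of the directed graph of the nonnegative matrix `A`, rooted
at `r`, encoded by the successor map `t` (with the convention `t r = r`): every node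
`i ≠ r` has exactly one outgoing edge `(i, t i)`, which is an edge of `G(A)`, and there
are no directed cycles, i.e. from every node iterating `t` leads to the root `r`. -/
def IsArb {n : ℕ} (A : Matrix (Fin n) (Fin n) ℝ) (r : Fin n) (t : Fin n → Fin n) : Prop :=
  t r = r ∧ (∀ i, i ≠ r → 0 < A i (t i)) ∧ ∀ i, ∃ m : ℕ, t^[m] i = r

/-- The vector `h(x)` of the Matrix Tree Theorem expression:
`h(x)_r = (Σ_k C_{rk} g(x_k)) · Σ_{R ∈ A_r(M_g(x))} Π_{(i,j)∈R} C_{ij} g(x_j)`. -/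
noncomputable def hvec {n : ℕ} (C : Matrix (Fin n) (Fin n) ℝ) (g : ℝ → ℝ)
    (x : Fin n → ℝ) (r : Fin n) : ℝ :=
  (∑ k, C r k * g (x k)) *
    ∑ t ∈ Finset.univ.filter (fun t : Fin n → Fin n => IsArb (Mg C g x) r t),
      ∏ i ∈ Finset.univ.filter (fun i : Fin n => i ≠ r), C i (t i) * g (x (t i))

/-- Every node is driven to `r` by iterating `f`. -/
def Reaches {n : ℕ} (r : Fin n) (f : Fin n → Fin n) : Prop := ∀ i, ∃ m : ℕ, f^[m] i = r

lemma Reaches.congr {n : ℕ} {r : Fin n} {f f' : Fin n → Fin n} (h : Reaches r f)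
    (hff : ∀ i, i ≠ r → f i = f' i) : Reaches r f' := by
  have key : ∀ m i, f^[m] i = r → ∃ m', f'^[m'] i = r := by
    intro m
    induction m with
    | zero => intro i hi; exact ⟨0, hi⟩
    | succ k ih =>
      intro i hi
      by_cases hir : i = r
      · exact ⟨0, hir⟩
      · rw [Function.iterate_succ_apply, hff i hir] at hi
        obtain ⟨m', hm'⟩ := ih _ hi
        exact ⟨m' + 1, by rw [Function.iterate_succ_apply, hm']⟩
  intro i
  obtain ⟨m, hm⟩ := h i
  exact key m i hm

lemma prod_update {n : ℕ} (w : Fin n → Fin n → ℝ) (t : Fin n → Fin n) (r k : Fin n) :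
    ∏ i, w i (Function.update t r k i) =
      w r k * ∏ i ∈ Finset.univ.filter (fun i : Fin n => i ≠ r), w i (t i) := by
  rw [Finset.filter_ne', ← Finset.mul_prod_erase Finset.univ _ (Finset.mem_univ r)]
  rw [Function.update_self]
  congr 1
  apply Finset.prod_congr rfl
  intro i hi
  rw [Function.update_of_ne (Finset.ne_of_mem_erase hi)]

/-- Weighted sum over unconstrained arborescences. -/
noncomputable def tau {n : ℕ} (w : Fin n → Fin n → ℝ) (r : Fin n) : ℝ :=
  ∑ t ∈ Finset.univ.filter (fun t : Fin n → Fin n => t r = r ∧ Reaches r t),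
    ∏ i ∈ Finset.univ.filter (fun i : Fin n => i ≠ r), w i (t i)

lemma sum_out {n : ℕ} (w : Fin n → Fin n → ℝ) (j : Fin n) :
    (∑ k, w j k) * tau w j =
      ∑ f ∈ Finset.univ.filter (fun f : Fin n → Fin n => Reaches j f), ∏ i, w i (f i) := by
  unfold tau
  rw [Finset.sum_mul_sum, ← Finset.sum_product']
  refine Finset.sum_bij (fun p _ => Function.update p.2 j p.1) ?_ ?_ ?_ ?_
  · rintro ⟨k, t⟩ h
    simp only [Finset.mem_product, Finset.mem_filter, Finset.mem_univ, true_and] at h ⊢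
    exact h.2.congr (fun i hi => (Function.update_of_ne hi _ _).symm)
  · rintro ⟨k, t⟩ h ⟨k', t'⟩ h' he
    simp only [Finset.mem_product, Finset.mem_filter, Finset.mem_univ, true_and] at h h' he
    have e1 : k = k' := by simpa using congrFun he j
    have e2 : t = t' := by
      funext i
      by_cases hi : i = j
      · rw [hi, h.1, h'.1]
      · simpa [hi] using congrFun he i
    rw [e1, e2]
  · intro f hf
    simp only [Finset.mem_filter, Finset.mem_univ, true_and] at hf
    refine ⟨(f j, Function.update f j j), ?_, ?_⟩
    · simp only [Finset.mem_product, Finset.mem_filter, Finset.mem_univ, true_and]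
      exact ⟨by simp, hf.congr (fun i hi => (Function.update_of_ne hi _ _).symm)⟩
    · simp
  · rintro ⟨k, t⟩ h
    exact (prod_update w t j k).symm

lemma sum_in {n : ℕ} (w : Fin n → Fin n → ℝ) (j : Fin n) :
    ∑ i, tau w i * w i j =
      ∑ f ∈ Finset.univ.filter (fun f : Fin n → Fin n => Reaches j f), ∏ i, w i (f i) := by
  unfold tau
  simp_rw [Finset.sum_mul]
  rw [Finset.sum_sigma']
  have upd : ∀ (i : Fin n) (t : Fin n → Fin n), Reaches i t →
      Reaches i (Function.update t i j) := fun i t h =>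
    h.congr (fun l hl => (Function.update_of_ne hl _ _).symm)
  have per : ∀ (i : Fin n) (t : Fin n → Fin n), Reaches i t →
      i ∈ Function.periodicPts (Function.update t i j) := by
    intro i t h
    obtain ⟨m, hm⟩ := upd i t h j
    refine ⟨m + 1, Nat.succ_pos _, ?_⟩
    show (Function.update t i j)^[m + 1] i = i
    rw [Function.iterate_succ_apply, Function.update_self, hm]
  refine Finset.sum_bij (fun p _ => Function.update p.2 p.1 j) ?_ ?_ ?_ ?_
  · rintro ⟨i, t⟩ h
    simp only [Finset.mem_sigma, Finset.mem_filter, Finset.mem_univ, true_and] at h ⊢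
    intro l
    obtain ⟨m, hm⟩ := upd i t h.2 l
    exact ⟨m + 1, by rw [Function.iterate_succ_apply', hm, Function.update_self]⟩
  · rintro ⟨i, t⟩ h ⟨i', t'⟩ h' he
    simp only [Finset.mem_sigma, Finset.mem_filter, Finset.mem_univ, true_and] at h h' he
    have p1 := per i t h.2
    have p2 := per i' t' h'.2
    rw [← he] at p2
    have e1 : i = i' := by
      apply (Function.bijOn_periodicPts (Function.update t i j)).injOn p1 p2
      rw [Function.update_self, he, Function.update_self]
    subst e1
    have e2 : t = t' := by
      funext l
      by_cases hi : l = i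
      · rw [hi, h.1, h'.1]
      · simpa [hi] using congrFun he l
    rw [e2]
  · intro f hf
    simp only [Finset.mem_filter, Finset.mem_univ, true_and] at hf
    obtain ⟨m, hm⟩ := hf (f j)
    have hfi : f (f^[m] j) = j := by
      rw [← Function.iterate_succ_apply' f, Function.iterate_succ_apply, hm]
    have hr : Reaches (f^[m] j) f := by
      intro l
      obtain ⟨a, ha⟩ := hf l
      exact ⟨m + a, by rw [Function.iterate_add_apply, ha]⟩
    refine ⟨⟨f^[m] j, Function.update f (f^[m] j) (f^[m] j)⟩, ?_, ?_⟩
    · simp only [Finset.mem_sigma, Finset.mem_filter, Finset.mem_univ, true_and]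
      exact ⟨by simp, hr.congr (fun i hi => (Function.update_of_ne hi _ _).symm)⟩
    · simp only [Function.update_idem]
      conv_lhs => rw [← hfi]
      simp [hfi]
  · rintro ⟨i, t⟩ h
    rw [prod_update w t i j, mul_comm]

lemma pow_nonneg_entries {n : ℕ} {C : Matrix (Fin n) (Fin n) ℝ} (hC0 : ∀ i j, 0 ≤ C i j)
    (m : ℕ) : ∀ i j, 0 ≤ (C ^ m) i j := by
  induction m with
  | zero => intro i j; rw [pow_zero, Matrix.one_apply]; split_ifs <;> norm_num
  | succ k ih =>
    intro i j
    rw [pow_succ', Matrix.mul_apply]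
    exact Finset.sum_nonneg fun l _ => mul_nonneg (hC0 _ _) (ih _ _)

lemma step {n : ℕ} {C : Matrix (Fin n) (Fin n) ℝ} (hC0 : ∀ i j, 0 ≤ C i j)
    (m : ℕ) (i j : Fin n) (h : 0 < (C ^ (m + 1)) i j) :
    ∃ k, 0 < C i k ∧ 0 < (C ^ m) k j := by
  rw [pow_succ', Matrix.mul_apply] at h
  obtain ⟨k, -, hk⟩ := Finset.exists_lt_of_sum_lt (s := Finset.univ) (f := fun _ => (0:ℝ))
    (by simpa using h)
  refine ⟨k, ?_, ?_⟩
  · rcases (hC0 i k).lt_or_eq with h1 | h1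
    · exact h1
    · simp [← h1] at hk
  · rcases (pow_nonneg_entries hC0 m k j).lt_or_eq with h1 | h1
    · exact h1
    · simp [← h1] at hk

lemma exists_arb {n : ℕ} {C : Matrix (Fin n) (Fin n) ℝ} (hC0 : ∀ i j, 0 ≤ C i j)
    (hC : IsIrred C) (r : Fin n) :
    ∃ t : Fin n → Fin n, t r = r ∧ (∀ i, i ≠ r → 0 < C i (t i)) ∧ Reaches r t := by
  have hex : ∀ i, ∃ m, 0 < (C ^ m) i r := fun i => by
    obtain ⟨m, -, hm⟩ := hC i r
    exact ⟨m, hm⟩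
  have hst : ∀ i, ∃ k, (i = r → k = r) ∧
      (i ≠ r → 0 < C i k ∧ Nat.find (hex k) < Nat.find (hex i)) := by
    intro i
    by_cases hi : i = r
    · exact ⟨r, fun _ => rfl, fun h => absurd hi h⟩
    · have hp := Nat.find_spec (hex i)
      rcases hd : Nat.find (hex i) with _ | d
      · rw [hd, pow_zero, Matrix.one_apply_ne hi] at hp
        exact absurd hp (lt_irrefl _)
      · rw [hd] at hp
        obtain ⟨k, hk1, hk2⟩ := step hC0 d i r hp
        exact ⟨k, fun h => absurd h hi,
          fun _ => ⟨hk1, Nat.lt_succ_of_le (Nat.find_min' (hex k) hk2)⟩⟩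
  choose t ht1 ht2 using hst
  refine ⟨t, ht1 r rfl, fun i hi => (ht2 i hi).1, ?_⟩
  have key : ∀ d i, Nat.find (hex i) = d → ∃ m, t^[m] i = r := by
    intro d
    induction d using Nat.strong_induction_on with
    | _ d ih =>
      intro i hi
      by_cases hir : i = r
      · exact ⟨0, hir⟩
      · obtain ⟨m, hm⟩ := ih _ (hi ▸ (ht2 i hir).2) (t i) rfl
        exact ⟨m + 1, by rw [Function.iterate_succ_apply, hm]⟩
  exact fun i => key _ i rfl

theorem invariant_measure_matrix_tree
    (n : ℕ) (C : Matrix (Fin n) (Fin n) ℝ)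
    (hC0 : ∀ i j, 0 ≤ C i j) (hCirr : IsIrred C)
    (g g' : ℝ → ℝ) (hg : IsAdmissible g g')
    (u : (Fin n → ℝ) → (Fin n → ℝ))
    (hu : ∀ x ∈ stdSimplex ℝ (Fin n), u x ∈ stdSimplex ℝ (Fin n) ∧
      Matrix.vecMul (u x) (Mg C g x) = u x ∧
      ∀ v ∈ stdSimplex ℝ (Fin n), Matrix.vecMul v (Mg C g x) = v → v = u x) :
    ∀ x ∈ stdSimplex ℝ (Fin n), ∀ r : Fin n,
      u x r = hvec C g x r / ∑ i, hvec C g x i := by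
  intro x hx r
  have hgx : ∀ j, 0 < g (x j) := by
    intro j
    apply hg.2.2.2.1
    refine ⟨hx.1 j, ?_⟩
    rw [← hx.2]
    exact Finset.single_le_sum (fun i _ => hx.1 i) (Finset.mem_univ j)
  obtain ⟨w, hw⟩ : ∃ w : Fin n → Fin n → ℝ, w = fun i j => C i j * g (x j) := ⟨_, rfl⟩
  have hw0 : ∀ i j, 0 ≤ w i j := fun i j => by
    rw [hw]; exact mul_nonneg (hC0 i j) (hgx j).le
  have hwpos : ∀ i j, 0 < C i j → 0 < w i j := fun i j h => by
    rw [hw]; exact mul_pos h (hgx j)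
  have hS : ∀ i, 0 < ∑ k, w i k := by
    intro i
    obtain ⟨m, hm, hp⟩ := hCirr i i
    obtain ⟨d, rfl⟩ := Nat.exists_eq_succ_of_ne_zero hm.ne'
    obtain ⟨k, hk, -⟩ := step hC0 d i i hp
    exact Finset.sum_pos' (fun j _ => hw0 i j) ⟨k, Finset.mem_univ k, hwpos i k hk⟩
  have hM : ∀ i j, Mg C g x i j = w i j / ∑ k, w i k := fun i j => by
    rw [hw]; rfl
  have hMpos : ∀ i j, 0 < Mg C g x i j ↔ 0 < w i j := fun i j => by
    rw [hM]; exact div_pos_iff_of_pos_right (hS i)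
  have hh : ∀ i, hvec C g x i = (∑ k, w i k) * tau w i := by
    intro i
    have e1 : hvec C g x i = (∑ k, w i k) *
      ∑ t ∈ Finset.univ.filter (fun t : Fin n → Fin n => IsArb (Mg C g x) i t),
        ∏ l ∈ Finset.univ.filter (fun l : Fin n => l ≠ i), w l (t l) := by
      rw [hw]; rfl
    rw [e1, tau]
    congr 1
    apply Finset.sum_subset
    · intro t ht
      simp only [Finset.mem_filter, Finset.mem_univ, true_and] at ht ⊢
      exact ⟨ht.1, ht.2.2⟩
    · intro t ht hnt
      simp only [Finset.mem_filter, Finset.mem_univ, true_and] at ht hnt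
      have : ∃ l, l ≠ i ∧ ¬ 0 < w l (t l) := by
        by_contra hcon
        push Not at hcon
        exact hnt ⟨ht.1, fun l hl => (hMpos _ _).2 (hcon l hl), ht.2⟩
      obtain ⟨l, hl, hl0⟩ := this
      exact Finset.prod_eq_zero (i := l) (by simp [hl])
        (le_antisymm (not_lt.1 hl0) (hw0 _ _))
  have htau0 : ∀ i, 0 < tau w i := by
    intro i
    obtain ⟨t, h1, h2, h3⟩ := exists_arb hC0 hCirr i
    refine Finset.sum_pos' (fun t _ => Finset.prod_nonneg fun l _ => hw0 _ _)
      ⟨t, by simp [h1, h3], Finset.prod_pos ?_⟩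
    intro l hl
    exact hwpos _ _ (h2 l (by simpa using hl))
  have hpos : ∀ i, 0 < hvec C g x i := fun i => by
    rw [hh]; exact mul_pos (hS i) (htau0 i)
  have hsum : 0 < ∑ i, hvec C g x i :=
    Finset.sum_pos (fun i _ => hpos i) ⟨r, Finset.mem_univ r⟩
  have hinv : ∀ j, ∑ i, hvec C g x i * Mg C g x i j = hvec C g x j := by
    intro j
    rw [hh j, sum_out, ← sum_in]
    apply Finset.sum_congr rfl
    intro i _
    rw [hh, hM]
    have := (hS i).ne'
    field_simp
  have := (hu x hx).2.2 (fun i => hvec C g x i / ∑ i, hvec C g x i)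
    ⟨fun i => (div_pos (hpos i) hsum).le, by
      rw [← Finset.sum_div, div_self hsum.ne']⟩ (by
      funext j
      simp only [Matrix.vecMul, dotProduct]
      rw [← hinv j, Finset.sum_div]
      apply Finset.sum_congr rfl
      intro i _
      rw [div_mul_eq_mul_div])
  rw [← this]
end

section
/- Assume C is an n×n nonnegative irreducible matrix and g is an admissible weight function. Then the map u_g : Σ → Σ has at least one fixed point in int(Σ), and moreover every fixed point of u_g lies in int(Σ). -/
open Set Matrix

namespace ScarfLemma

variable {X I : Type} [Fintype X] [Fintype I] [DecidableEq X] [DecidableEq I]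

/-- `σ` is dominant with respect to `C`. -/
def Dom (r : I → X → ℕ) (σ : Finset X) (C : Finset I) : Prop :=
  ∀ x, ∃ i ∈ C, ∀ s ∈ σ, r i x ≤ r i s

/-- the room `R` has the door `d`. -/
def Adj (d R : Finset X × Finset I) : Prop :=
  (R.1 = d.1 ∧ ∃ k ∈ d.2, R.2 = d.2.erase k) ∨ (R.2 = d.2 ∧ ∃ x, x ∉ d.1 ∧ R.1 = insert x d.1)

def KRoom (r : I → X → ℕ) (m : I → X) (τ : Finset X) (D : Finset I) (k : I)
    (R : Finset X × Finset I) : Prop :=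
  Dom r R.1 R.2 ∧ ((R.1 = τ ∧ R.2 = D.erase k) ∨
    (R.2 = D ∧ ∃ x, x ∉ τ ∧ R.1 = insert x τ ∧ ∀ l ∈ D, l ≠ k → r l (m l) < r l x))

theorem kroom_exists (r : I → X → ℕ) (hr : ∀ i, Function.Injective (r i))
    (m : I → X) (τ : Finset X) (D : Finset I) (k : I) (hk : k ∈ D)
    (hm : ∀ i, m i ∈ τ) (hmin : ∀ i, ∀ s ∈ τ, r i (m i) ≤ r i s)
    (hdom : Dom r τ D) (himg : (D.erase k).image m = τ) :
    ∃ R, KRoom r m τ D k R ∧ ∀ R', KRoom r m τ D k R' → R' = R := by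
  classical
  set M : Finset X := Finset.univ.filter (fun z => ∀ l ∈ D, l ≠ k → r l (m l) < r l z) with hM
  have hMmem : ∀ z, z ∈ M ↔ ∀ l ∈ D, l ≠ k → r l (m l) < r l z := by
    intro z; simp [hM]
  have hMτ : ∀ z ∈ M, z ∉ τ := by
    intro z hz hzt
    rw [← himg, Finset.mem_image] at hzt
    obtain ⟨l, hl, rfl⟩ := hzt
    have := (hMmem _).1 hz l (Finset.mem_of_mem_erase hl) (Finset.ne_of_mem_erase hl)
    omega
  rcases M.eq_empty_or_nonempty with hE | hne
  · refine ⟨(τ, D.erase k), ⟨?_, Or.inl ⟨rfl, rfl⟩⟩, ?_⟩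
    · intro x
      have hx : x ∉ M := by simp [hE]
      rw [hMmem] at hx
      push Not at hx
      obtain ⟨l, hl, hlk, h⟩ := hx
      exact ⟨l, Finset.mem_erase.2 ⟨hlk, hl⟩, fun s hs => h.trans (hmin l s hs)⟩
    · rintro ⟨σ, C⟩ ⟨_, h | ⟨_, x, _, _, hx⟩⟩
      · exact Prod.ext h.1 h.2
      · have : x ∈ M := (hMmem x).2 hx
        simp [hE] at this
  · obtain ⟨x, hxM, hxmax⟩ := M.exists_max_image (r k) hne
    have hxl := (hMmem x).1 hxM
    have hkx : r k x ≤ r k (m k) := by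
      obtain ⟨i, hi, h⟩ := hdom x
      by_cases hik : i = k
      · subst hik; exact h _ (hm _)
      · have := hxl i hi hik
        have := h _ (hm i)
        omega
    refine ⟨(insert x τ, D), ⟨?_, Or.inr ⟨rfl, x, hMτ x hxM, rfl, hxl⟩⟩, ?_⟩
    · intro z
      by_cases hz : z ∈ M
      · refine ⟨k, hk, fun s hs => ?_⟩
        rcases Finset.mem_insert.1 hs with rfl | hs
        · exact hxmax z hz
        · exact (hxmax z hz).trans (hkx.trans (hmin k s hs))
      · rw [hMmem] at hz
        push Not at hz
        obtain ⟨l, hl, hlk, h⟩ := hz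
        refine ⟨l, hl, fun s hs => ?_⟩
        rcases Finset.mem_insert.1 hs with rfl | hs
        · exact h.trans (hxl l hl hlk).le
        · exact h.trans (hmin l s hs)
    · rintro ⟨σ, C⟩ ⟨hd, ⟨h1, h2⟩ | ⟨h2, y, hy, h1, hyl⟩⟩
      · simp only at h1 h2 hd
        subst h1 h2
        obtain ⟨i, hi, h⟩ := hd x
        have h3 := hxl i (Finset.mem_of_mem_erase hi) (Finset.ne_of_mem_erase hi)
        have := h _ (hm i)
        omega
      · simp only at h1 h2 hd
        subst h1 h2
        have hyM : y ∈ M := (hMmem y).2 hyl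
        have h1 := hxmax y hyM
        obtain ⟨i, hi, h⟩ := hd x
        have : i = k := by
          by_contra hik
          have h3 := hxl i hi hik
          have := h _ (Finset.mem_insert_of_mem (hm i))
          omega
        subst this
        have h2 := h y (Finset.mem_insert_self _ _)
        have : x = y := hr i (le_antisymm h2 h1)
        rw [this]

theorem door_two (r : I → X → ℕ) (hr : ∀ i, Function.Injective (r i))
    (τ : Finset X) (D : Finset I) (hne : τ.Nonempty) (hcard : D.card = τ.card + 1)
    (hdom : Dom r τ D) :
    ∃ R₁ R₂, R₁ ≠ R₂ ∧ ∀ R, (Dom r R.1 R.2 ∧ Adj (τ, D) R) ↔ R = R₁ ∨ R = R₂ := by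
  classical
  have hmex : ∀ i, ∃ y ∈ τ, ∀ s ∈ τ, r i y ≤ r i s := fun i => τ.exists_min_image (r i) hne
  choose m hm hmin using hmex
  have huniq : ∀ i y, y ∈ τ → (∀ s ∈ τ, r i y ≤ r i s) → m i = y := fun i y hy h =>
    hr i (le_antisymm (hmin i y hy) (h _ (hm i)))
  have hinj : ∀ k ∈ D, (D.erase k).image m = τ → Set.InjOn m (D.erase k) := by
    intro k hk h
    apply Finset.card_image_iff.1
    rw [h, Finset.card_erase_of_mem hk, hcard]; simp
  obtain ⟨i, hi, j, hj, hij, hmij⟩ := Finset.exists_ne_map_eq_of_card_lt_of_maps_to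
    (s := D) (t := τ) (f := m) (by omega) (fun i _ => hm i)
  have himgD : ∀ y ∈ τ, ∃ l ∈ D, m l = y := by
    intro y hy
    obtain ⟨l, hl, h⟩ := hdom y
    exact ⟨l, hl, huniq l y hy h⟩
  have himg : ∀ a b, a ∈ D → b ∈ D → a ≠ b → m a = m b → (D.erase a).image m = τ := by
    intro a b ha hb hab hmab
    ext y
    simp only [Finset.mem_image, Finset.mem_erase]
    constructor
    · rintro ⟨l, _, rfl⟩; exact hm l
    · intro hy
      obtain ⟨l, hl, rfl⟩ := himgD y hy
      by_cases hla : l = a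
      · subst hla; exact ⟨b, ⟨hab.symm, hb⟩, hmab.symm⟩
      · exact ⟨l, ⟨hla, hl⟩, rfl⟩
  have hi' := himg i j hi hj hij hmij
  have hj' := himg j i hj hi hij.symm hmij.symm
  have honly : ∀ k ∈ D, (D.erase k).image m = τ → k = i ∨ k = j := by
    intro k hk h
    by_contra hc
    push Not at hc
    exact hij (hinj k hk h (by simp [hi, hc.1.symm]) (by simp [hj, hc.2.symm]) hmij)
  obtain ⟨Ri, hRi, hRi'⟩ := kroom_exists r hr m τ D i hi hm hmin hdom hi'
  obtain ⟨Rj, hRj, hRj'⟩ := kroom_exists r hr m τ D j hj hm hmin hdom hj'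
  have hback : ∀ k ∈ D, ∀ R, KRoom r m τ D k R → Dom r R.1 R.2 ∧ Adj (τ, D) R := by
    rintro k hk R ⟨hd, h | ⟨h, x, hx, hx', _⟩⟩
    · exact ⟨hd, Or.inl ⟨h.1, k, hk, h.2⟩⟩
    · exact ⟨hd, Or.inr ⟨h, x, hx, hx'⟩⟩
  refine ⟨Ri, Rj, ?_, fun R => ⟨?_, ?_⟩⟩
  · rintro rfl
    rcases hRi with ⟨_, ⟨h1, h2⟩ | ⟨h2, x, hx, h1, hl⟩⟩
    · rcases hRj with ⟨_, ⟨h1', h2'⟩ | ⟨h2', x', hx', h1', hl'⟩⟩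
      · rw [h2] at h2'
        have : i ∈ D.erase j := Finset.mem_erase.2 ⟨hij, hi⟩
        rw [← h2'] at this
        simp at this
      · rw [h2] at h2'
        have : i ∈ D.erase i := by rw [h2']; exact hi
        simp at this
    · rcases hRj with ⟨_, ⟨h1', h2'⟩ | ⟨h2', x', hx', h1', hl'⟩⟩
      · rw [h2] at h2'
        have : j ∈ D.erase j := by rw [← h2']; exact hj
        simp at this
      · rw [h1] at h1'
        have hxx : x = x' := by
          have : x ∈ insert x' τ := by rw [← h1']; simp
          rcases Finset.mem_insert.1 this with h | h
          · exact h
          · exact absurd h hx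
        subst hxx
        obtain ⟨l, hl1, hl2⟩ := hdom x
        have h3 := hl2 _ (hm l)
        by_cases hli : l = i
        · have := hl' l hl1 (by rw [hli]; exact hij)
          omega
        · have := hl l hl1 hli
          omega
  · rintro ⟨hd, ⟨h1, k, hk, h2⟩ | ⟨h2, x, hx, h1⟩⟩
    · simp only at h1 h2 hk
      have hkimg : (D.erase k).image m = τ := by
        ext y
        simp only [Finset.mem_image]
        constructor
        · rintro ⟨l, _, rfl⟩; exact hm l
        · intro hy
          rw [h1, h2] at hd
          obtain ⟨l, hl, h⟩ := hd y
          exact ⟨l, hl, huniq l y hy h⟩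
      have hK : KRoom r m τ D k R := ⟨hd, Or.inl ⟨h1, h2⟩⟩
      rcases honly k hk hkimg with rfl | rfl
      · exact Or.inl (hRi' _ hK)
      · exact Or.inr (hRj' _ hK)
    · simp only at h1 h2 hx
      have hd0 := hd
      rw [h1, h2] at hd
      obtain ⟨k, hk, hkx⟩ := hd x
      have key : ∀ y ∈ τ, ∃ l ∈ D, l ≠ k ∧ m l = y ∧ r l y < r l x := by
        intro y hy
        obtain ⟨l, hl, h⟩ := hd y
        have h3 := h x (Finset.mem_insert_self _ _)
        have hne : r l y ≠ r l x := fun e => hx (by rw [← hr l e]; exact hy)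
        refine ⟨l, hl, ?_, huniq l y hy fun s hs => h s (Finset.mem_insert_of_mem hs), by omega⟩
        rintro rfl
        have := hkx y (Finset.mem_insert_of_mem hy)
        omega
      have hkimg : (D.erase k).image m = τ := by
        ext y
        simp only [Finset.mem_image]
        constructor
        · rintro ⟨l, _, rfl⟩; exact hm l
        · intro hy
          obtain ⟨l, hl, hlk, h, _⟩ := key y hy
          exact ⟨l, Finset.mem_erase.2 ⟨hlk, hl⟩, h⟩
      have hK : KRoom r m τ D k R := by
        refine ⟨hd0, Or.inr ⟨h2, x, hx, h1, fun l hl hlk => ?_⟩⟩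
        obtain ⟨l', hl', hlk', h, h'⟩ := key (m l) (hm l)
        have : l' = l := hinj k hk hkimg (by simp [hl', hlk']) (by simp [hl, hlk]) h
        rw [this] at h'
        exact h'
      rcases honly k hk hkimg with rfl | rfl
      · exact Or.inl (hRi' _ hK)
      · exact Or.inr (hRj' _ hK)
  · rintro (rfl | rfl)
    · exact hback i hi _ hRi
    · exact hback j hj _ hRj

/-- typed doors -/
def Typed (c : X → I) (i₀ : I) (d : Finset X × Finset I) : Prop :=
  i₀ ∈ d.2 ∧ d.1.image c = d.2.erase i₀ ∧ d.2.card = d.1.card + 1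

theorem room_two (c : X → I) (i₀ : I) (R : Finset X × Finset I) (hcard : R.1.card = R.2.card)
    (hnc : R.1.image c ≠ R.2) (d : Finset X × Finset I) (hd : Typed c i₀ d ∧ Adj d R) :
    ∃ d₁ d₂, d₁ ≠ d₂ ∧ ∀ d, (Typed c i₀ d ∧ Adj d R) ↔ d = d₁ ∨ d = d₂ := by
  classical
  obtain ⟨σ, C⟩ := R
  simp only at hcard hnc
  have hiff : ∀ d, (Typed c i₀ d ∧ Adj d (σ, C)) ↔
      (i₀ ∈ C ∧ ((∃ j, j ∉ C ∧ d = (σ, insert j C) ∧ σ.image c = insert j (C.erase i₀)) ∨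
      (∃ x ∈ σ, d = (σ.erase x, C) ∧ (σ.erase x).image c = C.erase i₀))) := by
    rintro ⟨τ, D⟩
    simp only [Typed, Adj]
    constructor
    · rintro ⟨⟨h1, h2, h3⟩, ⟨h4, k, hk, h5⟩ | ⟨h4, x, hx, h5⟩⟩
      · subst h4 h5
        have hne : k ≠ i₀ := by rintro rfl; exact hnc h2
        refine ⟨by simp [h1, hne.symm], Or.inl ⟨k, by simp, by rw [Finset.insert_erase hk], ?_⟩⟩
        rw [h2]
        ext a; simp only [Finset.mem_insert, Finset.mem_erase]
        grind
      · subst h4 h5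
        exact ⟨h1, Or.inr ⟨x, by simp, by rw [Finset.erase_insert hx], by
          rw [Finset.erase_insert hx, h2]⟩⟩
    · rintro ⟨h1, ⟨j, hj, h2, h3⟩ | ⟨x, hx, h2, h3⟩⟩
      · obtain ⟨rfl, rfl⟩ := Prod.mk.inj h2
        refine ⟨⟨by simp [h1], ?_, by rw [Finset.card_insert_of_notMem hj, hcard]⟩,
          Or.inl ⟨rfl, j, by simp, by rw [Finset.erase_insert hj]⟩⟩
        rw [h3]
        ext a; simp only [Finset.mem_insert, Finset.mem_erase]
        have : j ≠ i₀ := by rintro rfl; exact hj h1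
        grind
      · obtain ⟨rfl, rfl⟩ := Prod.mk.inj h2
        refine ⟨⟨h1, h3, ?_⟩, Or.inr ⟨rfl, x, by simp, by rw [Finset.insert_erase hx]⟩⟩
        rw [← hcard, Finset.card_erase_add_one hx]
  simp only [hiff]
  have hinjx : ∀ x ∈ σ, i₀ ∈ C → (σ.erase x).image c = C.erase i₀ → Set.InjOn c (σ.erase x) := by
    intro x hx h1 h
    apply Finset.card_image_iff.1
    rw [h, Finset.card_erase_of_mem hx, Finset.card_erase_of_mem h1, hcard]
  have caseA : i₀ ∈ C → ∀ j, j ∉ C → σ.image c = insert j (C.erase i₀) →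
      ∃ d₁ d₂, d₁ ≠ d₂ ∧ ∀ d, (i₀ ∈ C ∧ ((∃ j, j ∉ C ∧ d = (σ, insert j C) ∧
        σ.image c = insert j (C.erase i₀)) ∨
      (∃ x ∈ σ, d = (σ.erase x, C) ∧ (σ.erase x).image c = C.erase i₀))) ↔ d = d₁ ∨ d = d₂ := by
    intro h1 j hj h
    have hinj : Set.InjOn c σ := by
      apply Finset.card_image_iff.1
      rw [h, Finset.card_insert_of_notMem (by simp [hj]), Finset.card_erase_add_one h1, hcard]
    obtain ⟨x, hx, hxj⟩ : ∃ x ∈ σ, c x = j := by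
      have : j ∈ σ.image c := by rw [h]; simp
      simpa using this
    have hxe : (σ.erase x).image c = C.erase i₀ := by
      ext a
      have ha : a ∈ σ.image c ↔ a ∈ insert j (C.erase i₀) := by rw [h]
      simp only [Finset.mem_image, Finset.mem_insert, Finset.mem_erase] at ha ⊢
      constructor
      · rintro ⟨y, ⟨hyx, hy⟩, rfl⟩
        rcases ha.1 ⟨y, hy, rfl⟩ with h' | h'
        · exact absurd (hinj hy hx (h'.trans hxj.symm)) hyx
        · exact h'
      · intro h'
        obtain ⟨y, hy, hya⟩ := ha.2 (Or.inr h')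
        refine ⟨y, ⟨?_, hy⟩, hya⟩
        rintro rfl
        apply hj; rw [← hxj, hya]; exact h'.2
    refine ⟨(σ, insert j C), (σ.erase x, C), ?_, fun d => ⟨?_, ?_⟩⟩
    · intro he
      have := (Prod.mk.inj he).2
      apply hj; rw [← this]; simp
    · rintro ⟨_, ⟨j', hj', rfl, h'⟩ | ⟨x', hx', rfl, h'⟩⟩
      · left
        have : j' ∈ insert j (C.erase i₀) := by rw [← h, h']; simp
        rcases Finset.mem_insert.1 this with rfl | h''
        · rfl
        · exact absurd (Finset.mem_of_mem_erase h'') hj'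
      · right
        have : x' = x := by
          by_contra hne
          have : c x ∈ C.erase i₀ := by
            rw [← h']
            exact Finset.mem_image_of_mem _ (Finset.mem_erase.2 ⟨Ne.symm hne, hx⟩)
          rw [hxj] at this
          exact hj (Finset.mem_of_mem_erase this)
        rw [this]
    · rintro (rfl | rfl)
      · exact ⟨h1, Or.inl ⟨j, hj, rfl, h⟩⟩
      · exact ⟨h1, Or.inr ⟨x, hx, rfl, hxe⟩⟩
  rw [hiff] at hd
  obtain ⟨h1, ⟨j, hj, _, h⟩ | ⟨x, hx, _, h⟩⟩ := hd
  · exact caseA h1 j hj h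
  · have hfull : σ.image c = insert (c x) (C.erase i₀) := by
      rw [← h, ← Finset.image_insert, Finset.insert_erase hx]
    by_cases hcx : c x ∈ C
    · have hne : c x ≠ i₀ := by
        intro e
        apply hnc
        rw [hfull, e, Finset.insert_erase h1]
      have hcx' : c x ∈ C.erase i₀ := Finset.mem_erase.2 ⟨hne, hcx⟩
      obtain ⟨y, hy, hyx⟩ : ∃ y ∈ σ.erase x, c y = c x := by
        rw [← h] at hcx'; simpa using hcx'
      have hyσ := Finset.mem_of_mem_erase hy
      have hyne := Finset.ne_of_mem_erase hy
      rw [Finset.insert_eq_of_mem hcx'] at hfull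
      have hye : (σ.erase y).image c = C.erase i₀ := by
        rw [← hfull]
        ext a
        simp only [Finset.mem_image, Finset.mem_erase]
        constructor
        · rintro ⟨z, ⟨_, hz⟩, rfl⟩; exact ⟨z, hz, rfl⟩
        · rintro ⟨z, hz, rfl⟩
          by_cases hzy : z = y
          · subst hzy; exact ⟨x, ⟨hyne.symm, hx⟩, hyx.symm⟩
          · exact ⟨z, ⟨hzy, hz⟩, rfl⟩
      refine ⟨(σ.erase x, C), (σ.erase y, C), ?_, fun d => ⟨?_, ?_⟩⟩
      · intro he
        have he := (Prod.mk.inj he).1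
        rw [he] at hy; simp at hy
      · rintro ⟨_, ⟨j', hj', rfl, h'⟩ | ⟨x', hx', rfl, h'⟩⟩
        · exfalso
          have : j' ∈ C.erase i₀ := by rw [← hfull, h']; simp
          exact hj' (Finset.mem_of_mem_erase this)
        · by_cases e1 : x' = x
          · left; rw [e1]
          by_cases e2 : x' = y
          · right; rw [e2]
          exact absurd (hinjx x' hx' h1 h' (by simp [hyσ, Ne.symm e2]) (by simp [hx, Ne.symm e1]) hyx)
            hyne
      · rintro (rfl | rfl)
        · exact ⟨h1, Or.inr ⟨x, hx, rfl, h⟩⟩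
        · exact ⟨h1, Or.inr ⟨y, hyσ, rfl, hye⟩⟩
    · exact caseA h1 (c x) hcx hfull

theorem dom_of_adj (r : I → X → ℕ) (d R : Finset X × Finset I) (h : Adj d R)
    (hR : Dom r R.1 R.2) : Dom r d.1 d.2 := by
  intro x
  obtain ⟨i, hi, hs⟩ := hR x
  rcases h with ⟨h1, k, hk, h2⟩ | ⟨h1, y, hy, h2⟩
  · rw [h2] at hi; rw [h1] at hs
    exact ⟨i, Finset.mem_of_mem_erase hi, hs⟩
  · rw [h1] at hi; rw [h2] at hs
    exact ⟨i, hi, fun s hs' => hs s (Finset.mem_insert_of_mem hs')⟩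

theorem card_of_adj (d R : Finset X × Finset I) (h : Adj d R)
    (hd : d.2.card = d.1.card + 1) : R.1.card = R.2.card := by
  rcases h with ⟨h1, k, hk, h2⟩ | ⟨h1, y, hy, h2⟩
  · rw [h1, h2, Finset.card_erase_of_mem hk]; omega
  · rw [h1, h2, Finset.card_insert_of_notMem hy]; omega

theorem exists_colourful [Nonempty X] [Nonempty I] (r : I → X → ℕ)
    (hr : ∀ i, Function.Injective (r i)) (c : X → I) :
    ∃ (σ : Finset X) (C : Finset I), Dom r σ C ∧ σ.image c = C := by
  classical
  by_contra hno
  push Not at hno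
  obtain ⟨i₀⟩ := ‹Nonempty I›
  set doors : Finset (Finset X × Finset I) :=
    Finset.univ.filter (fun d => Typed c i₀ d ∧ Dom r d.1 d.2) with hdoors
  set rooms : Finset (Finset X × Finset I) :=
    Finset.univ.filter (fun R => Dom r R.1 R.2 ∧ R.1.card = R.2.card) with hrooms
  have hsum := Finset.sum_card_bipartiteAbove_eq_sum_card_bipartiteBelow
    (s := doors) (t := rooms) (fun d R => Adj d R)
  have heven : Even (∑ R ∈ rooms, (Finset.bipartiteBelow (fun d R => Adj d R) doors R).card) := by
    apply Finset.even_sum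
    intro R hR
    obtain ⟨hRd, hRc⟩ := (Finset.mem_filter.1 hR).2
    have hmem : ∀ d, d ∈ Finset.bipartiteBelow (fun d R => Adj d R) doors R ↔
        (Typed c i₀ d ∧ Adj d R) := by
      intro d
      simp only [Finset.mem_bipartiteBelow, hdoors, Finset.mem_filter, Finset.mem_univ, true_and]
      constructor
      · rintro ⟨⟨h1, _⟩, h2⟩; exact ⟨h1, h2⟩
      · rintro ⟨h1, h2⟩; exact ⟨⟨h1, dom_of_adj r d R h2 hRd⟩, h2⟩
    rcases (Finset.bipartiteBelow (fun d R => Adj d R) doors R).eq_empty_or_nonempty with h | ⟨d, hd⟩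
    · rw [h]; simp
    · obtain ⟨d₁, d₂, hne, h⟩ := room_two c i₀ R hRc (hno _ _ hRd) d ((hmem d).1 hd)
      have : Finset.bipartiteBelow (fun d R => Adj d R) doors R = {d₁, d₂} := by
        ext d; rw [hmem, h]; simp
      rw [this, Finset.card_pair hne]; decide
  have hd0 : ((∅ : Finset X), ({i₀} : Finset I)) ∈ doors := by
    rw [hdoors, Finset.mem_filter]
    exact ⟨Finset.mem_univ _, ⟨by simp, by simp, by simp⟩, fun x => ⟨i₀, by simp, by simp⟩⟩
  rw [← hsum, ← Finset.add_sum_erase _ _ hd0] at heven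
  have heven2 : Even (∑ d ∈ doors.erase (∅, {i₀}),
      (Finset.bipartiteAbove (fun d R => Adj d R) rooms d).card) := by
    apply Finset.even_sum
    rintro ⟨τ, D⟩ hd
    obtain ⟨hne, hd⟩ := Finset.mem_erase.1 hd
    obtain ⟨⟨ht1, ht2, ht3⟩, hdom⟩ := (Finset.mem_filter.1 hd).2
    simp only at ht1 ht2 ht3 hdom
    have hτ : τ.Nonempty := by
      rw [Finset.nonempty_iff_ne_empty]
      rintro rfl
      apply hne
      simp only [Finset.card_empty, zero_add, Finset.card_eq_one] at ht3
      obtain ⟨a, rfl⟩ := ht3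
      simp only [Finset.mem_singleton] at ht1
      rw [ht1]
    obtain ⟨R₁, R₂, hne, h⟩ := door_two r hr τ D hτ ht3 hdom
    have : Finset.bipartiteAbove (fun d R => Adj d R) rooms (τ, D) = {R₁, R₂} := by
      ext R
      simp only [Finset.mem_bipartiteAbove, hrooms, Finset.mem_filter, Finset.mem_univ, true_and,
        Finset.mem_insert, Finset.mem_singleton]
      rw [← h]
      constructor
      · rintro ⟨⟨h1, _⟩, h2⟩; exact ⟨h1, h2⟩
      · rintro ⟨h1, h2⟩; exact ⟨⟨h1, card_of_adj _ _ h2 ht3⟩, h2⟩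
    rw [this, Finset.card_pair hne]; decide
  have hone : (Finset.bipartiteAbove (fun d R => Adj d R) rooms
      ((∅ : Finset X), ({i₀} : Finset I))).card = 1 := by
    obtain ⟨x, _, hx⟩ := (Finset.univ : Finset X).exists_max_image (r i₀) Finset.univ_nonempty
    rw [Finset.card_eq_one]
    refine ⟨({x}, {i₀}), ?_⟩
    ext ⟨σ, C⟩
    simp only [Finset.mem_bipartiteAbove, hrooms, Finset.mem_filter, Finset.mem_univ, true_and,
        Finset.mem_singleton]
    constructor
    · rintro ⟨⟨h1, _⟩, ⟨_, k, hk, h3⟩ | ⟨h2, y, _, h3⟩⟩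
      · simp only [Finset.mem_singleton] at hk h3 h1
        subst hk
        rw [h3] at h1
        obtain ⟨i, hi, _⟩ := h1 x
        simp at hi
      · simp only at h1 h2 h3
        subst h2 h3
        obtain ⟨i, hi, h⟩ := h1 x
        simp only [Finset.mem_singleton] at hi
        subst hi
        have h5 := h y (by simp)
        have h6 := hx y (Finset.mem_univ _)
        rw [hr i (le_antisymm h5 h6)]
        simp
    · intro he
      obtain ⟨rfl, rfl⟩ := Prod.mk.inj he
      refine ⟨⟨?_, by simp⟩, Or.inr ⟨rfl, x, by simp, by simp⟩⟩
      intro z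
      exact ⟨i₀, by simp, fun s hs => by
        rw [Finset.mem_singleton.1 hs]; exact hx z (Finset.mem_univ _)⟩
  rw [hone, Nat.even_add] at heven
  exact absurd (heven.2 heven2) (by decide)

end ScarfLemma

namespace BrouwerSimplex

open ScarfLemma

/-- Grid points. -/
abbrev Grid (n N : ℕ) : Type := {a : Fin n → Fin (N + 1) // ∑ i, (a i : ℕ) = N}

theorem grid_mk {n N : ℕ} (a : Fin n → ℕ) (h : ∑ i, a i = N) :
    ∃ x : Grid n N, ∀ i, (x.1 i : ℕ) = a i := by
  have hle : ∀ i, a i < N + 1 := fun i => by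
    have := Finset.single_le_sum (f := a) (fun _ _ => Nat.zero_le _) (Finset.mem_univ i)
    omega
  exact ⟨⟨fun i => ⟨a i, hle i⟩, h⟩, fun i => rfl⟩

theorem grid_dump {n N : ℕ} (b : Fin n → ℕ) (i₀ : Fin n) (h : ∑ i, b i ≤ N) :
    ∃ x : Grid n N, ∀ i, b i ≤ (x.1 i : ℕ) := by
  obtain ⟨x, hx⟩ := grid_mk (N := N) (fun i => b i + if i = i₀ then N - ∑ i, b i else 0) (by
    rw [Finset.sum_add_distrib, Finset.sum_ite_eq' Finset.univ i₀]
    simp; omega)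
  exact ⟨x, fun i => by rw [hx]; simp⟩

/-- The discrete statement. -/
theorem discrete {n N : ℕ} (hn : 0 < n) (c : Grid n N → Fin n) :
    ∃ (σ : Finset (Grid n N)) (C : Finset (Fin n)), σ.Nonempty ∧ σ.image c = C ∧
      (∀ s ∈ σ, ∀ t ∈ σ, ∀ i, (s.1 i : ℕ) ≤ t.1 i + n) ∧
      (∀ s ∈ σ, ∀ i, i ∉ C → (s.1 i : ℕ) ≤ n) := by
  classical
  obtain ⟨x₀, _⟩ := grid_dump (n := n) (N := N) (fun _ => 0) ⟨0, hn⟩ (by simp)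
  haveI : Nonempty (Grid n N) := ⟨x₀⟩
  haveI : Nonempty (Fin n) := ⟨⟨0, hn⟩⟩
  let e := Fintype.equivFin (Grid n N)
  set K := Fintype.card (Grid n N) with hK
  let r : Fin n → Grid n N → ℕ := fun i x => (x.1 i : ℕ) * K + (e x : ℕ)
  have hr_lt : ∀ i x y, (x.1 i : ℕ) < y.1 i → r i x < r i y := by
    intro i x y h
    have h1 : (e x : ℕ) < K := (e x).2
    have h2 : ((x.1 i : ℕ) + 1) * K ≤ (y.1 i : ℕ) * K := Nat.mul_le_mul_right _ h
    simp only [r]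
    nlinarith
  have hr : ∀ i, Function.Injective (r i) := by
    intro i x y h
    rcases lt_trichotomy (x.1 i : ℕ) (y.1 i) with h1 | h1 | h1
    · have := hr_lt i x y h1; omega
    · simp only [r, h1] at h
      apply e.injective
      apply Fin.ext
      omega
    · have := hr_lt i y x h1; omega
  obtain ⟨σ, C, hdom, hcol⟩ := exists_colourful r hr c
  have hdom' : ∀ x : Grid n N, ∃ i ∈ C, ∀ s ∈ σ, (x.1 i : ℕ) ≤ s.1 i := by
    intro x
    obtain ⟨i, hi, h⟩ := hdom x
    refine ⟨i, hi, fun s hs => ?_⟩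
    by_contra hlt
    have := hr_lt i s x (by omega)
    have := h s hs
    omega
  have hCne : C.Nonempty := by
    obtain ⟨i, hi, _⟩ := hdom x₀
    exact ⟨i, hi⟩
  have hσ : σ.Nonempty := by
    rw [← hcol] at hCne; simpa using hCne
  have hmex : ∀ i : Fin n, ∃ y ∈ σ, ∀ s ∈ σ, (y.1 i : ℕ) ≤ s.1 i := fun i =>
    σ.exists_min_image (fun y => (y.1 i : ℕ)) hσ
  choose m hm hmin using hmex
  have hbig : N < ∑ i, (if i ∈ C then ((m i).1 i : ℕ) + 1 else 0) := by
    by_contra hle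
    obtain ⟨i₀, hi₀⟩ := hCne
    obtain ⟨x, hx⟩ := grid_dump (N := N) (fun i => if i ∈ C then ((m i).1 i : ℕ) + 1 else 0) i₀
      (by omega)
    obtain ⟨i, hi, h⟩ := hdom' x
    have h1 := h _ (hm i)
    have h2 := hx i
    simp only [hi, if_true] at h2
    omega
  have hbig' : N < ∑ i, (if i ∈ C then ((m i).1 i : ℕ) else 0) + n := by
    refine hbig.trans_le ?_
    calc _ ≤ ∑ i : Fin n, ((if i ∈ C then ((m i).1 i : ℕ) else 0) + 1) := by
          apply Finset.sum_le_sum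
          intro i _
          split_ifs <;> omega
      _ = _ := by rw [Finset.sum_add_distrib]; simp
  have hup : ∀ s ∈ σ, ∀ i, (s.1 i : ℕ) ≤ (if i ∈ C then ((m i).1 i : ℕ) else 0) + n := by
    intro s hs i
    have hs1 := s.2
    rw [← Finset.add_sum_erase _ _ (Finset.mem_univ i)] at hs1 hbig'
    have : ∑ j ∈ Finset.univ.erase i, (if j ∈ C then ((m j).1 j : ℕ) else 0) ≤
        ∑ j ∈ Finset.univ.erase i, (s.1 j : ℕ) := by
      apply Finset.sum_le_sum
      intro j _
      split_ifs
      · exact hmin j s hs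
      · omega
    omega
  refine ⟨σ, C, hσ, hcol, fun s hs t ht i => ?_, fun s hs i hi => ?_⟩
  · have h1 := hup s hs i
    have h2 := hmin i t ht
    split_ifs at h1 <;> omega
  · have h1 := hup s hs i
    simpa [hi] using h1

theorem brouwer {n : ℕ} (hn : 0 < n) (F : (Fin n → ℝ) → (Fin n → ℝ))
    (hF : ContinuousOn F (stdSimplex ℝ (Fin n)))
    (hmaps : ∀ x ∈ stdSimplex ℝ (Fin n), F x ∈ stdSimplex ℝ (Fin n)) :
    ∃ x ∈ stdSimplex ℝ (Fin n), F x = x := by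
  classical
  haveI : Nonempty (Fin n) := ⟨⟨0, hn⟩⟩
  have hcomp : IsCompact (stdSimplex ℝ (Fin n)) := isCompact_stdSimplex ℝ (Fin n)
  have approx : ∀ ε > 0, ∃ x ∈ stdSimplex ℝ (Fin n), ∀ i, x i - F x i ≤ ε := by
    intro ε hε
    have huc := hcomp.uniformContinuousOn_of_continuous hF
    rw [Metric.uniformContinuousOn_iff] at huc
    obtain ⟨δ, hδ, huc⟩ := huc (ε / 2) (by positivity)
    obtain ⟨N, hN⟩ := exists_nat_gt (n / min δ (ε / 2))
    have hmin : 0 < min δ (ε / 2) := by positivity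
    have hnR : (0 : ℝ) < n := by exact_mod_cast hn
    have hNpos : (0 : ℝ) < N := lt_trans (by positivity) hN
    have hnN : (n : ℝ) / N < min δ (ε / 2) := by
      rw [div_lt_iff₀ hmin] at hN
      rw [div_lt_iff₀ hNpos]; linarith
    have hnδ : (n : ℝ) / N < δ := hnN.trans_le (min_le_left _ _)
    have hnε : (n : ℝ) / N < ε / 2 := hnN.trans_le (min_le_right _ _)
    let p : Grid n N → Fin n → ℝ := fun a i => (a.1 i : ℕ) / (N : ℝ)
    have hp : ∀ a, p a ∈ stdSimplex ℝ (Fin n) := by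
      intro a
      refine ⟨fun i => by positivity, ?_⟩
      simp only [p]
      rw [← Finset.sum_div, ← Nat.cast_sum, a.2]
      field_simp
    have hcex : ∀ a, ∃ i, p a i ≤ F (p a) i := by
      intro a
      by_contra hc
      push Not at hc
      have := Finset.sum_lt_sum_of_nonempty (s := Finset.univ) Finset.univ_nonempty
        (fun i _ => hc i)
      rw [(hp a).2, (hmaps _ (hp a)).2] at this
      exact lt_irrefl _ this
    choose c hc using hcex
    obtain ⟨σ, C, ⟨s₀, hs₀⟩, hcol, hclose, hsmall⟩ := discrete hn c
    have hcl : ∀ s ∈ σ, ∀ t ∈ σ, ∀ i, p s i ≤ p t i + n / N := by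
      intro s hs t ht i
      simp only [p]
      rw [← add_div]
      gcongr
      exact_mod_cast hclose s hs t ht i
    refine ⟨p s₀, hp s₀, fun i => ?_⟩
    by_cases hi : i ∈ C
    · rw [← hcol, Finset.mem_image] at hi
      obtain ⟨s, hs, rfl⟩ := hi
      have hd : dist (p s) (p s₀) < δ := by
        rw [dist_pi_lt_iff hδ]
        intro j
        rw [Real.dist_eq, abs_lt]
        have h1 := hcl s hs s₀ hs₀ j
        have h2 := hcl s₀ hs₀ s hs j
        constructor <;> linarith
      have h3 := huc _ (hp s) _ (hp s₀) hd
      rw [dist_pi_lt_iff (by positivity)] at h3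
      have h3 := h3 (c s)
      rw [Real.dist_eq, abs_lt] at h3
      have h4 := hc s
      have h5 := hcl s₀ hs₀ s hs (c s)
      linarith [h3.1, h3.2]
    · have h1 : p s₀ i ≤ n / N := by
        simp only [p]
        gcongr
        exact_mod_cast hsmall s₀ hs₀ i hi
      have h2 := (hmaps _ (hp s₀)).1 i
      linarith
  have hne : (stdSimplex ℝ (Fin n)).Nonempty := by
    obtain ⟨x, hx, _⟩ := approx 1 one_pos
    exact ⟨x, hx⟩
  -- minimise the sum of positive parts
  have hcont : ContinuousOn (fun x => ∑ i, max (x i - F x i) 0) (stdSimplex ℝ (Fin n)) := by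
    apply continuousOn_finsetSum
    intro i _
    have h1 : ContinuousOn (fun x => F x i) (stdSimplex ℝ (Fin n)) :=
      (continuous_apply i).comp_continuousOn hF
    have h2 : ContinuousOn (fun x : Fin n → ℝ => x i) (stdSimplex ℝ (Fin n)) :=
      (continuous_apply i).continuousOn
    exact ContinuousOn.sup (h2.sub h1) continuousOn_const
  obtain ⟨x, hx, hxmin⟩ := hcomp.exists_isMinOn hne hcont
  have hnR : (0 : ℝ) < n := by exact_mod_cast hn
  have hle : ∑ i, max (x i - F x i) 0 ≤ 0 := by
    apply le_of_forall_pos_le_add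
    intro ε hε
    obtain ⟨y, hy, hyε⟩ := approx (ε / n) (by positivity)
    have h1 : ∑ i, max (x i - F x i) 0 ≤ ∑ i, max (y i - F y i) 0 := hxmin hy
    have h2 : ∑ i, max (y i - F y i) 0 ≤ ∑ _i : Fin n, ε / n :=
      Finset.sum_le_sum fun i _ => max_le (hyε i) (by positivity)
    have h3 : ∑ _i : Fin n, ε / n = ε := by
      simp; field_simp
    linarith
  have hcoord : ∀ i ∈ Finset.univ, x i ≤ F x i := by
    intro i _
    have h1 := Finset.single_le_sum (f := fun i => max (x i - F x i) 0)
      (fun _ _ => le_max_right _ _) (Finset.mem_univ i)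
    have h2 := le_max_left (x i - F x i) 0
    linarith
  refine ⟨x, hx, ?_⟩
  have := (Finset.sum_eq_sum_iff_of_le hcoord).1 (by rw [hx.2, (hmaps x hx).2])
  funext i
  exact (this i (Finset.mem_univ i)).symm

end BrouwerSimplex

theorem uT_has_fixed_point_in_interior
    (n : ℕ) (hn : 0 < n) (C : Matrix (Fin n) (Fin n) ℝ)
    (hC0 : ∀ i j, 0 ≤ C i j) (hCirr : IsIrred C)
    (g g' : ℝ → ℝ) (hg : IsAdmissible g g')
    (u : (Fin n → ℝ) → (Fin n → ℝ))
    (hu : ∀ x ∈ stdSimplex ℝ (Fin n), u x ∈ stdSimplex ℝ (Fin n) ∧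
      Matrix.vecMul (u x) (Mg C g x) = u x ∧
      ∀ v ∈ stdSimplex ℝ (Fin n), Matrix.vecMul v (Mg C g x) = v → v = u x) :
    (∃ x ∈ stdSimplex ℝ (Fin n), (∀ i, 0 < x i) ∧ u x = x) ∧
    (∀ x ∈ stdSimplex ℝ (Fin n), u x = x → ∀ i, 0 < x i) := by
  obtain ⟨hder, -, -, hgpos, -⟩ := hg
  have hgc : ContinuousOn g (Set.Icc (0:ℝ) 1) := fun x hx => (hder x hx).continuousWithinAt
  have hIcc : ∀ x ∈ stdSimplex ℝ (Fin n), ∀ i, x i ∈ Set.Icc (0:ℝ) 1 := by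
    intro x hx i
    refine ⟨hx.1 i, ?_⟩
    rw [← hx.2]
    exact Finset.single_le_sum (fun j _ => hx.1 j) (Finset.mem_univ i)
  have hrow : ∀ i, ∃ j, 0 < C i j := by
    intro i
    obtain ⟨m, hm, h⟩ := hCirr i i
    by_contra hc
    push Not at hc
    obtain ⟨k, rfl⟩ : ∃ k, m = k + 1 := ⟨m - 1, by omega⟩
    rw [pow_succ', Matrix.mul_apply] at h
    have : ∀ j, C i j = 0 := fun j => le_antisymm (hc j) (hC0 i j)
    simp [this] at h
  have hden : ∀ x ∈ stdSimplex ℝ (Fin n), ∀ i, 0 < ∑ k, C i k * g (x k) := by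
    intro x hx i
    obtain ⟨j, hj⟩ := hrow i
    exact Finset.sum_pos' (fun k _ => mul_nonneg (hC0 i k) (hgpos _ (hIcc x hx k)).le)
      ⟨j, Finset.mem_univ j, mul_pos hj (hgpos _ (hIcc x hx j))⟩
  have hMnn : ∀ x ∈ stdSimplex ℝ (Fin n), ∀ i j, 0 ≤ Mg C g x i j := by
    intro x hx i j
    exact div_nonneg (mul_nonneg (hC0 i j) (hgpos _ (hIcc x hx j)).le) (hden x hx i).le
  have hMpos : ∀ x ∈ stdSimplex ℝ (Fin n), ∀ i j, 0 < C i j → 0 < Mg C g x i j := by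
    intro x hx i j h
    exact div_pos (mul_pos h (hgpos _ (hIcc x hx j))) (hden x hx i)
  have hMsum : ∀ x ∈ stdSimplex ℝ (Fin n), ∀ i, ∑ j, Mg C g x i j = 1 := by
    intro x hx i
    simp only [Mg, Matrix.of_apply]
    rw [← Finset.sum_div, div_self (hden x hx i).ne']
  have hpos : ∀ x ∈ stdSimplex ℝ (Fin n), Matrix.vecMul x (Mg C g x) = x → ∀ i, 0 < x i := by
    intro x hx hfix
    have hstep : ∀ i j, 0 < x i → 0 < C i j → 0 < x j := by
      intro i j hi hij
      rw [← hfix]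
      simp only [Matrix.vecMul, dotProduct]
      exact Finset.sum_pos' (fun k _ => mul_nonneg (hx.1 k) (hMnn x hx k j))
        ⟨i, Finset.mem_univ i, mul_pos hi (hMpos x hx i j hij)⟩
    have hpow : ∀ m : ℕ, ∀ i j, 0 < x i → 0 < (C ^ m) i j → 0 < x j := by
      intro m
      induction m with
      | zero =>
        intro i j hi h
        by_cases hij : i = j
        · rw [← hij]; exact hi
        · simp [Matrix.one_apply, hij] at h
      | succ k ih =>
        intro i j hi h
        rw [pow_succ', Matrix.mul_apply] at h
        obtain ⟨l, _, hl⟩ := Finset.exists_lt_of_sum_lt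
          (show ∑ _l : Fin n, (0 : ℝ) < ∑ l, C i l * (C ^ k) l j by simpa using h)
        have hCil : 0 < C i l := by
          rcases (hC0 i l).lt_or_eq with h' | h'
          · exact h'
          · rw [← h'] at hl; simp at hl
        exact ih l j (hstep i l hi hCil) (pos_of_mul_pos_right hl hCil.le)
    obtain ⟨i, _, hi⟩ := Finset.exists_lt_of_sum_lt
      (show ∑ _l : Fin n, (0 : ℝ) < ∑ l, x l by rw [hx.2]; simp)
    intro j
    obtain ⟨m, _, h⟩ := hCirr i j
    exact hpow m i j hi h
  refine ⟨?_, fun x hx hfix => hpos x hx ?_⟩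
  · obtain ⟨x, hx, hfix⟩ := BrouwerSimplex.brouwer hn (fun x => Matrix.vecMul x (Mg C g x))
      (by
        have hgx : ∀ j, ContinuousOn (fun x : Fin n → ℝ => g (x j)) (stdSimplex ℝ (Fin n)) :=
          fun j => hgc.comp (continuous_apply j).continuousOn (fun x hx => hIcc x hx j)
        rw [continuousOn_pi]
        intro j
        simp only [Matrix.vecMul, dotProduct, Mg, Matrix.of_apply]
        apply continuousOn_finsetSum
        intro i _
        refine (continuous_apply i).continuousOn.mul
          (ContinuousOn.div (continuousOn_const.mul (hgx j)) ?_ (fun x hx => (hden x hx i).ne'))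
        exact continuousOn_finsetSum _ fun k _ => continuousOn_const.mul (hgx k))
      (by
        intro x hx
        refine ⟨fun j => ?_, ?_⟩
        · simp only [Matrix.vecMul, dotProduct]
          exact Finset.sum_nonneg fun i _ => mul_nonneg (hx.1 i) (hMnn x hx i j)
        · simp only [Matrix.vecMul, dotProduct]
          rw [Finset.sum_comm]
          simp only [← Finset.mul_sum, hMsum x hx, mul_one]
          exact hx.2)
    exact ⟨x, hx, hpos x hx hfix, ((hu x hx).2.2 x hx hfix).symm⟩
  · have := (hu x hx).2.1
    rwa [hfix] at this
end

section
/- Assume C is an n×n nonnegative irreducible matrix and g is an admissible weight function with n·L⁺(g) ≤ 1. Then the map u_g : Σ → Σ has a unique fixed point x*, which belongs to int(Σ), and for every x ∈ Σ the iterates u_g^s(x) converge to x* as s → ∞. -/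
open Set Matrix Filter Topology

/-- The set of values `g'(x)/g(x)` for `x ∈ [0,1]`; its maximum is `L⁺(g)`. -/
def ratioSet (g g' : ℝ → ℝ) : Set ℝ := (fun x => g' x / g x) '' Set.Icc (0:ℝ) 1

/-- det(1 - F) ≥ 0 when F has nonnegative entries and row sums at most one. -/
lemma det_one_sub_nonneg {n : ℕ} (F : Matrix (Fin n) (Fin n) ℝ) (h0 : ∀ i j, 0 ≤ F i j)
    (h1 : ∀ i, ∑ j, F i j ≤ 1) : 0 ≤ (1 - F).det := by
  by_contra hneg
  push Not at hneg
  have hcont : Continuous (fun t : ℝ => (1 - t • F).det) := by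
    apply Continuous.matrix_det
    fun_prop
  have hiv := intermediate_value_Icc' (zero_le_one' ℝ) (hcont.continuousOn (s := Set.Icc 0 1))
  have hmem : (0:ℝ) ∈ Set.Icc ((1 - (1:ℝ) • F).det) ((1 - (0:ℝ) • F).det) := by
    constructor
    · simpa using hneg.le
    · simp
  obtain ⟨t, ⟨ht0, ht1⟩, ht⟩ := hiv hmem
  have htlt : t < 1 := by
    rcases ht1.lt_or_eq with h | h
    · exact h
    · subst h; simp at ht; linarith
  refine det_ne_zero_of_sum_row_lt_diag (A := 1 - t • F) (fun k => ?_) ht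
  have hs : ∑ j ∈ Finset.univ.erase k, ‖(1 - t • F) k j‖ = ∑ j ∈ Finset.univ.erase k, t * F k j := by
    refine Finset.sum_congr rfl fun j hj => ?_
    have hjk : k ≠ j := (Finset.ne_of_mem_erase hj).symm
    simp [Matrix.one_apply_ne hjk, abs_of_nonneg ht0, abs_of_nonneg (h0 k j)]
  rw [hs]
  have h2 := Finset.add_sum_erase Finset.univ (fun j => t * F k j) (Finset.mem_univ k)
  rw [← Finset.mul_sum Finset.univ] at h2
  have h3 : t * ∑ j, F k j ≤ t := by nlinarith [h1 k]
  have h4 : (1 - t • F) k k = 1 - t * F k k := by simp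
  rw [h4, Real.norm_eq_abs]
  have := le_abs_self (1 - t * F k k)
  linarith

/-- Row building block. -/
noncomputable def EE {n : ℕ} (i k l : Fin n) : Fin n → ℝ :=
  if k = i then Pi.single i 1 else Pi.single k 1 - Pi.single l 1

/-- The polynomial whose normalization is the invariant measure. -/
noncomputable def PP {n : ℕ} (C : Matrix (Fin n) (Fin n) ℝ) (h : Fin n → ℝ) (i : Fin n) : ℝ :=
  Matrix.det (Matrix.of fun k => ∑ l, (C k l * h l) • EE i k l)

lemma PP_expand {n : ℕ} (C : Matrix (Fin n) (Fin n) ℝ) (h : Fin n → ℝ) (i : Fin n) :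
    PP C h i = ∑ f : Fin n → Fin n, (∏ k, C k (f k) * h (f k)) *
      Matrix.det (Matrix.of fun k => EE i k (f k)) := by
  have h1 := (Matrix.detRowAlternating (n := Fin n) (R := ℝ)).toMultilinearMap.map_sum
    (fun k l => (C k l * h l) • EE i k l)
  have h2 : PP C h i = Matrix.detRowAlternating.toMultilinearMap
    (fun k => ∑ l, (C k l * h l) • EE i k l) := rfl
  rw [h2, h1]
  refine Finset.sum_congr rfl fun f _ => ?_
  rw [MultilinearMap.map_smul_univ]
  rfl

lemma det_EE_nonneg {n : ℕ} (i : Fin n) (f : Fin n → Fin n) :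
    0 ≤ Matrix.det (Matrix.of fun k => EE i k (f k)) := by
  have : (Matrix.of fun k => EE i k (f k)) =
      1 - Matrix.of (fun k => if k = i then (0 : Fin n → ℝ) else Pi.single (f k) 1) := by
    ext k j
    simp only [Matrix.of_apply, Matrix.sub_apply, EE]
    by_cases hk : k = i
    · subst hk; simp [Matrix.one_apply, Pi.single_apply, eq_comm]
    · simp [hk, Matrix.one_apply, Pi.single_apply, eq_comm]
  rw [this]
  apply det_one_sub_nonneg
  · intro k j
    simp only [Matrix.of_apply]
    split_ifs
    · simp
    · rw [Pi.single_apply]; split_ifs <;> simp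
  · intro k
    simp only [Matrix.of_apply]
    split_ifs <;> simp

lemma PP_nonneg {n : ℕ} {C : Matrix (Fin n) (Fin n) ℝ} (hC0 : ∀ i j, 0 ≤ C i j)
    {h : Fin n → ℝ} (hh : ∀ j, 0 ≤ h j) (i : Fin n) : 0 ≤ PP C h i := by
  rw [PP_expand]
  exact Finset.sum_nonneg fun f _ => mul_nonneg
    (Finset.prod_nonneg fun k _ => mul_nonneg (hC0 _ _) (hh _)) (det_EE_nonneg i f)

lemma PP_le {n : ℕ} {C : Matrix (Fin n) (Fin n) ℝ} (hC0 : ∀ i j, 0 ≤ C i j)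
    {h h' : Fin n → ℝ} (hh : ∀ j, 0 ≤ h j) (ρ : ℝ) (hle : ∀ j, h j ≤ ρ * h' j)
    (i : Fin n) : PP C h i ≤ ρ ^ n * PP C h' i := by
  rw [PP_expand, PP_expand, Finset.mul_sum]
  refine Finset.sum_le_sum fun f _ => ?_
  rw [← mul_assoc]
  refine mul_le_mul_of_nonneg_right ?_ (det_EE_nonneg i f)
  calc ∏ k, C k (f k) * h (f k) ≤ ∏ k, ρ * (C k (f k) * h' (f k)) := by
        refine Finset.prod_le_prod (fun k _ => mul_nonneg (hC0 _ _) (hh _)) fun k _ => ?_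
        have := mul_le_mul_of_nonneg_left (hle (f k)) (hC0 k (f k))
        linarith
    _ = _ := by rw [Finset.prod_mul_distrib]; simp

lemma irred_closed {n : ℕ} {C : Matrix (Fin n) (Fin n) ℝ} (hC0 : ∀ i j, 0 ≤ C i j)
    (hCirr : IsIrred C) (P : Fin n → Prop) (hP : ∀ i j, P i → 0 < C i j → P j)
    (i j : Fin n) (hi : P i) : P j := by
  obtain ⟨m, _, hm⟩ := hCirr i j
  have hpow : ∀ m a b, 0 ≤ (C ^ m) a b := by
    intro m
    induction m with
    | zero => intro a b; rw [pow_zero, Matrix.one_apply]; split_ifs <;> simp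
    | succ m ih =>
      intro a b
      rw [pow_succ, Matrix.mul_apply]
      exact Finset.sum_nonneg fun k _ => mul_nonneg (ih _ _) (hC0 _ _)
  clear * - hP hi hm hpow hC0
  induction m generalizing j with
  | zero =>
    rw [pow_zero, Matrix.one_apply] at hm
    split_ifs at hm with h
    · exact h ▸ hi
    · simp at hm
  | succ m ih =>
    rw [pow_succ, Matrix.mul_apply] at hm
    obtain ⟨k, _, hk⟩ := Finset.exists_lt_of_sum_lt (s := Finset.univ) (f := fun _ : Fin n => (0:ℝ))
      (by simpa using hm)
    have h1 : 0 < (C ^ m) i k := by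
      rcases (hpow m i k).lt_or_eq with h | h
      · exact h
      · rw [← h] at hk; simp at hk
    have h2 : 0 < C k j := pos_of_mul_pos_right hk h1.le
    exact hP k j (ih k h1) h2

lemma irred_row {n : ℕ} {C : Matrix (Fin n) (Fin n) ℝ} (hC0 : ∀ i j, 0 ≤ C i j)
    (hCirr : IsIrred C) (i : Fin n) : ∃ k, 0 < C i k := by
  by_contra hcon
  push Not at hcon
  have hz : ∀ k, C i k = 0 := fun k => le_antisymm (hcon k) (hC0 i k)
  obtain ⟨m, hm0, hm⟩ := hCirr i i
  obtain ⟨m, rfl⟩ := Nat.exists_eq_succ_of_ne_zero hm0.ne'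
  rw [Nat.succ_eq_add_one, pow_succ', Matrix.mul_apply] at hm
  simp [hz] at hm

lemma row_pos {n : ℕ} {C : Matrix (Fin n) (Fin n) ℝ} (hC0 : ∀ i j, 0 ≤ C i j)
    (hCirr : IsIrred C) {h : Fin n → ℝ} (hh : ∀ j, 0 < h j) (i : Fin n) :
    0 < ∑ k, C i k * h k := by
  obtain ⟨k, hk⟩ := irred_row hC0 hCirr i
  exact Finset.sum_pos' (fun k _ => mul_nonneg (hC0 _ _) (hh _).le)
    ⟨k, Finset.mem_univ _, mul_pos hk (hh k)⟩

/-- maximum principle -/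
lemma max_principle {n : ℕ} {C : Matrix (Fin n) (Fin n) ℝ} (hC0 : ∀ i j, 0 ≤ C i j)
    (hCirr : IsIrred C) {h : Fin n → ℝ} (hh : ∀ j, 0 < h j) (i : Fin n) (z : Fin n → ℝ)
    (hzi : z i = 0) (hz : ∀ k, k ≠ i → ∑ l, C k l * h l * (z k - z l) = 0) : ∀ k, z k ≤ 0 := by
  have : Nonempty (Fin n) := ⟨i⟩
  obtain ⟨k0, hk0⟩ := Finite.exists_max z
  by_contra hcon
  push Not at hcon
  obtain ⟨k, hk⟩ := hcon
  have hpos : 0 < z k0 := lt_of_lt_of_le hk (hk0 k)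
  have : z i = z k0 := by
    refine irred_closed hC0 hCirr (fun k => z k = z k0) ?_ k0 i rfl
    intro a b ha hab
    have hai : a ≠ i := by rintro rfl; rw [hzi] at ha; exact hpos.ne ha
    have h1 := hz a hai
    rw [Finset.sum_eq_zero_iff_of_nonneg] at h1
    · have h2 := h1 b (Finset.mem_univ _)
      have h3 : C a b * h b ≠ 0 := (mul_pos hab (hh b)).ne'
      have h4 : z a - z b = 0 := by
        rcases mul_eq_zero.1 h2 with h | h
        · exact absurd h h3
        · exact h
      show z b = z k0
      linarith
    · intro l _
      refine mul_nonneg (mul_nonneg (hC0 _ _) (hh _).le) ?_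
      rw [ha]; linarith [hk0 l]
  rw [hzi] at this
  exact hpos.ne this

lemma PP_pos {n : ℕ} {C : Matrix (Fin n) (Fin n) ℝ} (hC0 : ∀ i j, 0 ≤ C i j)
    (hCirr : IsIrred C) {h : Fin n → ℝ} (hh : ∀ j, 0 < h j) (i : Fin n) : 0 < PP C h i := by
  refine lt_of_le_of_ne (PP_nonneg hC0 (fun j => (hh j).le) i) (Ne.symm ?_)
  intro h0
  obtain ⟨z, hz0, hz⟩ := Matrix.exists_mulVec_eq_zero_iff.2 h0
  apply hz0
  have key : ∀ k, ∑ l, C k l * h l * (EE i k l ⬝ᵥ z) = 0 := by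
    intro k
    have := congrFun hz k
    simp only [Matrix.mulVec, Matrix.of_apply, Pi.zero_apply, sum_dotProduct,
      smul_dotProduct, smul_eq_mul] at this
    exact this
  have hzi : z i = 0 := by
    have := key i
    simp only [EE, if_true, single_dotProduct, one_mul, ← Finset.sum_mul] at this
    rcases mul_eq_zero.1 this with h' | h'
    · exact absurd h' (row_pos hC0 hCirr hh i).ne'
    · exact h'
  have hk : ∀ k, k ≠ i → ∑ l, C k l * h l * (z k - z l) = 0 := by
    intro k hki
    have := key k
    simpa only [EE, if_neg hki, sub_dotProduct, single_dotProduct, one_mul] using this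
  have h1 := max_principle hC0 hCirr hh i z hzi hk
  have h2 := max_principle hC0 hCirr hh i (-z) (by simp [hzi]) (by
    intro k hki
    have := hk k hki
    rw [← neg_eq_zero, ← Finset.sum_neg_distrib] at this
    rw [← this]
    refine Finset.sum_congr rfl fun l _ => ?_
    simp only [Pi.neg_apply]; ring)
  ext k
  have := h2 k
  simp only [Pi.neg_apply] at this
  have := h1 k
  simp only [Pi.zero_apply]
  linarith

/-- weighted Laplacian -/
noncomputable def lapA {n : ℕ} (C : Matrix (Fin n) (Fin n) ℝ) (h : Fin n → ℝ) :
    Matrix (Fin n) (Fin n) ℝ :=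
  Matrix.of fun k => ∑ l, (C k l * h l) • (Pi.single k 1 - Pi.single l 1 : Fin n → ℝ)

lemma lapA_apply {n : ℕ} (C : Matrix (Fin n) (Fin n) ℝ) (h : Fin n → ℝ) (k j : Fin n) :
    lapA C h k j = (if k = j then ∑ l, C k l * h l else 0) - C k j * h j := by
  simp only [lapA, Matrix.of_apply, Finset.sum_apply, Pi.smul_apply, Pi.sub_apply, smul_eq_mul,
    mul_sub, Finset.sum_sub_distrib, Pi.single_apply]
  congr 1
  · by_cases hk : k = j
    · simp [hk]
    · simp [hk, Ne.symm hk]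
  · simp

lemma lapA_row {n : ℕ} (C : Matrix (Fin n) (Fin n) ℝ) (h : Fin n → ℝ) (k : Fin n) :
    ∑ j, lapA C h k j = 0 := by
  simp [lapA_apply, Finset.sum_sub_distrib]

lemma det_zero_of_row {n : ℕ} (hn : 0 < n) (A : Matrix (Fin n) (Fin n) ℝ)
    (hA : ∀ k, ∑ j, A k j = 0) : A.det = 0 := by
  refine Matrix.exists_mulVec_eq_zero_iff.1 ⟨fun _ => 1, ?_, ?_⟩
  · intro h
    have := congrFun h ⟨0, hn⟩
    simp at this
  · ext k
    simp [Matrix.mulVec, dotProduct, hA k]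

lemma PP_eq_adj {n : ℕ} (C : Matrix (Fin n) (Fin n) ℝ) (h : Fin n → ℝ) (j : Fin n) :
    PP C h j = (∑ l, C j l * h l) * (lapA C h).adjugate j j := by
  rw [Matrix.adjugate_apply, ← Matrix.det_updateRow_smul]
  unfold PP
  congr 1
  ext k m
  by_cases hk : k = j
  · subst hk
    simp [EE, Finset.sum_mul]
  · rw [Matrix.updateRow_ne hk]
    simp [EE, hk, lapA]

lemma adj_const {n : ℕ} (C : Matrix (Fin n) (Fin n) ℝ) (h : Fin n → ℝ) (i j : Fin n) :
    (lapA C h).adjugate i j = (lapA C h).adjugate j j := by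
  have hn : 0 < n := i.pos
  have h1 : ((lapA C h).updateRow j (Pi.single j 1 + (Pi.single i 1 - Pi.single j 1))).det
    = (lapA C h).adjugate i j := by
    rw [Matrix.adjugate_apply]; congr 2; abel
  rw [← h1, Matrix.det_updateRow_add, ← Matrix.adjugate_apply, add_eq_left]
  apply det_zero_of_row hn
  intro k
  by_cases hk : k = j
  · subst hk; simp [Finset.sum_sub_distrib]
  · rw [Matrix.updateRow_ne hk]; exact lapA_row C h k

/-- PP is invariant. -/
lemma PP_inv {n : ℕ} {C : Matrix (Fin n) (Fin n) ℝ} (hC0 : ∀ i j, 0 ≤ C i j)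
    (hCirr : IsIrred C) {h : Fin n → ℝ} (hh : ∀ j, 0 < h j) (j : Fin n) :
    ∑ i, PP C h i * (C i j * h j / ∑ k, C i k * h k) = PP C h j := by
  have h1 : ((lapA C h).adjugate * lapA C h) j j = 0 := by
    rw [Matrix.adjugate_mul, det_zero_of_row j.pos _ (lapA_row C h)]; simp
  rw [Matrix.mul_apply] at h1
  simp only [adj_const C h j, lapA_apply, mul_sub, Finset.sum_sub_distrib] at h1
  simp at h1
  rw [PP_eq_adj C h j, mul_comm, sub_eq_zero.1 h1]
  refine Finset.sum_congr rfl fun i _ => ?_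
  rw [PP_eq_adj]
  have := (row_pos hC0 hCirr hh i).ne'
  field_simp

/-- Edelstein -/
lemma edelstein {K : Type*} [TopologicalSpace K] [CompactSpace K] [Nonempty K]
    (f : K → K) (hf : Continuous f) (d : K → K → ℝ) (hd : Continuous (fun p : K × K => d p.1 p.2))
    (hlt : ∀ x y, x ≠ y → f x ≠ f y → d (f x) (f y) < d x y)
    (hdz : ∀ x y, x ≠ y → d x x < d x y) (hd0 : ∀ x y, d x x = d y y) :
    ∃ a, f a = a ∧ (∀ y, f y = y → y = a) ∧ ∀ x, Tendsto (fun s : ℕ => f^[s] x) atTop (𝓝 a) := by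
  have hlt' : ∀ x y, x ≠ y → d (f x) (f y) < d x y := by
    intro x y hxy
    by_cases h : f x = f y
    · rw [h, hd0 (f y) x]; exact hdz x y hxy
    · exact hlt x y hxy h
  have hle : ∀ x y, d (f x) (f y) ≤ d x y := by
    intro x y
    by_cases h : x = y
    · subst h; exact (hd0 _ _).le
    · exact (hlt' x y h).le
  obtain ⟨a, -, ha⟩ := isCompact_univ.exists_isMinOn (s := (Set.univ : Set K))
    (f := fun x => d x (f x)) univ_nonempty (by
      have : Continuous (fun x => d x (f x)) := hd.comp (continuous_id.prodMk hf)
      exact this.continuousOn)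
  have hfa : f a = a := by
    by_contra hne
    have h1 := hlt' a (f a) (Ne.symm hne)
    have h2 : d a (f a) ≤ d (f a) (f (f a)) := ha (Set.mem_univ (f a))
    linarith
  refine ⟨a, hfa, ?_, ?_⟩
  · intro y hy
    by_contra hne
    have := hlt' y a hne
    rw [hy, hfa] at this
    exact lt_irrefl _ this
  · intro x
    have hφ : Continuous (fun z => d z a) := hd.comp (continuous_id.prodMk continuous_const)
    have hanti : Antitone (fun s : ℕ => d (f^[s] x) a) := by
      apply antitone_nat_of_succ_le
      intro s
      rw [Function.iterate_succ_apply']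
      have := hle (f^[s] x) a
      rwa [hfa] at this
    have hbdd : BddBelow (Set.range (fun s : ℕ => d (f^[s] x) a)) := by
      refine ⟨d a a, ?_⟩
      rintro _ ⟨s, rfl⟩
      by_cases h : f^[s] x = a
      · simp [h]
      · have := hdz (f^[s] x) a h
        rw [hd0 _ a] at this
        exact this.le
    have hlim := tendsto_atTop_ciInf hanti hbdd
    set ℓ := ⨅ s : ℕ, d (f^[s] x) a
    have hlim' : Tendsto (fun s : ℕ => d (f (f^[s] x)) a) atTop (𝓝 ℓ) := by
      have := hlim.comp (tendsto_add_atTop_nat 1)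
      refine this.congr fun s => ?_
      simp only [Function.comp, Function.iterate_succ_apply']
    have hcl : ∀ z, MapClusterPt z atTop (fun s : ℕ => f^[s] x) → z = a := by
      intro z hz
      have e1 : d z a = ℓ := by
        have h1 := hz.continuousAt_comp hφ.continuousAt
        exact eq_of_nhds_neBot (ClusterPt.mono (show ClusterPt (d z a) (map _ atTop) from h1) hlim)
      have e2 : d (f z) a = ℓ := by
        have h1 := hz.continuousAt_comp (hφ.comp hf).continuousAt
        exact eq_of_nhds_neBot (ClusterPt.mono (show ClusterPt (d (f z) a) (map _ atTop) from h1) hlim')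
      by_contra hne
      have := hlt' z a hne
      rw [hfa, e1, e2] at this
      exact lt_irrefl _ this
    exact isCompact_univ.tendsto_nhds_of_unique_mapClusterPt (by simp) (fun z _ hz => hcl z hz)

/-- oscillation -/
noncomputable def osc {n : ℕ} [NeZero n] (v : Fin n → ℝ) : ℝ :=
  (Finset.univ : Finset (Fin n × Fin n)).sup' Finset.univ_nonempty (fun p => v p.1 - v p.2)

lemma le_osc {n : ℕ} [NeZero n] (v : Fin n → ℝ) (i k : Fin n) : v i - v k ≤ osc v :=
  Finset.le_sup' (fun p : Fin n × Fin n => v p.1 - v p.2) (Finset.mem_univ (i, k))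

lemma osc_lt {n : ℕ} [NeZero n] (v : Fin n → ℝ) (N : ℝ) (h : ∀ i k, v i - v k < N) :
    osc v < N := by
  rw [osc, Finset.sup'_lt_iff]
  exact fun p _ => h p.1 p.2

lemma osc_le {n : ℕ} [NeZero n] (v : Fin n → ℝ) (N : ℝ) (h : ∀ i k, v i - v k ≤ N) :
    osc v ≤ N := by
  rw [osc, Finset.sup'_le_iff]
  exact fun p _ => h p.1 p.2

lemma osc_zero {n : ℕ} [NeZero n] : osc (0 : Fin n → ℝ) = 0 := by
  simp [osc]

lemma osc_cont {n : ℕ} [NeZero n] : Continuous (osc : (Fin n → ℝ) → ℝ) := by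
  unfold osc
  apply Continuous.finset_sup'_apply
  intro p _
  fun_prop

lemma exists_pos_of_sum_zero {n : ℕ} (v : Fin n → ℝ) (hs : ∑ i, v i = 0) (hv : v ≠ 0) :
    ∃ i, 0 < v i := by
  by_contra hcon
  push Not at hcon
  apply hv
  ext i
  exact (Finset.sum_eq_zero_iff_of_nonpos (fun i _ => hcon i)).1 hs i (Finset.mem_univ i)

lemma exists_nonneg_of_sum_zero {n : ℕ} [NeZero n] (v : Fin n → ℝ) (hs : ∑ i, v i = 0) :
    ∃ i, 0 ≤ v i := by
  by_cases hv : v = 0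
  · exact ⟨0, by simp [hv]⟩
  · obtain ⟨i, hi⟩ := exists_pos_of_sum_zero v hs hv
    exact ⟨i, hi.le⟩

lemma abs_le_osc {n : ℕ} [NeZero n] (v : Fin n → ℝ) (hs : ∑ i, v i = 0) (i : Fin n) :
    |v i| ≤ osc v := by
  obtain ⟨a, ha⟩ := exists_nonneg_of_sum_zero v hs
  obtain ⟨b, hb⟩ := exists_nonneg_of_sum_zero (-v) (by simp [hs])
  simp only [Pi.neg_apply] at hb
  rw [abs_le]
  have := le_osc v i b
  have := le_osc v a i
  constructor <;> linarith

lemma log_strict {p q : ℝ} (hq : 0 < q) (hqp : q < p) (hp : p ≤ 1) :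
    p - q < Real.log p - Real.log q := by
  have hp0 : 0 < p := hq.trans hqp
  have h1 := Real.log_lt_sub_one_of_pos (div_pos hq hp0) (by
    rw [Ne, div_eq_one_iff_eq hp0.ne']; exact hqp.ne)
  rw [Real.log_div hq.ne' hp0.ne'] at h1
  have h2 : p - q ≤ 1 - q / p := by
    rw [show 1 - q / p = (p - q) / p by field_simp, le_div_iff₀ hp0]
    nlinarith
  linarith

lemma osc_lt_of_ratio {n : ℕ} [NeZero n] {p q : Fin n → ℝ} (hp : p ∈ stdSimplex ℝ (Fin n))
    (hq : q ∈ stdSimplex ℝ (Fin n)) (hp0 : ∀ i, 0 < p i) (hq0 : ∀ i, 0 < q i) (hne : p ≠ q)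
    (N : ℝ) (hN : ∀ i k, p i * q k ≤ Real.exp N * (q i * p k)) : osc (p - q) < N := by
  obtain ⟨i0, hi0⟩ := Finite.exists_max (p - q)
  obtain ⟨k0, hk0⟩ := Finite.exists_min (p - q)
  have hs : ∑ i, (p - q) i = 0 := by
    simp [Finset.sum_sub_distrib, hp.2, hq.2]
  have hne' : p - q ≠ 0 := sub_ne_zero.2 hne
  obtain ⟨a, ha⟩ := exists_pos_of_sum_zero _ hs hne'
  obtain ⟨b, hb⟩ := exists_pos_of_sum_zero (-(p - q)) (by
    simp only [Pi.neg_apply, Finset.sum_neg_distrib, hs, neg_zero]) (neg_ne_zero.2 hne')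
  have hi0a := hi0 a
  have hk0b := hk0 b
  simp only [Pi.sub_apply, Pi.neg_apply] at *
  have h1 : q i0 < p i0 := by linarith
  have h2 : p k0 < q k0 := by linarith
  have le1 : ∀ {r : Fin n → ℝ}, r ∈ stdSimplex ℝ (Fin n) → ∀ i, r i ≤ 1 := fun hr i =>
    hr.2 ▸ Finset.single_le_sum (fun j _ => hr.1 j) (Finset.mem_univ i)
  have h3 := log_strict (hq0 i0) h1 (le1 hp i0)
  have h4 := log_strict (hp0 k0) h2 (le1 hq k0)
  have h5 := Real.log_le_log (mul_pos (hp0 i0) (hq0 k0)) (hN i0 k0)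
  rw [Real.log_mul (hp0 _).ne' (hq0 _).ne', Real.log_mul (Real.exp_pos _).ne'
    (mul_pos (hq0 _) (hp0 _)).ne', Real.log_mul (hq0 _).ne' (hp0 _).ne', Real.log_exp] at h5
  apply osc_lt
  intro i k
  have := hi0 i
  have := hk0 k
  simp only [Pi.sub_apply]
  linarith

lemma g_bound {g g' : ℝ → ℝ} (hg : IsAdmissible g g') {L : ℝ}
    (hL : IsGreatest (ratioSet g g') L) {s t δ : ℝ} (hs : s ∈ Set.Icc (0:ℝ) 1)
    (ht : t ∈ Set.Icc (0:ℝ) 1) (hδ0 : 0 ≤ δ) (hδ : s - t ≤ δ) :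
    g s ≤ Real.exp (L * δ) * g t := by
  obtain ⟨hd, -, -, hpos, hpos'⟩ := hg
  have hL' : ∀ x ∈ Set.Icc (0:ℝ) 1, g' x ≤ L * g x := by
    intro x hx
    have : g' x / g x ≤ L := hL.2 ⟨x, hx, rfl⟩
    rwa [div_le_iff₀ (hpos x hx)] at this
  have hL0 : 0 < L := by
    have h0 : (0:ℝ) ∈ Set.Icc (0:ℝ) 1 := by simp
    have h1 : g' 0 / g 0 ≤ L := hL.2 ⟨0, h0, rfl⟩
    exact lt_of_lt_of_le (div_pos (hpos' 0 h0) (hpos 0 h0)) h1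
  have hgc : ContinuousOn g (Set.Icc 0 1) := fun x hx => (hd x hx).continuousWithinAt
  rcases le_total t s with hts | hst
  · have hanti : AntitoneOn (fun x => g x * Real.exp (-(L * x))) (Set.Icc (0:ℝ) 1) := by
      refine antitoneOn_of_hasDerivWithinAt_nonpos
        (f' := fun x => g' x * Real.exp (-(L * x)) + g x * (Real.exp (-(L * x)) * (-(L * 1))))
        (convex_Icc 0 1) ?_ ?_ ?_
      · exact hgc.mul (by fun_prop)
      · intro x hx
        have hx' := interior_subset hx
        have h1 := (hd x hx').mono (interior_subset (s := Set.Icc (0:ℝ) 1))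
        exact h1.mul ((((hasDerivAt_id x).const_mul L).neg.exp).hasDerivWithinAt)
      · intro x hx
        have := hL' x (interior_subset hx)
        have := Real.exp_pos (-(L * x))
        nlinarith
    have h1 := hanti ht hs hts
    simp only at h1
    have h2 : g s ≤ g t * Real.exp (L * (s - t)) := by
      have := mul_le_mul_of_nonneg_right h1 (Real.exp_pos (L * s)).le
      rw [mul_assoc, mul_assoc, ← Real.exp_add, ← Real.exp_add] at this
      rw [neg_add_cancel, Real.exp_zero, mul_one] at this
      rwa [show L * (s - t) = -(L * t) + L * s by ring]
    refine h2.trans ?_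
    rw [mul_comm]
    refine mul_le_mul_of_nonneg_right ?_ (hpos t ht).le
    apply Real.exp_le_exp.2
    exact mul_le_mul_of_nonneg_left hδ hL0.le
  · have hmono : MonotoneOn g (Set.Icc (0:ℝ) 1) := by
      refine monotoneOn_of_hasDerivWithinAt_nonneg (f' := g') (convex_Icc 0 1) hgc ?_ ?_
      · intro x hx
        exact (hd x (interior_subset hx)).mono interior_subset
      · intro x hx
        exact (hpos' x (interior_subset hx)).le
    have h1 := hmono hs ht hst
    have h2 : 1 ≤ Real.exp (L * δ) := Real.one_le_exp (mul_nonneg hL0.le hδ0)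
    nlinarith [hpos t ht]

theorem uT_unique_fixed_point_and_convergence
    (n : ℕ) (hn : 0 < n) (C : Matrix (Fin n) (Fin n) ℝ)
    (hC0 : ∀ i j, 0 ≤ C i j) (hCirr : IsIrred C)
    (g g' : ℝ → ℝ) (hg : IsAdmissible g g')
    (Lp : ℝ) (hLp : IsGreatest (ratioSet g g') Lp)
    (hsmall : (n : ℝ) * Lp ≤ 1)
    (u : (Fin n → ℝ) → (Fin n → ℝ))
    (hu : ∀ x ∈ stdSimplex ℝ (Fin n), u x ∈ stdSimplex ℝ (Fin n) ∧
      Matrix.vecMul (u x) (Mg C g x) = u x ∧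
      ∀ v ∈ stdSimplex ℝ (Fin n), Matrix.vecMul v (Mg C g x) = v → v = u x) :
    ∃ xs ∈ stdSimplex ℝ (Fin n), (∀ i, 0 < xs i) ∧ u xs = xs ∧
      (∀ y ∈ stdSimplex ℝ (Fin n), u y = y → y = xs) ∧
      ∀ x ∈ stdSimplex ℝ (Fin n),
        Tendsto (fun s : ℕ => u^[s] x) atTop (𝓝 xs) := by
  have : NeZero n := ⟨hn.ne'⟩
  have hIcc : ∀ x ∈ stdSimplex ℝ (Fin n), ∀ i, x i ∈ Set.Icc (0:ℝ) 1 := fun x hx i =>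
    ⟨hx.1 i, hx.2 ▸ Finset.single_le_sum (fun j _ => hx.1 j) (Finset.mem_univ i)⟩
  have hgpos : ∀ x ∈ stdSimplex ℝ (Fin n), ∀ i, 0 < g (x i) := fun x hx i =>
    hg.2.2.2.1 _ (hIcc x hx i)
  have hPpos : ∀ x ∈ stdSimplex ℝ (Fin n), ∀ i, 0 < PP C (fun j => g (x j)) i := fun x hx i =>
    PP_pos hC0 hCirr (h := fun j => g (x j)) (hgpos x hx) i
  have hSpos : ∀ x ∈ stdSimplex ℝ (Fin n), 0 < ∑ i, PP C (fun j => g (x j)) i := fun x hx =>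
    Finset.sum_pos (fun i _ => hPpos x hx i) Finset.univ_nonempty
  have hform : ∀ x ∈ stdSimplex ℝ (Fin n), ∀ i, u x i =
      PP C (fun j => g (x j)) i / ∑ k, PP C (fun j => g (x j)) k := by
    intro x hx i
    have hS := hSpos x hx
    have := (hu x hx).2.2 (fun i => PP C (fun j => g (x j)) i / ∑ k, PP C (fun j => g (x j)) k)
      ⟨fun i => div_nonneg (hPpos x hx i).le hS.le, by
        rw [← Finset.sum_div, div_self hS.ne']⟩ (by
        ext j
        have h1 := PP_inv hC0 hCirr (h := fun j => g (x j)) (hgpos x hx) j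
        simp only [Matrix.vecMul, dotProduct, Mg, Matrix.of_apply]
        conv_rhs => rw [← h1, Finset.sum_div]
        refine Finset.sum_congr rfl fun i _ => ?_
        ring)
    rw [← this]
  have hupos : ∀ x ∈ stdSimplex ℝ (Fin n), ∀ i, 0 < u x i := fun x hx i => by
    rw [hform x hx]; exact div_pos (hPpos x hx i) (hSpos x hx)
  have hsum : ∀ x ∈ stdSimplex ℝ (Fin n), ∀ y ∈ stdSimplex ℝ (Fin n), ∑ i, (x - y) i = 0 := by
    intro x hx y hy
    simp [Finset.sum_sub_distrib, hx.2, hy.2]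
  -- one-sided bound
  have hone : ∀ x ∈ stdSimplex ℝ (Fin n), ∀ y ∈ stdSimplex ℝ (Fin n), ∀ δ : ℝ, 0 ≤ δ →
      (∀ j, x j - y j ≤ δ) → ∀ i, PP C (fun j => g (x j)) i ≤
        Real.exp δ * PP C (fun j => g (y j)) i := by
    intro x hx y hy δ hδ hxy i
    have h1 := PP_le hC0 (h := fun j => g (x j)) (h' := fun j => g (y j))
      (fun j => (hgpos x hx j).le) (Real.exp (Lp * δ))
      (fun j => g_bound hg hLp (hIcc x hx j) (hIcc y hy j) hδ (hxy j)) i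
    refine h1.trans (mul_le_mul_of_nonneg_right ?_ (hPpos y hy i).le)
    rw [← Real.exp_nat_mul]
    apply Real.exp_le_exp.2
    nlinarith
  have hcontr : ∀ x ∈ stdSimplex ℝ (Fin n), ∀ y ∈ stdSimplex ℝ (Fin n), u x ≠ u y →
      osc (u x - u y) < osc (x - y) := by
    intro x hx y hy hne
    refine osc_lt_of_ratio (hu x hx).1 (hu y hy).1 (hupos x hx) (hupos y hy) hne _ ?_
    intro i k
    obtain ⟨a, ha⟩ := Finite.exists_max (x - y)
    obtain ⟨b, hb⟩ := Finite.exists_min (x - y)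
    obtain ⟨a', ha'⟩ := exists_nonneg_of_sum_zero _ (hsum x hx y hy)
    obtain ⟨b', hb'⟩ := exists_nonneg_of_sum_zero _ (hsum y hy x hx)
    have hab := le_osc (x - y) a b
    have e1 := ha a'
    have e2 := hb b'
    simp only [Pi.sub_apply] at *
    have h1 := hone x hx y hy (x a - y a) (by linarith) ha i
    have h2 := hone y hy x hx (y b - x b) (by linarith) (fun j => by linarith [hb j]) k
    rw [hform x hx, hform y hy, hform x hx, hform y hy]
    have hSx := hSpos x hx
    have hSy := hSpos y hy
    have hPxi := hPpos x hx i
    have hPxk := hPpos x hx k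
    have hPyi := hPpos y hy i
    have hPyk := hPpos y hy k
    set Sx := ∑ k, PP C (fun j => g (x j)) k
    set Sy := ∑ k, PP C (fun j => g (y j)) k
    rw [div_mul_div_comm, div_mul_div_comm, mul_comm Sy Sx, ← mul_div_assoc]
    refine div_le_div_of_nonneg_right ?_ (mul_pos hSx hSy).le
    calc _ ≤ (Real.exp (x a - y a) * PP C (fun j => g (y j)) i) *
          (Real.exp (y b - x b) * PP C (fun j => g (x j)) k) :=
          mul_le_mul h1 h2 hPyk.le (by positivity)
      _ = Real.exp ((x a - y a) + (y b - x b)) *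
          (PP C (fun j => g (y j)) i * PP C (fun j => g (x j)) k) := by
          rw [Real.exp_add]; ring
      _ ≤ _ := by
          refine mul_le_mul_of_nonneg_right (Real.exp_le_exp.2 (by linarith)) (by positivity)
  have hosc_pos : ∀ x ∈ stdSimplex ℝ (Fin n), ∀ y ∈ stdSimplex ℝ (Fin n), x ≠ y →
      0 < osc (x - y) := by
    intro x hx y hy hne
    obtain ⟨i, hi⟩ := exists_pos_of_sum_zero _ (hsum x hx y hy) (sub_ne_zero.2 hne)
    exact hi.trans_le ((le_abs_self _).trans (abs_le_osc _ (hsum x hx y hy) i))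
  let K := stdSimplex ℝ (Fin n)
  have : CompactSpace K := isCompact_iff_compactSpace.1 (isCompact_stdSimplex ℝ (Fin n))
  have : Nonempty K := ⟨⟨Pi.single 0 1, single_mem_stdSimplex ℝ 0⟩⟩
  let f : K → K := fun x => ⟨u x.1, (hu x.1 x.2).1⟩
  have hfc : Continuous f := by
    apply (LipschitzWith.of_dist_le_mul (K := 2) ?_).continuous
    intro x y
    have hbd : dist (f x) (f y) ≤ osc (x.1 - y.1) := by
      by_cases h : u x.1 = u y.1
      · have : f x = f y := Subtype.ext h
        rw [this, dist_self]
        by_cases hxy : x.1 = y.1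
        · rw [hxy, sub_self, osc_zero]
        · exact (hosc_pos _ x.2 _ y.2 hxy).le
      · have h1 := hcontr _ x.2 _ y.2 h
        rw [Subtype.dist_eq, dist_pi_le_iff (hosc_pos _ x.2 _ y.2 (by
          intro hh; exact h (by rw [hh]))).le]
        intro i
        exact (abs_le_osc _ (hsum _ (f x).2 _ (f y).2) i).trans h1.le
    refine hbd.trans (osc_le _ _ fun i k => ?_)
    have h1 := dist_le_pi_dist x.1 y.1 i
    have h2 := dist_le_pi_dist x.1 y.1 k
    rw [Real.dist_eq] at h1 h2
    have := le_abs_self (x.1 i - y.1 i)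
    have := neg_abs_le (x.1 k - y.1 k)
    simp only [Pi.sub_apply, Subtype.dist_eq, NNReal.coe_ofNat]
    linarith
  obtain ⟨a, ha, hauniq, hconv⟩ := edelstein f hfc (fun x y => osc (x.1 - y.1))
    (osc_cont.comp (by fun_prop))
    (fun x y _ hne => hcontr _ x.2 _ y.2 (fun h => hne (Subtype.ext h)))
    (fun x y hne => by
      rw [sub_self, osc_zero]
      exact hosc_pos _ x.2 _ y.2 (fun h => hne (Subtype.ext h)))
    (fun x y => by rw [sub_self, sub_self])
  have hua : u a.1 = a.1 := congrArg Subtype.val ha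
  refine ⟨a.1, a.2, ?_, hua, ?_, ?_⟩
  · intro i
    rw [← hua]; exact hupos _ a.2 i
  · intro y hy huy
    exact congrArg Subtype.val (hauniq ⟨y, hy⟩ (Subtype.ext huy))
  · intro x hx
    have h1 := (continuous_subtype_val.tendsto a).comp (hconv ⟨x, hx⟩)
    refine h1.congr fun s => ?_
    simp only [Function.comp]
    have hsemi : Function.Semiconj (Subtype.val : K → (Fin n → ℝ)) f u := fun z => rfl
    exact hsemi.iterate_right s ⟨x, hx⟩
end

section
/- Assume C is an n×n matrix with all entries positive and g is an admissible weight function. Then for any x, y ∈ int(Σ), d_H(M_g(x), M_g(y)) ≤ 2·L⁺(g)·d_H(x, y). -/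
open Set Matrix

/-- Hilbert's projective metric on positive vectors. -/
noncomputable def dH {n : ℕ} (x y : Fin n → ℝ) : ℝ :=
  ⨆ i, ⨆ j, Real.log ((x i * y j) / (y i * x j))

/-- The induced projective metric between two positive matrices:
`d_H(A,B) = sup_{z > 0} d_H(zA, zB)`. -/
noncomputable def dHM {n : ℕ} (A B : Matrix (Fin n) (Fin n) ℝ) : ℝ :=
  ⨆ z : {z : Fin n → ℝ // ∀ i, 0 < z i},
    dH (Matrix.vecMul z.1 A) (Matrix.vecMul z.1 B)

lemma g_key (g g' : ℝ → ℝ) (hg : IsAdmissible g g') (Lp : ℝ)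
    (hLp : IsGreatest (ratioSet g g') Lp) (s t U : ℝ) (hs : 0 < s) (hs1 : s ≤ 1)
    (ht : 0 < t) (ht1 : t ≤ 1) (hU : 0 ≤ U) (hst : Real.log (s / t) ≤ U) :
    g s ≤ Real.exp (Lp * U) * g t := by
  obtain ⟨hd, -, -, hpos, hpos'⟩ := hg
  have hsI : s ∈ Set.Icc (0:ℝ) 1 := ⟨hs.le, hs1⟩
  have htI : t ∈ Set.Icc (0:ℝ) 1 := ⟨ht.le, ht1⟩
  have hL : ∀ u ∈ Set.Icc (0:ℝ) 1, g' u / g u ≤ Lp := fun u hu => hLp.2 ⟨u, hu, rfl⟩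
  have hL0 : 0 ≤ Lp := (div_pos (hpos' s hsI) (hpos s hsI)).le.trans (hL s hsI)
  have hlogd : ∀ u ∈ Set.Icc (0:ℝ) 1,
      HasDerivWithinAt (fun v => Real.log (g v)) (g' u / g u) (Set.Icc (0:ℝ) 1) u :=
    fun u hu => (hd u hu).log (hpos u hu).ne'
  have hmono : MonotoneOn (fun v => Real.log (g v)) (Set.Icc (0:ℝ) 1) := by
    apply monotoneOn_of_hasDerivWithinAt_nonneg (f' := fun u => g' u / g u) (convex_Icc 0 1)
    · exact fun u hu => (hlogd u hu).continuousWithinAt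
    · exact fun u hu => (hlogd u (interior_subset hu)).mono interior_subset
    · exact fun u hu => (div_pos (hpos' u (interior_subset hu)) (hpos u (interior_subset hu))).le
  have hanti : AntitoneOn (fun v => Real.log (g v) - Lp * v) (Set.Icc (0:ℝ) 1) := by
    have hdd : ∀ u ∈ Set.Icc (0:ℝ) 1, HasDerivWithinAt (fun v => Real.log (g v) - Lp * v)
        (g' u / g u - Lp) (Set.Icc (0:ℝ) 1) u := by
      intro u hu
      have := (hlogd u hu).sub ((hasDerivWithinAt_id u (Set.Icc (0:ℝ) 1)).const_mul Lp)
      rw [mul_one] at this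
      exact this
    apply antitoneOn_of_hasDerivWithinAt_nonpos (f' := fun u => g' u / g u - Lp) (convex_Icc 0 1)
    · exact fun u hu => (hdd u hu).continuousWithinAt
    · exact fun u hu => (hdd u (interior_subset hu)).mono interior_subset
    · exact fun u hu => sub_nonpos.2 (hL u (interior_subset hu))
  have hmain : Real.log (g s) ≤ Lp * U + Real.log (g t) := by
    rcases le_total s t with h | h
    · have h1 : Real.log (g s) ≤ Real.log (g t) := hmono hsI htI h
      have := mul_nonneg hL0 hU
      linarith
    · have h1 : Real.log (g s) - Lp * s ≤ Real.log (g t) - Lp * t := hanti htI hsI h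
      have h2 : s - t ≤ U := by
        refine le_trans ?_ hst
        have h3 := Real.one_sub_inv_le_log_of_pos (div_pos hs ht)
        refine le_trans ?_ h3
        rw [inv_div]
        have : s - t ≤ (s - t) / s := by
          rw [le_div_iff₀ hs]; nlinarith
        refine this.trans (le_of_eq ?_)
        field_simp
      nlinarith [mul_le_mul_of_nonneg_left h2 hL0]
  have := Real.exp_le_exp.2 hmain
  rwa [Real.exp_add, Real.exp_log (hpos s hsI), Real.exp_log (hpos t htI)] at this

lemma max_log {n : ℕ} (hn : 0 < n) (x y : Fin n → ℝ) (hx : ∑ i, x i = 1) (hy : ∑ i, y i = 1)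
    (hx0 : ∀ i, 0 < x i) (hy0 : ∀ i, 0 < y i) :
    ∃ i, 0 ≤ Real.log (x i / y i) ∧ ∀ k, Real.log (x k / y k) ≤ Real.log (x i / y i) := by
  haveI : Nonempty (Fin n) := ⟨⟨0, hn⟩⟩
  obtain ⟨i, hi⟩ := Finite.exists_max (fun k => Real.log (x k / y k))
  refine ⟨i, ?_, hi⟩
  by_contra! hneg
  have : ∑ k, x k < ∑ k, y k := by
    apply Finset.sum_lt_sum_of_nonempty Finset.univ_nonempty
    intro k _
    have h1 := (hi k).trans_lt hneg
    rw [Real.log_neg_iff (div_pos (hx0 k) (hy0 k)), div_lt_one (hy0 k)] at h1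
    exact h1
  linarith

lemma vec_bound {n : ℕ} (hn : 0 < n) (C : Matrix (Fin n) (Fin n) ℝ)
    (hCpos : ∀ i j, 0 < C i j) (g : ℝ → ℝ) (x y z : Fin n → ℝ)
    (hgx : ∀ i, 0 < g (x i)) (hgy : ∀ i, 0 < g (y i)) (hz : ∀ i, 0 < z i)
    (p q : ℝ) (hp : 0 < p) (hq : 0 < q)
    (h1 : ∀ i, g (x i) ≤ p * g (y i)) (h2 : ∀ i, g (y i) ≤ q * g (x i)) (j : Fin n) :
    0 < Matrix.vecMul z (Mg C g x) j ∧
    Matrix.vecMul z (Mg C g x) j ≤ p * q * Matrix.vecMul z (Mg C g y) j := by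
  haveI : Nonempty (Fin n) := ⟨⟨0, hn⟩⟩
  have hSx : ∀ i, 0 < ∑ k, C i k * g (x k) := fun i =>
    Finset.sum_pos (fun k _ => mul_pos (hCpos i k) (hgx k)) Finset.univ_nonempty
  have hSy : ∀ i, 0 < ∑ k, C i k * g (y k) := fun i =>
    Finset.sum_pos (fun k _ => mul_pos (hCpos i k) (hgy k)) Finset.univ_nonempty
  have hS : ∀ i, ∑ k, C i k * g (y k) ≤ q * ∑ k, C i k * g (x k) := by
    intro i
    rw [Finset.mul_sum]
    refine Finset.sum_le_sum fun k _ => ?_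
    nlinarith [mul_le_mul_of_nonneg_left (h2 k) (hCpos i k).le]
  simp only [Matrix.vecMul, dotProduct, Mg, Matrix.of_apply]
  refine ⟨Finset.sum_pos (fun i _ => mul_pos (hz i)
    (div_pos (mul_pos (hCpos i j) (hgx j)) (hSx i))) Finset.univ_nonempty, ?_⟩
  rw [Finset.mul_sum]
  refine Finset.sum_le_sum fun i _ => ?_
  have key : C i j * g (x j) / ∑ k, C i k * g (x k)
      ≤ p * q * (C i j * g (y j) / ∑ k, C i k * g (y k)) := by
    rw [← mul_div_assoc, div_le_div_iff₀ (hSx i) (hSy i)]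
    calc C i j * g (x j) * ∑ k, C i k * g (y k)
        ≤ C i j * (p * g (y j)) * (q * ∑ k, C i k * g (x k)) := by
          apply mul_le_mul _ (hS i) (hSy i).le
          · exact (mul_pos (hCpos i j) (mul_pos hp (hgy j))).le
          · exact mul_le_mul_of_nonneg_left (h1 j) (hCpos i j).le
      _ = _ := by ring
  calc _ ≤ z i * (p * q * (C i j * g (y j) / ∑ k, C i k * g (y k))) :=
        mul_le_mul_of_nonneg_left key (hz i).le
    _ = _ := by ring

theorem projective_metric_contraction
    (n : ℕ) (hn : 0 < n) (C : Matrix (Fin n) (Fin n) ℝ)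
    (hCpos : ∀ i j, 0 < C i j)
    (g g' : ℝ → ℝ) (hg : IsAdmissible g g')
    (Lp : ℝ) (hLp : IsGreatest (ratioSet g g') Lp) :
    ∀ x ∈ stdSimplex ℝ (Fin n), ∀ y ∈ stdSimplex ℝ (Fin n),
      (∀ i, 0 < x i) → (∀ i, 0 < y i) →
      dHM (Mg C g x) (Mg C g y) ≤ 2 * Lp * dH x y := by
  intro x hx y hy hx0 hy0
  haveI : Nonempty (Fin n) := ⟨⟨0, hn⟩⟩
  haveI : Nonempty {z : Fin n → ℝ // ∀ i, 0 < z i} := ⟨⟨fun _ => 1, fun _ => one_pos⟩⟩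
  have hx1 : ∀ i, x i ≤ 1 := fun i => by
    rw [← hx.2]; exact Finset.single_le_sum (fun k _ => hx.1 k) (Finset.mem_univ i)
  have hy1 : ∀ i, y i ≤ 1 := fun i => by
    rw [← hy.2]; exact Finset.single_le_sum (fun k _ => hy.1 k) (Finset.mem_univ i)
  obtain ⟨i0, hU0, hU⟩ := max_log hn x y hx.2 hy.2 hx0 hy0
  obtain ⟨j0, hV0, hV⟩ := max_log hn y x hy.2 hx.2 hy0 hx0
  set U := Real.log (x i0 / y i0) with hUd
  set V := Real.log (y j0 / x j0) with hVd
  have hL0 : 0 ≤ Lp := by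
    have h0 : (0:ℝ) ∈ Set.Icc (0:ℝ) 1 := ⟨le_rfl, zero_le_one⟩
    exact (div_pos (hg.2.2.2.2 0 h0) (hg.2.2.2.1 0 h0)).le.trans (hLp.2 ⟨0, h0, rfl⟩)
  have hUV : U + V ≤ dH x y := by
    have e : U + V = Real.log ((x i0 * y j0) / (y i0 * x j0)) := by
      rw [hUd, hVd, ← Real.log_mul (div_pos (hx0 _) (hy0 _)).ne' (div_pos (hy0 _) (hx0 _)).ne',
        div_mul_div_comm]
    rw [e]
    exact (le_ciSup (f := fun j => Real.log ((x i0 * y j) / (y i0 * x j)))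
      (Set.finite_range _).bddAbove j0).trans
      (le_ciSup (f := fun i => ⨆ j, Real.log ((x i * y j) / (y i * x j)))
        (Set.finite_range _).bddAbove i0)
  have hgx : ∀ i, 0 < g (x i) := fun i => hg.2.2.2.1 _ ⟨(hx0 i).le, hx1 i⟩
  have hgy : ∀ i, 0 < g (y i) := fun i => hg.2.2.2.1 _ ⟨(hy0 i).le, hy1 i⟩
  have h1 : ∀ i, g (x i) ≤ Real.exp (Lp * U) * g (y i) := fun i =>
    g_key g g' hg Lp hLp _ _ U (hx0 i) (hx1 i) (hy0 i) (hy1 i) hU0 (hU i)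
  have h2 : ∀ i, g (y i) ≤ Real.exp (Lp * V) * g (x i) := fun i =>
    g_key g g' hg Lp hLp _ _ V (hy0 i) (hy1 i) (hx0 i) (hx1 i) hV0 (hV i)
  refine le_trans ?_ (mul_le_mul_of_nonneg_left hUV (by positivity : 0 ≤ 2 * Lp))
  refine ciSup_le fun z => ciSup_le fun i => ciSup_le fun j => ?_
  obtain ⟨a1, a2⟩ := vec_bound hn C hCpos g x y z.1 hgx hgy z.2 _ _ (Real.exp_pos _)
    (Real.exp_pos _) h1 h2 i
  obtain ⟨a3, -⟩ := vec_bound hn C hCpos g x y z.1 hgx hgy z.2 _ _ (Real.exp_pos _)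
    (Real.exp_pos _) h1 h2 j
  obtain ⟨b1, -⟩ := vec_bound hn C hCpos g y x z.1 hgy hgx z.2 _ _ (Real.exp_pos _)
    (Real.exp_pos _) h2 h1 i
  obtain ⟨b3, b2⟩ := vec_bound hn C hCpos g y x z.1 hgy hgx z.2 _ _ (Real.exp_pos _)
    (Real.exp_pos _) h2 h1 j
  rw [Real.log_le_iff_le_exp (div_pos (mul_pos a1 b3) (mul_pos b1 a3)),
    div_le_iff₀ (mul_pos b1 a3)]
  have e : Real.exp (2 * Lp * (U + V)) = (Real.exp (Lp * U) * Real.exp (Lp * V)) *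
      (Real.exp (Lp * V) * Real.exp (Lp * U)) := by
    simp only [← Real.exp_add]; congr 1; ring
  rw [e]
  refine (mul_le_mul a2 b2 b3.le (by positivity)).trans (le_of_eq (by ring))
end

section
/- Assume C is an n×n nonnegative irreducible matrix whose first column is positive (C_{i1} > 0 for all i). Then for every ε with 0 < ε < 1/2 there exists δ > 0, depending only on C and ε, such that for every admissible weight function g with L⁻(g) ≥ δ, the map u_g has a fixed point in Σ_ε = {x ∈ Σ : x₁ ≥ 1 − ε}. -/
open Set Matrix

lemma det_poly {E : Type*} [NormedAddCommGroup E] [NormedSpace ℝ E] [FiniteDimensional ℝ E]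
    (A : E →L[ℝ] E) : ∃ p : Polynomial ℝ, p.natDegree ≤ Module.finrank ℝ E ∧
      ∀ t : ℝ, p.eval t = (ContinuousLinearMap.id ℝ E + t • A).det := by
  let b := Module.finBasis ℝ E
  let M := LinearMap.toMatrix b b (A : E →ₗ[ℝ] E)
  refine ⟨Matrix.det ((Polynomial.X : Polynomial ℝ) • M.map Polynomial.C +
    (1 : Matrix _ _ ℝ).map Polynomial.C), ?_, ?_⟩
  · simpa using Polynomial.natDegree_det_X_add_C_le M 1
  · intro t
    rw [ContinuousLinearMap.det, ← LinearMap.det_toMatrix b, ← Polynomial.coe_evalRingHom,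
      RingHom.map_det]
    congr 1
    ext i j
    by_cases hij : i = j
    · subst hij
      simp [M, add_comm, mul_comm t]
    · simp [M, hij, mul_comm t]

lemma det_interp {E : Type*} [NormedAddCommGroup E] [NormedSpace ℝ E] [FiniteDimensional ℝ E]
    (A : E →L[ℝ] E) (v : ℕ → ℝ) (hv : Function.Injective v) :
    (ContinuousLinearMap.id ℝ E + A).det = ∑ i ∈ Finset.range (Module.finrank ℝ E + 1),
      (Lagrange.basis (Finset.range (Module.finrank ℝ E + 1)) v i).eval 1 *
        (ContinuousLinearMap.id ℝ E + v i • A).det := by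
  obtain ⟨p, hp, he⟩ := det_poly A
  have h1 := he 1
  rw [one_smul] at h1
  rw [← h1]
  have hd : p.degree < (Finset.range (Module.finrank ℝ E + 1)).card := by
    refine lt_of_le_of_lt Polynomial.degree_le_natDegree ?_
    rw [Finset.card_range]
    exact_mod_cast Nat.lt_succ_of_le hp
  conv_lhs => rw [Lagrange.eq_interpolate (v := v) hv.injOn hd, Lagrange.interpolate_apply,
    Polynomial.eval_finsetSum]
  refine Finset.sum_congr rfl fun i _ => ?_
  rw [Polynomial.eval_mul, Polynomial.eval_C]
  rw [he, mul_comm]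

lemma det_ne {E : Type*} [NormedAddCommGroup E] [NormedSpace ℝ E] [FiniteDimensional ℝ E]
    (A : E →L[ℝ] E) (h : ‖A‖ < 1) : (ContinuousLinearMap.id ℝ E + A).det ≠ 0 := by
  intro h0
  have := LinearMap.bot_lt_ker_of_det_eq_zero (f := ((ContinuousLinearMap.id ℝ E + A : E →L[ℝ] E) : E →ₗ[ℝ] E)) h0
  obtain ⟨x, hx, hx0⟩ := (Submodule.ne_bot_iff _).1 this.ne'
  have hx1 : x + A x = 0 := by simpa using hx
  have h2 : ‖x‖ = ‖A x‖ := by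
    rw [← norm_neg (A x), ← eq_neg_of_add_eq_zero_left hx1]
  have h3 := A.le_opNorm x
  have h4 : 0 < ‖x‖ := norm_pos_iff.2 hx0
  nlinarith

lemma det_pos' {E : Type*} [NormedAddCommGroup E] [NormedSpace ℝ E] [FiniteDimensional ℝ E]
    (A : E →L[ℝ] E) (h : ‖A‖ < 1) : 0 < (ContinuousLinearMap.id ℝ E + A).det := by
  by_contra hn
  push Not at hn
  have hc : ContinuousOn (fun s : ℝ => (ContinuousLinearMap.id ℝ E + s • A).det) (Icc 0 1) := by
    refine (ContinuousLinearMap.continuous_det.comp ?_).continuousOn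
    fun_prop
  have := intermediate_value_Icc' (zero_le_one) hc
  obtain ⟨s, hs, hs0⟩ := this (show (0:ℝ) ∈ _ by
    simp only [one_smul, zero_smul, add_zero]
    refine ⟨hn, ?_⟩
    simp [ContinuousLinearMap.det])
  refine det_ne (s • A) ?_ hs0
  rw [norm_smul, Real.norm_eq_abs, abs_of_nonneg hs.1]
  nlinarith [hs.2, norm_nonneg A, hs.1]


lemma perturb_lip {E : Type*} [NormedAddCommGroup E] [NormedSpace ℝ E]
    (G : E → E) (L : ℝ) (hL : 0 ≤ L)
    (hG : ∀ x ∈ Metric.closedBall (0:E) 1, ∀ y ∈ Metric.closedBall (0:E) 1,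
      ‖G x - G y‖ ≤ L * ‖x - y‖)
    (h0 : ∀ x : E, ‖x‖ = 1 → G x = 0) (x y : E) :
    ‖(Metric.closedBall (0:E) 1).indicator G x - (Metric.closedBall (0:E) 1).indicator G y‖
      ≤ L * ‖x - y‖ := by
  have key : ∀ x ∈ Metric.closedBall (0:E) 1, ∀ y ∉ Metric.closedBall (0:E) 1,
      ‖G x‖ ≤ L * ‖x - y‖ := by
    intro x hx y hy
    have hc : ContinuousOn (fun s : ℝ => ‖AffineMap.lineMap x y s‖) (Icc 0 1) := by
      refine Continuous.continuousOn ?_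
      exact continuous_norm.comp AffineMap.lineMap_continuous
    obtain ⟨s, hs, hs1⟩ := intermediate_value_Icc zero_le_one hc (show (1:ℝ) ∈ _ by
      simp only [AffineMap.lineMap_apply_zero, AffineMap.lineMap_apply_one]
      simp at hx hy
      exact ⟨hx, hy.le⟩)
    have hs1' : ‖AffineMap.lineMap x y s‖ = 1 := hs1
    have h := hG x hx (AffineMap.lineMap x y s) (by simp [hs1'])
    rw [h0 _ hs1', sub_zero] at h
    refine h.trans (mul_le_mul_of_nonneg_left ?_ hL)
    rw [← dist_eq_norm, dist_left_lineMap, ← dist_eq_norm, Real.norm_eq_abs, abs_of_nonneg hs.1]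
    nlinarith [hs.2, dist_nonneg (x := x) (y := y)]
  by_cases hx : x ∈ Metric.closedBall (0:E) 1 <;> by_cases hy : y ∈ Metric.closedBall (0:E) 1
  · rw [indicator_of_mem hx, indicator_of_mem hy]; exact hG x hx y hy
  · rw [indicator_of_mem hx, indicator_of_notMem hy, sub_zero]; exact key x hx y hy
  · rw [indicator_of_notMem hx, indicator_of_mem hy, zero_sub, norm_neg, norm_sub_rev]
    exact key y hy x hx
  · rw [indicator_of_notMem hx, indicator_of_notMem hy, sub_zero, norm_zero]
    positivity

lemma perturb_bij {E : Type*} [NormedAddCommGroup E] [NormedSpace ℝ E] [CompleteSpace E]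
    (G : E → E) (L : ℝ) (hL : 0 ≤ L)
    (hG : ∀ x ∈ Metric.closedBall (0:E) 1, ∀ y ∈ Metric.closedBall (0:E) 1,
      ‖G x - G y‖ ≤ L * ‖x - y‖)
    (h0 : ∀ x : E, ‖x‖ = 1 → G x = 0)
    (h1 : ∀ x ∈ Metric.closedBall (0:E) 1, ‖x + G x‖ ≤ 1)
    (t : ℝ) (ht0 : 0 ≤ t) (ht1 : t < 1) (htL : t * L < 1) :
    InjOn (fun x => x + t • G x) (Metric.ball (0:E) 1) ∧
      (fun x => x + t • G x) '' (Metric.ball (0:E) 1) = Metric.ball (0:E) 1 := by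
  constructor
  · intro x hx y hy hxy
    have h := hG x (Metric.ball_subset_closedBall hx) y (Metric.ball_subset_closedBall hy)
    have h2 : x - y = t • (G y - G x) := by
      have : x + t • G x = y + t • G y := hxy
      rw [smul_sub, sub_eq_sub_iff_add_eq_add, this, add_comm]
    by_contra hne
    have h3 : 0 < ‖x - y‖ := norm_pos_iff.2 (sub_ne_zero.2 hne)
    have h4 : ‖x - y‖ = t * ‖G x - G y‖ := by
      conv_lhs => rw [h2]
      rw [norm_smul, Real.norm_eq_abs, abs_of_nonneg ht0, norm_sub_rev]
    nlinarith
  · apply Subset.antisymm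
    · rintro _ ⟨x, hx, rfl⟩
      have h := h1 x (Metric.ball_subset_closedBall hx)
      simp only [Metric.mem_ball, dist_zero_right] at hx ⊢
      have : x + t • G x = (1 - t) • x + t • (x + G x) := by module
      rw [this]
      refine (norm_add_le _ _).trans_lt ?_
      rw [norm_smul, norm_smul, Real.norm_eq_abs, Real.norm_eq_abs, abs_of_nonneg ht0,
        abs_of_pos (by linarith)]
      nlinarith
    · intro y hy
      let H := (Metric.closedBall (0:E) 1).indicator G
      have hK : ContractingWith (Real.toNNReal (t * L)) (fun x => y - t • H x) := by
        refine ⟨?_, ?_⟩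
        · rw [← Real.toNNReal_one]
          exact (Real.toNNReal_lt_toNNReal_iff one_pos).2 htL
        · refine LipschitzWith.of_dist_le_mul fun a b => ?_
          rw [Real.coe_toNNReal _ (by positivity), dist_eq_norm, dist_eq_norm]
          have : (y - t • H a) - (y - t • H b) = t • (H b - H a) := by module
          rw [this, norm_smul, Real.norm_eq_abs, abs_of_nonneg ht0, mul_assoc, norm_sub_rev a b]
          exact mul_le_mul_of_nonneg_left (perturb_lip G L hL hG h0 b a) ht0
      have hfix : y - t • H (ContractingWith.fixedPoint _ hK) = ContractingWith.fixedPoint _ hK :=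
        hK.fixedPoint_isFixedPt
      set x := ContractingWith.fixedPoint _ hK
      have hx : x ∈ Metric.ball (0:E) 1 := by
        by_contra hx
        have hH : H x = 0 := by
          by_cases hx' : x ∈ Metric.closedBall (0:E) 1
          · simp only [H]
            rw [indicator_of_mem hx']
            apply h0
            simp at hx hx'
            linarith
          · exact indicator_of_notMem hx' _
        rw [hH, smul_zero, sub_zero] at hfix
        exact hx (hfix ▸ hy)
      refine ⟨x, hx, ?_⟩
      have hHx : H x = G x := indicator_of_mem (Metric.ball_subset_closedBall hx) _
      rw [hHx] at hfix
      change x + t • G x = y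
      rw [← hfix]
      conv_rhs => rw [← sub_add_cancel y (t • G x), hfix]
      rw [hfix]

open MeasureTheory in
lemma no_retraction {E : Type*} [NormedAddCommGroup E] [InnerProductSpace ℝ E]
    [FiniteDimensional ℝ E] [MeasurableSpace E] [BorelSpace E] (f : E → E)
    (hf : ∀ x ∈ Metric.closedBall (0:E) 1, ContDiffAt ℝ 1 f x)
    (h1 : ∀ x ∈ Metric.closedBall (0:E) 1, ‖f x‖ = 1)
    (hs : ∀ x : E, ‖x‖ = 1 → f x = x) : False := by
  let B := Metric.ball (0:E) 1
  have hBC : B ⊆ Metric.closedBall (0:E) 1 := Metric.ball_subset_closedBall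
  let G : E → E := fun x => f x - x
  let A : E → E →L[ℝ] E := fun x => fderiv ℝ f x - ContinuousLinearMap.id ℝ E
  have hfd : ∀ x ∈ Metric.closedBall (0:E) 1, HasFDerivAt f (fderiv ℝ f x) x := fun x hx =>
    ((hf x hx).differentiableAt one_ne_zero).hasFDerivAt
  have hA : ∀ x ∈ Metric.closedBall (0:E) 1, HasFDerivAt G (A x) x := fun x hx =>
    (hfd x hx).sub (hasFDerivAt_id x)
  have hAc : ContinuousOn A (Metric.closedBall (0:E) 1) := fun x hx =>
    (((hf x hx).fderiv_right (m := 0) (by simp)).continuousAt.sub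
      continuousAt_const).continuousWithinAt
  have hcomp : IsCompact (Metric.closedBall (0:E) 1) := isCompact_closedBall _ _
  obtain ⟨L0, hL0⟩ := hcomp.exists_bound_of_continuousOn hAc
  let L := max L0 1
  have hL1 : 1 ≤ L := le_max_right _ _
  have hL : ∀ x ∈ Metric.closedBall (0:E) 1, ‖A x‖ ≤ L := fun x hx =>
    (hL0 x hx).trans (le_max_left _ _)
  have hLip : ∀ x ∈ Metric.closedBall (0:E) 1, ∀ y ∈ Metric.closedBall (0:E) 1,
      ‖G x - G y‖ ≤ L * ‖x - y‖ := fun x hx y hy =>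
    (convex_closedBall (0:E) 1).norm_image_sub_le_of_norm_hasFDerivWithin_le
      (fun z hz => (hA z hz).hasFDerivWithinAt) hL hy hx
  let v : ℕ → ℝ := fun i => 1 / ((i + 2 : ℝ) * L)
  have hv : Function.Injective v := by
    intro i j hij
    have hLne : L ≠ 0 := by positivity
    simp only [v, one_div, _root_.inv_inj] at hij
    have := mul_right_cancel₀ hLne hij
    have : (i : ℝ) = j := by linarith
    exact_mod_cast this
  have hv0 : ∀ i, 0 ≤ v i := fun i => by positivity
  have hvL : ∀ i, v i * L < 1 := fun i => by
    have : v i * L = 1 / (i + 2 : ℝ) := by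
      have hLne : L ≠ 0 := by positivity
      simp only [v]; field_simp
    rw [this, div_lt_one (by positivity)]
    have : (0:ℝ) ≤ i := by positivity
    linarith
  have hv1 : ∀ i, v i < 1 := fun i => by
    have := hvL i
    nlinarith [hv0 i]
  have hpos : ∀ i, ∀ x ∈ B, 0 < (ContinuousLinearMap.id ℝ E + v i • A x).det := by
    intro i x hx
    apply det_pos'
    rw [norm_smul, Real.norm_eq_abs, abs_of_nonneg (hv0 i)]
    exact (mul_le_mul_of_nonneg_left (hL x (hBC hx)) (hv0 i)).trans_lt (hvL i)
  have hcont : ∀ i, ContinuousOn (fun x => (ContinuousLinearMap.id ℝ E + v i • A x).det)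
      (Metric.closedBall (0:E) 1) := fun i =>
    ContinuousLinearMap.continuous_det.comp_continuousOn
      (continuousOn_const.add (hAc.const_smul (v i)))
  have hint : ∀ i, IntegrableOn (fun x => (ContinuousLinearMap.id ℝ E + v i • A x).det) B volume :=
    fun i => ((hcont i).integrableOn_compact hcomp).mono_set hBC
  have hval : ∀ i, ∫ x in B, (ContinuousLinearMap.id ℝ E + v i • A x).det = volume.real B := by
    intro i
    obtain ⟨hinj, himg⟩ := perturb_bij G L (by positivity) hLip
      (fun x hx => by simp [G, hs x hx]) (fun x hx => by simp [G, h1 x hx])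
      (v i) (hv0 i) (hv1 i) (hvL i)
    have hchg := lintegral_abs_det_fderiv_eq_addHaar_image volume
      (f' := fun x => ContinuousLinearMap.id ℝ E + v i • A x) measurableSet_ball
      (fun x hx => ((hasFDerivAt_id x).add ((hA x (hBC hx)).const_smul (v i))).hasFDerivWithinAt) hinj
    have himg' := himg
    rw [integral_eq_lintegral_of_nonneg_ae]
    · rw [Measure.real]
      congr 1
      refine Eq.trans ?_ (hchg.trans (congrArg _ himg))
      refine setLIntegral_congr_fun measurableSet_ball fun x hx => ?_
      rw [abs_of_pos (hpos i x hx)]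
    · filter_upwards [ae_restrict_mem measurableSet_ball] with x hx using (hpos i x hx).le
    · exact (hint i).aestronglyMeasurable
  have hzero : ∀ x ∈ B, (ContinuousLinearMap.id ℝ E + A x).det = 0 := by
    intro x hx
    have hE : ContinuousLinearMap.id ℝ E + A x = fderiv ℝ f x := by simp [A]
    rw [hE]
    by_contra hne
    have hsurj : Function.Surjective (fderiv ℝ f x) := by
      exact (LinearMap.equivOfDetNeZero (fderiv ℝ f x : E →ₗ[ℝ] E) hne).surjective
    obtain ⟨w, hw⟩ := hsurj (f x)
    have hd := (hfd x (hBC hx)).norm_sq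
    have hev : (fun y => ‖f y‖ ^ 2) =ᶠ[nhds x] fun _ => (1:ℝ) := by
      filter_upwards [Metric.isOpen_ball.mem_nhds hx] with y hy
      rw [h1 y (hBC hy), one_pow]
    have hd2 := hd.congr_of_eventuallyEq hev.symm
    have hd3 := hd2.unique (hasFDerivAt_const (1:ℝ) x)
    have hd4 := congrArg (fun T : E →L[ℝ] ℝ => T w) hd3
    simp [hw, h1 x (hBC hx)] at hd4
  have hsum : ∑ i ∈ Finset.range (Module.finrank ℝ E + 1),
      (Lagrange.basis (Finset.range (Module.finrank ℝ E + 1)) v i).eval 1 * volume.real B = 0 := by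
    have e1 : ∫ x in B, (ContinuousLinearMap.id ℝ E + A x).det = 0 := by
      rw [setIntegral_congr_fun measurableSet_ball (g := fun _ => (0:ℝ)) hzero]; simp
    rw [← e1]
    simp_rw [fun x => det_interp (A x) v hv]
    rw [integral_finsetSum _ (fun i _ => (hint i).const_mul _)]
    refine Finset.sum_congr rfl fun i _ => ?_
    rw [integral_const_mul, hval]
  rw [← Finset.sum_mul, ← Polynomial.eval_finsetSum,
    Lagrange.sum_basis hv.injOn (by simp)] at hsum
  simp only [Polynomial.eval_one, one_mul] at hsum
  have : 0 < volume.real B :=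
    ENNReal.toReal_pos (Metric.measure_ball_pos volume _ one_pos).ne' measure_ball_lt_top.ne
  linarith

lemma no_fixed_smooth {E : Type*} [NormedAddCommGroup E] [InnerProductSpace ℝ E]
    [FiniteDimensional ℝ E] [MeasurableSpace E] [BorelSpace E] (P : E → E)
    (hP : ContDiff ℝ 1 P) (h1 : ∀ x, ‖P x‖ < 1)
    (hne : ∀ x ∈ Metric.closedBall (0:E) 1, P x ≠ x) : False := by
  let a : E → ℝ := fun x => ‖x - P x‖ ^ 2
  let b : E → ℝ := fun x => inner ℝ x (x - P x)
  let D : E → ℝ := fun x => b x ^ 2 + a x * (1 - ‖x‖ ^ 2)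
  have hac : ContDiff ℝ 1 a := (contDiff_id.sub hP).norm_sq ℝ
  have hbc : ContDiff ℝ 1 b := contDiff_id.inner ℝ (contDiff_id.sub hP)
  have hDc : ContDiff ℝ 1 D :=
    (hbc.pow 2).add (hac.mul (contDiff_const.sub (contDiff_id.norm_sq ℝ)))
  have ha : ∀ x ∈ Metric.closedBall (0:E) 1, 0 < a x := fun x hx => by
    have : 0 < ‖x - P x‖ := norm_pos_iff.2 (sub_ne_zero.2 (hne x hx).symm)
    positivity
  have hb : ∀ x : E, ‖x‖ = 1 → 0 < b x := fun x hx => by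
    have h2 := real_inner_le_norm x (P x)
    have h3 := h1 x
    simp only [b]
    rw [inner_sub_right, real_inner_self_eq_norm_sq, hx]
    rw [hx] at h2
    linarith
  have hD : ∀ x ∈ Metric.closedBall (0:E) 1, 0 < D x := fun x hx => by
    have hx' : ‖x‖ ≤ 1 := by simpa using hx
    rcases hx'.lt_or_eq with h | h
    · have := ha x hx
      have h4 : 0 < 1 - ‖x‖ ^ 2 := by nlinarith [norm_nonneg x]
      positivity
    · have := hb x h
      simp only [D, h]
      nlinarith
  let r : E → E := fun x => x + ((-b x + Real.sqrt (D x)) / a x) • (x - P x)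
  refine no_retraction r ?_ ?_ ?_
  · intro x hx
    refine contDiffAt_id.add (ContDiffAt.smul ?_ (contDiffAt_id.sub hP.contDiffAt))
    exact (hbc.contDiffAt.neg.add (hDc.contDiffAt.sqrt (hD x hx).ne')).div hac.contDiffAt (ha x hx).ne'
  · intro x hx
    have h2 : ‖r x‖ ^ 2 = 1 := by
      simp only [r]
      rw [norm_add_sq_real, inner_smul_right, norm_smul, mul_pow, Real.norm_eq_abs, sq_abs]
      change ‖x‖ ^ 2 + 2 * ((-b x + Real.sqrt (D x)) / a x * b x) +
        ((-b x + Real.sqrt (D x)) / a x) ^ 2 * a x = 1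
      have hs := Real.sq_sqrt (hD x hx).le
      have ha' := ha x hx
      set s := Real.sqrt (D x)
      have hs' : s ^ 2 = b x ^ 2 + a x * (1 - ‖x‖ ^ 2) := hs
      field_simp
      nlinarith
    have := norm_nonneg (r x)
    nlinarith
  · intro x hx
    have : Real.sqrt (D x) = b x := by
      have : D x = b x ^ 2 := by simp [D, hx]
      rw [this, Real.sqrt_sq (hb x hx).le]
    simp [r, this]

lemma brouwer_ball {E : Type*} [NormedAddCommGroup E] [InnerProductSpace ℝ E]
    [FiniteDimensional ℝ E] [MeasurableSpace E] [BorelSpace E] (Φ : E → E)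
    (hΦ : Continuous Φ) (h1 : ∀ x, ‖Φ x‖ ≤ 1) : ∃ x, Φ x = x := by
  by_contra hno
  push Not at hno
  obtain ⟨x0, -, hx0⟩ := (isCompact_closedBall (0:E) 1).exists_isMinOn
    ⟨0, by simp⟩ ((hΦ.sub continuous_id).norm.continuousOn)
  let η := ‖Φ x0 - x0‖
  have hη : 0 < η := norm_pos_iff.2 (sub_ne_zero.2 (hno x0))
  have hη' : ∀ x ∈ Metric.closedBall (0:E) 1, η ≤ ‖Φ x - x‖ := fun x hx => hx0 hx
  let e := η / 4
  have he : 0 < e := by positivity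
  obtain ⟨Q, hQ, hQd, -⟩ := hΦ.exists_contDiff_approx 1 (ε := fun _ => e) continuous_const
    (fun _ => he)
  have hQn : ∀ x, ‖Q x‖ < 1 + e := fun x => by
    have h2 := hQd x
    rw [dist_eq_norm] at h2
    have h3 := norm_le_norm_add_norm_sub' (Q x) (Φ x)
    linarith [h1 x]
  refine no_fixed_smooth (fun x => (1 + 2 * e)⁻¹ • Q x) ?_ ?_ ?_
  · exact (hQ.of_le (by simp)).const_smul _
  · intro x
    rw [norm_smul, Real.norm_eq_abs, abs_of_pos (by positivity), inv_mul_lt_iff₀ (by positivity)]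
    linarith [hQn x]
  · intro x hx hfx
    have h2 : Q x = (1 + 2 * e) • x := by
      conv_rhs => rw [← hfx, smul_smul, mul_inv_cancel₀ (by positivity), one_smul]
    have h3 : Q x - x = (2 * e) • x := by rw [h2]; module
    have h4 : ‖Q x - x‖ ≤ 2 * e := by
      rw [h3, norm_smul, Real.norm_eq_abs, abs_of_pos (by positivity)]
      have : ‖x‖ ≤ 1 := by simpa using hx
      nlinarith
    have h5 := hη' x hx
    have h6 := hQd x
    rw [dist_comm, dist_eq_norm] at h6
    have h7 : ‖Φ x - x‖ ≤ ‖Φ x - Q x‖ + ‖Q x - x‖ := norm_sub_le_norm_sub_add_norm_sub _ _ _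
    have : η = 4 * e := by simp only [e]; ring
    linarith

/-- Brouwer's theorem on the truncated simplex. -/
lemma brouwer_simplex (n : ℕ) (ε : ℝ) (hε : 0 < ε) (hε1 : ε ≤ 1)
    (F : (Fin (n+1) → ℝ) → (Fin (n+1) → ℝ))
    (hF : ContinuousOn F {x | x ∈ stdSimplex ℝ (Fin (n+1)) ∧ 1 - ε ≤ x 0})
    (hm : MapsTo F {x | x ∈ stdSimplex ℝ (Fin (n+1)) ∧ 1 - ε ≤ x 0}
      {x | x ∈ stdSimplex ℝ (Fin (n+1)) ∧ 1 - ε ≤ x 0}) :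
    ∃ x, (x ∈ stdSimplex ℝ (Fin (n+1)) ∧ 1 - ε ≤ x 0) ∧ F x = x := by
  set K := {x : Fin (n+1) → ℝ | x ∈ stdSimplex ℝ (Fin (n+1)) ∧ 1 - ε ≤ x 0} with hK
  let S : (Fin (n+1) → ℝ) → ℝ := fun y => ∑ k : Fin n, max (y k.succ) 0
  let q : (Fin (n+1) → ℝ) → Fin n → ℝ := fun y k => max (y k.succ) 0 * (ε / max ε (S y))
  let p : (Fin (n+1) → ℝ) → (Fin (n+1) → ℝ) := fun y => Fin.cons (1 - ∑ k, q y k) (q y)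
  have hmax : ∀ y, 0 < max ε (S y) := fun y => lt_of_lt_of_le hε (le_max_left _ _)
  have hSc : Continuous S := by fun_prop
  have hqc : ∀ k, Continuous fun y => q y k := fun k => by
    refine Continuous.mul (by fun_prop) (continuous_const.div (by fun_prop) fun y => (hmax y).ne')
  have hpc : Continuous p := by
    refine continuous_pi fun i => ?_
    refine Fin.cases ?_ (fun k => ?_) i
    · simp only [p, Fin.cons_zero]
      exact continuous_const.sub (continuous_finsetSum _ fun k _ => hqc k)
    · simpa only [p, Fin.cons_succ] using hqc k
  have hq0 : ∀ y k, 0 ≤ q y k := fun y k =>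
    mul_nonneg (le_max_right _ _) (div_nonneg hε.le (hmax y).le)
  have hqs : ∀ y, ∑ k, q y k ≤ ε := fun y => by
    simp only [q]
    rw [← Finset.sum_mul, mul_div_assoc', div_le_iff₀ (hmax y), mul_comm]
    exact mul_le_mul_of_nonneg_left (le_max_right _ _) hε.le
  have hpK : ∀ y, p y ∈ K := fun y => by
    refine ⟨⟨fun i => ?_, ?_⟩, ?_⟩
    · refine Fin.cases ?_ (fun k => ?_) i
      · simp only [p, Fin.cons_zero]; linarith [hqs y]
      · simpa only [p, Fin.cons_succ] using hq0 y k
    · rw [Fin.sum_univ_succ]; simp [p]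
    · simp only [p, Fin.cons_zero]; linarith [hqs y]
  have hpid : ∀ y ∈ K, p y = y := fun y hy => by
    obtain ⟨⟨hy0, hy1⟩, hy2⟩ := hy
    rw [Fin.sum_univ_succ] at hy1
    have hmx : ∀ k : Fin n, max (y k.succ) 0 = y k.succ := fun k => max_eq_left (hy0 _)
    have hS : S y = ∑ k : Fin n, y k.succ := Finset.sum_congr rfl fun k _ => hmx k
    have hS1 : max ε (S y) = ε := max_eq_left (by rw [hS]; linarith)
    have hq : ∀ k, q y k = y k.succ := fun k => by
      simp only [q]; rw [hS1, hmx, div_self hε.ne', mul_one]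
    funext i
    refine Fin.cases ?_ (fun k => ?_) i
    · simp only [p, Fin.cons_zero, hq]; linarith
    · simp only [p, Fin.cons_succ, hq]
  let Φ : EuclideanSpace ℝ (Fin (n+1)) → EuclideanSpace ℝ (Fin (n+1)) :=
    fun y => WithLp.toLp 2 (F (p (WithLp.ofLp y)))
  have hΦ : Continuous Φ := by
    refine (PiLp.continuous_toLp 2 _).comp ?_
    exact hF.comp_continuous (hpc.comp (PiLp.continuous_ofLp 2 _)) (fun y => hpK _)
  have hΦ1 : ∀ y, ‖Φ y‖ ≤ 1 := fun y => by
    have h := (hm (hpK (WithLp.ofLp y))).1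
    rw [EuclideanSpace.norm_eq, Real.sqrt_le_iff]
    refine ⟨zero_le_one, ?_⟩
    rw [one_pow, ← h.2]
    refine Finset.sum_le_sum fun i _ => ?_
    change ‖F (p (WithLp.ofLp y)) i‖ ^ 2 ≤ _
    have h0 := h.1 i
    have h1 : F (p (WithLp.ofLp y)) i ≤ 1 := by
      rw [← h.2]; exact Finset.single_le_sum (fun j _ => h.1 j) (Finset.mem_univ i)
    rw [Real.norm_eq_abs, sq_abs]
    nlinarith
  obtain ⟨y, hy⟩ := brouwer_ball Φ hΦ hΦ1
  have hy' : F (p (WithLp.ofLp y)) = WithLp.ofLp y := congrArg WithLp.ofLp hy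
  have hyK : WithLp.ofLp y ∈ K := by rw [← hy']; exact hm (hpK _)
  refine ⟨WithLp.ofLp y, hyK, ?_⟩
  rw [hpid _ hyK] at hy'
  exact hy'

lemma g_growth (g g' : ℝ → ℝ) (Lm δ : ℝ) (hg : IsAdmissible g g')
    (hL : IsLeast (ratioSet g g') Lm) (hδ : δ ≤ Lm) (a b : ℝ) (ha : 0 ≤ a) (hab : a ≤ b)
    (hb : b ≤ 1) : g a ≤ Real.exp (-(δ * (b - a))) * g b := by
  obtain ⟨h1, -, -, h4, -⟩ := hg
  have hmono : MonotoneOn (fun x => g x * Real.exp (-(δ * x))) (Icc (0:ℝ) 1) := by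
    have hder : ∀ x ∈ Icc (0:ℝ) 1, HasDerivWithinAt (fun x => g x * Real.exp (-(δ * x)))
        (g' x * Real.exp (-(δ * x)) + g x * (Real.exp (-(δ * x)) * (-(δ * 1)))) (Icc (0:ℝ) 1) x :=
      fun x hx => (h1 x hx).mul (((hasDerivWithinAt_id x _).const_mul δ).neg.exp)
    refine monotoneOn_of_hasDerivWithinAt_nonneg (convex_Icc 0 1)
      (fun x hx => (hder x hx).continuousWithinAt)
      (fun x hx => (hder x (interior_subset hx)).mono interior_subset) fun x hx => ?_
    have hx := interior_subset hx
    have h2 : Lm ≤ g' x / g x := hL.2 ⟨x, hx, rfl⟩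
    have h3 : δ * g x ≤ g' x := (le_div_iff₀ (h4 x hx)).1 (hδ.trans h2)
    have := Real.exp_pos (-(δ * x))
    nlinarith
  have h := hmono ⟨ha, hab.trans hb⟩ ⟨ha.trans hab, hb⟩ hab
  simp only at h
  have e1 : Real.exp (-(δ * b)) = Real.exp (-(δ * (b - a))) * Real.exp (-(δ * a)) := by
    rw [← Real.exp_add]; congr 1; ring
  rw [e1, ← mul_assoc] at h
  have := le_of_mul_le_mul_right h (Real.exp_pos _)
  linarith

/-- If the first column of the irreducible matrix `C` is positive then, for every
`0 < ε < 1/2`, for `L⁻(g)` large enough (depending only on `C` and `ε`), the map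
`u_g` has a fixed point in `Σ_ε = {x ∈ Σ : x₁ ≥ 1 − ε}`. -/
theorem fixed_point_near_vertex_first_column_positive
    (n : ℕ) (C : Matrix (Fin (n+1)) (Fin (n+1)) ℝ)
    (hC0 : ∀ i j, 0 ≤ C i j) (hCirr : IsIrred C)
    (hcol : ∀ i, 0 < C i 0)
    (ε : ℝ) (hε0 : 0 < ε) (hε1 : ε < 1/2) :
    ∃ δ : ℝ, 0 < δ ∧
      ∀ g g' : ℝ → ℝ, ∀ Lm : ℝ, IsAdmissible g g' →
        IsLeast (ratioSet g g') Lm → δ ≤ Lm →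
        ∀ u : (Fin (n+1) → ℝ) → (Fin (n+1) → ℝ),
          (∀ x ∈ stdSimplex ℝ (Fin (n+1)), u x ∈ stdSimplex ℝ (Fin (n+1)) ∧
            Matrix.vecMul (u x) (Mg C g x) = u x ∧
            ∀ v ∈ stdSimplex ℝ (Fin (n+1)), Matrix.vecMul v (Mg C g x) = v → v = u x) →
          ∃ x ∈ stdSimplex ℝ (Fin (n+1)), 1 - ε ≤ x 0 ∧ u x = x := by
  let c : ℝ := ∑ i, ∑ k, C i k / C i 0
  have hcnn : ∀ i k, 0 ≤ C i k / C i 0 := fun i k => div_nonneg (hC0 i k) (hcol i).le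
  have hci : ∀ i, ∑ k, C i k ≤ c * C i 0 := fun i => by
    have h1 : ∑ k, C i k / C i 0 ≤ c :=
      Finset.single_le_sum (f := fun i => ∑ k, C i k / C i 0)
        (fun j _ => Finset.sum_nonneg fun k _ => hcnn j k) (Finset.mem_univ i)
    rw [← Finset.sum_div, div_le_iff₀ (hcol i)] at h1
    exact h1
  have hc : 0 < c := by
    have h1 := hci 0
    have h2 : C 0 0 ≤ ∑ k, C 0 k :=
      Finset.single_le_sum (fun k _ => hC0 0 k) (Finset.mem_univ 0)
    have h3 := hcol 0
    by_contra h
    push Not at h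
    nlinarith
  have hε2 : 0 < 1 - 2 * ε := by linarith
  refine ⟨c / (ε * (1 - 2 * ε)), by positivity, ?_⟩
  intro g g' Lm hg hL hδ u hu
  set δ := c / (ε * (1 - 2 * ε)) with hδdef
  have hδ0 : 0 < δ := by positivity
  let q : ℝ := Real.exp (-(c / ε))
  have hq : 0 < q := Real.exp_pos _
  have hqc : c * q ≤ ε := by
    have h1 := Real.add_one_le_exp (c / ε)
    have h2 : q * Real.exp (c / ε) = 1 := by
      simp only [q]; rw [← Real.exp_add]; simp
    have h3 : q * (c / ε) ≤ 1 := by nlinarith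
    rw [mul_div_assoc', div_le_iff₀ hε0] at h3
    linarith
  have hgc : ContinuousOn g (Icc (0:ℝ) 1) := fun x hx => (hg.1 x hx).continuousWithinAt
  have hgpos := hg.2.2.2.1
  have hmem : ∀ x ∈ stdSimplex ℝ (Fin (n+1)), ∀ i, x i ∈ Icc (0:ℝ) 1 := fun x hx i =>
    ⟨hx.1 i, by rw [← hx.2]; exact Finset.single_le_sum (fun j _ => hx.1 j) (Finset.mem_univ i)⟩
  have hDpos : ∀ x ∈ stdSimplex ℝ (Fin (n+1)), ∀ i, 0 < ∑ k, C i k * g (x k) := fun x hx i => by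
    refine lt_of_lt_of_le (mul_pos (hcol i) (hgpos _ (hmem x hx 0))) ?_
    exact Finset.single_le_sum (f := fun k => C i k * g (x k))
      (fun k _ => mul_nonneg (hC0 i k) (hgpos _ (hmem x hx k)).le) (Finset.mem_univ 0)
  have hB := brouwer_simplex n ε hε0 (by linarith) (fun x => Matrix.vecMul x (Mg C g x))
  have hB1 := hB ?_
  on_goal 1 => have hB2 := hB1 ?_
  · obtain ⟨x, ⟨hx, hx0⟩, hfix⟩ := hB2
    exact ⟨x, hx, hx0, ((hu x hx).2.2 x hx hfix).symm⟩
  · rintro x ⟨hx, hx0⟩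
    have hform : ∀ j, Matrix.vecMul x (Mg C g x) j =
        ∑ i, x i * (C i j * g (x j) / ∑ k, C i k * g (x k)) := fun j => rfl
    refine ⟨⟨fun j => ?_, ?_⟩, ?_⟩
    · change 0 ≤ Matrix.vecMul x (Mg C g x) j
      rw [hform]
      exact Finset.sum_nonneg fun i _ => mul_nonneg (hx.1 i)
        (div_nonneg (mul_nonneg (hC0 i j) (hgpos _ (hmem x hx j)).le) (hDpos x hx i).le)
    · simp only [hform]
      rw [Finset.sum_comm, ← hx.2]
      refine Finset.sum_congr rfl fun i _ => ?_
      rw [← Finset.mul_sum, ← Finset.sum_div, div_self (hDpos x hx i).ne', mul_one]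
    · change 1 - ε ≤ Matrix.vecMul x (Mg C g x) 0
      rw [hform]
      have hg0 := hgpos _ (hmem x hx 0)
      have hsmall : ∀ k, k ≠ 0 → g (x k) ≤ q * g (x 0) := fun k hk => by
        have hk2 : x k + x 0 ≤ 1 := by
          rw [← hx.2, ← Finset.sum_pair hk]
          exact Finset.sum_le_sum_of_subset_of_nonneg (Finset.subset_univ _)
            fun j _ _ => hx.1 j
        have h1 := g_growth g g' Lm δ hg hL hδ (x k) (x 0) (hx.1 k) (by linarith)
          (hmem x hx 0).2
        refine h1.trans (mul_le_mul_of_nonneg_right ?_ hg0.le)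
        refine Real.exp_le_exp.2 (neg_le_neg ?_)
        have h2 : c / ε = δ * (1 - 2 * ε) := by
          rw [hδdef, ← div_div, div_mul_cancel₀ _ hε2.ne']
        rw [h2]
        exact mul_le_mul_of_nonneg_left (by linarith) hδ0.le
      have hrow : ∀ i, 1 - ε ≤ C i 0 * g (x 0) / ∑ k, C i k * g (x k) := fun i => by
        rw [le_div_iff₀ (hDpos x hx i)]
        have h1 : ∑ k, C i k * g (x k) ≤ C i 0 * g (x 0) + (∑ k, C i k) * (q * g (x 0)) := by
          rw [Fin.sum_univ_succ, Finset.sum_mul, Fin.sum_univ_succ]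
          have h2 : ∑ k : Fin n, C i k.succ * g (x k.succ) ≤
              ∑ k : Fin n, C i k.succ * (q * g (x 0)) :=
            Finset.sum_le_sum fun k _ =>
              mul_le_mul_of_nonneg_left (hsmall _ (Fin.succ_ne_zero k)) (hC0 i _)
          have h3 : 0 ≤ C i 0 * (q * g (x 0)) :=
            mul_nonneg (hC0 i 0) (mul_nonneg hq.le hg0.le)
          linarith
        have h4 : (∑ k, C i k) * (q * g (x 0)) ≤ ε * (C i 0 * g (x 0)) := by
          calc (∑ k, C i k) * (q * g (x 0)) ≤ (c * C i 0) * (q * g (x 0)) :=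
                mul_le_mul_of_nonneg_right (hci i) (mul_nonneg hq.le hg0.le)
            _ = (c * q) * (C i 0 * g (x 0)) := by ring
            _ ≤ ε * (C i 0 * g (x 0)) :=
                mul_le_mul_of_nonneg_right hqc (mul_nonneg (hC0 i 0) hg0.le)
        have h5 : 0 < C i 0 * g (x 0) := mul_pos (hcol i) hg0
        have h6 : ∑ k, C i k * g (x k) ≤ C i 0 * g (x 0) + ε * (C i 0 * g (x 0)) := by linarith
        have h7 := mul_le_mul_of_nonneg_left h6 (show 0 ≤ 1 - ε by linarith)
        nlinarith [mul_pos (mul_pos hε0 hε0) h5]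
      calc 1 - ε = ∑ i, x i * (1 - ε) := by rw [← Finset.sum_mul, hx.2, one_mul]
        _ ≤ _ := Finset.sum_le_sum fun i _ => mul_le_mul_of_nonneg_left (hrow i) (hx.1 i)
  · refine continuousOn_pi.2 fun j => ?_
    have hgk : ∀ k, ContinuousOn (fun x : Fin (n+1) → ℝ => g (x k))
        {x | x ∈ stdSimplex ℝ (Fin (n+1)) ∧ 1 - ε ≤ x 0} := fun k =>
      hgc.comp (continuous_apply k).continuousOn fun x hx => hmem x hx.1 k
    change ContinuousOn (fun x : Fin (n+1) → ℝ =>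
      ∑ i, x i * (C i j * g (x j) / ∑ k, C i k * g (x k))) _
    refine continuousOn_finsetSum _ fun i _ => ?_
    refine (continuous_apply i).continuousOn.mul (ContinuousOn.div ?_ ?_ ?_)
    · exact continuousOn_const.mul (hgk j)
    · exact continuousOn_finsetSum _ fun k _ => continuousOn_const.mul (hgk k)
    · exact fun x hx => (hDpos x hx.1 i).ne'
end

section
/- Assume C is an n×n nonnegative irreducible matrix with C₁₁ > 0, and let εₙ ∈ (0,1). Then for every ε with 0 < ε < εₙ there exists δ > 0, depending only on C, ε and εₙ, such that for every admissible weight function g satisfying both g(εₙ)^{n−1} ≤ g(1−εₙ) and L⁻(g) ≥ δ, the map u_g has a fixed point in Σ_ε = {x ∈ Σ : x₁ ≥ 1 − ε}. -/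
open Set Matrix

lemma brw_proj {E : Type*} [NormedAddCommGroup E] [InnerProductSpace ℝ E] [CompleteSpace E]
    {K : Set E} (hne : K.Nonempty) (hcl : IsClosed K) (hcv : Convex ℝ K) :
    ∃ p : E → E, (∀ x, p x ∈ K) ∧ (∀ x ∈ K, p x = x) ∧ (∀ x y, ‖p x - p y‖ ≤ ‖x - y‖) ∧
      (∀ x, ∀ w ∈ K, inner ℝ (x - p x) (w - p x) ≤ 0) := by
  choose p hpK hp using exists_norm_eq_iInf_of_complete_convex hne hcl.isComplete hcv
  have hin : ∀ x, ∀ w ∈ K, inner ℝ (x - p x) (w - p x) ≤ 0 := fun x =>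
    (norm_eq_iInf_iff_real_inner_le_zero hcv (hpK x)).1 (hp x)
  refine ⟨p, hpK, ?_, ?_, hin⟩
  · intro x hx
    have := hin x x hx
    rw [real_inner_self_eq_norm_sq] at this
    have h2 : ‖x - p x‖ = 0 := by nlinarith [norm_nonneg (x - p x)]
    exact (sub_eq_zero.1 (norm_eq_zero.1 h2)).symm
  · intro x y
    have h1 := hin x (p y) (hpK y)
    have h2 := hin y (p x) (hpK x)
    have h3 : ‖p x - p y‖ ^ 2 ≤ inner ℝ (x - y) (p x - p y) := by
      rw [← real_inner_self_eq_norm_sq]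
      have e1 : inner ℝ (x - y) (p x - p y) - inner ℝ (p x - p y) (p x - p y)
          = - inner ℝ (x - p x) (p y - p x) - inner ℝ (y - p y) (p x - p y) := by
        simp only [inner_sub_left, inner_sub_right]
        ring
      linarith
    have h4 := real_inner_le_norm (x - y) (p x - p y)
    by_contra h
    push Not at h
    nlinarith [norm_nonneg (p x - p y), norm_nonneg (x - y)]

lemma brw_poly {d : ℕ} (A : EuclideanSpace ℝ (Fin d) →L[ℝ] EuclideanSpace ℝ (Fin d)) :
    ∃ P : Polynomial ℝ, P.natDegree ≤ d ∧
      ∀ t : ℝ, P.eval t = (ContinuousLinearMap.id ℝ _ + t • A).det := by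
  let b := (EuclideanSpace.basisFun (Fin d) ℝ).toBasis
  let M := LinearMap.toMatrix b b (A : EuclideanSpace ℝ (Fin d) →ₗ[ℝ] EuclideanSpace ℝ (Fin d))
  refine ⟨Matrix.det ((Polynomial.X : Polynomial ℝ) • M.map Polynomial.C
    + (1 : Matrix (Fin d) (Fin d) ℝ).map Polynomial.C), ?_, ?_⟩
  · simpa using Polynomial.natDegree_det_X_add_C_le M 1
  · intro t
    have h1 : (ContinuousLinearMap.id ℝ (EuclideanSpace ℝ (Fin d)) + t • A).det
        = Matrix.det (t • M + 1) := by
      rw [ContinuousLinearMap.det, ← LinearMap.det_toMatrix b]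
      congr 1
      simp only [ContinuousLinearMap.toLinearMap_add, ContinuousLinearMap.toLinearMap_smul,
        map_add, map_smul]
      rw [add_comm]
      congr 1
      exact LinearMap.toMatrix_id b
    rw [h1, ← Polynomial.coe_evalRingHom, RingHom.map_det]
    congr 1
    ext i j
    by_cases hij : i = j
    · subst hij
      simp
      ring
    · simp [hij]
      ring

lemma brw_interp (d : ℕ) (t0 : ℝ) (ht0 : 0 < t0) : ∃ (v l : Fin (d+1) → ℝ),
    (∀ i, 0 ≤ v i ∧ v i ≤ t0) ∧ (∑ i, l i = 1) ∧
    ∀ P : Polynomial ℝ, P.natDegree ≤ d → P.eval 1 = ∑ i, l i * P.eval (v i) := by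
  let v : Fin (d+1) → ℝ := fun i => t0 * (i : ℕ) / (d+1)
  have hinj : Set.InjOn v (Finset.univ : Finset (Fin (d+1))) := by
    intro i _ j _ hij
    simp only [v] at hij
    have hd : (d : ℝ) + 1 ≠ 0 := by positivity
    field_simp at hij
    exact Fin.ext (by exact_mod_cast hij)
  have key : ∀ P : Polynomial ℝ, P.natDegree ≤ d →
      P.eval 1 = ∑ i, (Lagrange.basis Finset.univ v i).eval 1 * P.eval (v i) := by
    intro P hP
    have := Lagrange.eq_interpolate (s := Finset.univ) (f := P) hinj (by
      refine lt_of_le_of_lt Polynomial.degree_le_natDegree ?_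
      simp only [Finset.card_univ, Fintype.card_fin]
      exact_mod_cast Nat.lt_succ_of_le hP)
    conv_lhs => rw [this]
    rw [Lagrange.interpolate_apply, Polynomial.eval_finsetSum]
    simp [mul_comm]
  refine ⟨v, fun i => (Lagrange.basis Finset.univ v i).eval 1, ?_, ?_, key⟩
  · intro i
    refine ⟨by positivity, ?_⟩
    simp only [v]
    rw [div_le_iff₀ (by positivity)]
    have : ((i : ℕ) : ℝ) ≤ d + 1 := by exact_mod_cast i.2.le
    gcongr
  · have := key 1 (by simp)
    simpa using this.symm

lemma brw_det_pos {d : ℕ} (A : EuclideanSpace ℝ (Fin d) →L[ℝ] EuclideanSpace ℝ (Fin d))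
    (t : ℝ) (ht : 0 ≤ t) (h : t * ‖A‖ < 1) :
    0 < (ContinuousLinearMap.id ℝ _ + t • A).det := by
  obtain ⟨P, -, hP⟩ := brw_poly A
  have hne : ∀ s ∈ Icc 0 t, P.eval s ≠ 0 := by
    intro s hs h0
    rw [hP] at h0
    obtain ⟨v, hv, hv0⟩ := Submodule.exists_mem_ne_zero_of_ne_bot
      (LinearMap.bot_lt_ker_of_det_eq_zero h0).ne'
    have hv1 : v + s • A v = 0 := by simpa using hv
    have h1 : ‖v‖ ≤ s * ‖A‖ * ‖v‖ := by
      have : v = - (s • A v) := eq_neg_of_add_eq_zero_left hv1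
      calc ‖v‖ = ‖s • A v‖ := by rw [← norm_neg (s • A v), ← this]
        _ = s * ‖A v‖ := by rw [norm_smul, Real.norm_of_nonneg hs.1]
        _ ≤ s * (‖A‖ * ‖v‖) := by gcongr; exacts [hs.1, A.le_opNorm v]
        _ = _ := by ring
    have h2 : 0 < ‖v‖ := norm_pos_iff.2 hv0
    have h3 : s * ‖A‖ ≤ t * ‖A‖ := by gcongr; exact hs.2
    nlinarith
  have h1 : P.eval 0 = 1 := by
    rw [hP]; simp [ContinuousLinearMap.det]
  rw [← hP]
  by_contra hc
  push Not at hc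
  obtain ⟨s, hs, hs0⟩ := intermediate_value_Icc' ht (P.continuous.continuousOn)
    (show (0:ℝ) ∈ Icc (P.eval t) (P.eval 0) from ⟨hc, by rw [h1]; exact zero_le_one⟩)
  exact hne s hs hs0

open MeasureTheory Metric in
lemma brw_no_retract {d : ℕ} (f : EuclideanSpace ℝ (Fin d) → EuclideanSpace ℝ (Fin d))
    (hf : ∀ x, ‖x‖ ≤ 1 → ContDiffAt ℝ 1 f x) (hf1 : ∀ x, ‖x‖ ≤ 1 → ‖f x‖ = 1)
    (hfid : ∀ x, ‖x‖ = 1 → f x = x) : False := by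
  let E := EuclideanSpace ℝ (Fin d)
  let B : Set E := closedBall 0 1
  have hB : ∀ x, x ∈ B ↔ ‖x‖ ≤ 1 := fun x => mem_closedBall_zero_iff
  have hBc : IsCompact B := isCompact_closedBall 0 1
  have hBcv : Convex ℝ B := convex_closedBall 0 1
  let g : E → E := fun x => f x - x
  have hg : ∀ x ∈ B, ContDiffAt ℝ 1 g x := fun x hx => (hf x ((hB x).1 hx)).sub contDiffAt_id
  let A : E → (E →L[ℝ] E) := fderiv ℝ g
  have hA : ∀ x ∈ B, HasFDerivAt g (A x) x := fun x hx =>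
    ((hg x hx).differentiableAt (by simp)).hasFDerivAt
  have hAc : ContinuousOn A B := fun x hx =>
    ((hg x hx).fderiv_right (m := 0) (by simp)).continuousAt.continuousWithinAt
  obtain ⟨L0, hL0⟩ := hBc.exists_bound_of_continuousOn hAc
  let L : ℝ := max L0 1
  have hL : ∀ x ∈ B, ‖A x‖ ≤ L := fun x hx => (hL0 x hx).trans (le_max_left _ _)
  have hLpos : 0 < L := lt_of_lt_of_le one_pos (le_max_right _ _)
  have hlip : ∀ x ∈ B, ∀ y ∈ B, ‖g y - g x‖ ≤ L * ‖y - x‖ := fun x hx y hy =>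
    hBcv.norm_image_sub_le_of_norm_hasFDerivWithin_le
      (fun z hz => (hA z hz).hasFDerivWithinAt) hL hx hy
  obtain ⟨p, hpB, hpid, hplip, hpin⟩ := brw_proj (K := B) ⟨0, by simp [hB]⟩ isClosed_closedBall hBcv
  have hpout : ∀ x, x ∉ B → ‖p x‖ = 1 := by
    intro x hx
    refine le_antisymm ((hB _).1 (hpB x)) ?_
    by_contra hlt
    push Not at hlt
    have hne : 0 < ‖x - p x‖ := by
      rw [norm_pos_iff, sub_ne_zero]
      rintro h
      exact hx (h ▸ hpB x)
    let s := (1 - ‖p x‖) / ‖x - p x‖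
    have hs : 0 < s := div_pos (by linarith) hne
    have hw : p x + s • (x - p x) ∈ B := by
      rw [hB]
      calc ‖p x + s • (x - p x)‖ ≤ ‖p x‖ + ‖s • (x - p x)‖ := norm_add_le _ _
        _ = ‖p x‖ + s * ‖x - p x‖ := by rw [norm_smul, Real.norm_of_nonneg hs.le]
        _ = 1 := by simp only [s]; field_simp; ring
        _ ≤ 1 := le_rfl
    have := hpin x _ hw
    rw [add_sub_cancel_left, inner_smul_right, real_inner_self_eq_norm_sq] at this
    have h2 : 0 < s * ‖x - p x‖ ^ 2 := by positivity
    linarith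
  let t0 : ℝ := 1 / (2 * L)
  have ht0 : 0 < t0 := by positivity
  have ht0L : t0 * L = 1 / 2 := by simp only [t0]; field_simp
  have ht01 : t0 ≤ 1 := by
    have : 1 ≤ L := le_max_right _ _
    nlinarith
  -- the volume identity for small t
  have hvol : ∀ t, 0 ≤ t → t ≤ t0 →
      ∫ x in B, (ContinuousLinearMap.id ℝ E + t • A x).det = volume.real B := by
    intro t ht htt
    have htL : t * L ≤ 1 / 2 := by
      rw [← ht0L]; gcongr
    have hinj : InjOn (fun x => x + t • g x) B := by
      intro x hx y hy hxy
      have h1 : y - x = - (t • (g y - g x)) := by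
        simp only at hxy
        rw [smul_sub]
        have h0 : (y + t • g y) - (x + t • g x) = 0 := by rw [hxy, sub_self]
        have e0 : y - x = ((y + t • g y) - (x + t • g x)) - (t • g y - t • g x) := by module
        rw [e0, h0, zero_sub]
      have h2 : ‖y - x‖ ≤ t * L * ‖y - x‖ := by
        calc ‖y - x‖ = ‖t • (g y - g x)‖ := by rw [h1, norm_neg]
          _ = t * ‖g y - g x‖ := by rw [norm_smul, Real.norm_of_nonneg ht]
          _ ≤ t * (L * ‖y - x‖) := by gcongr; exact hlip x hx y hy
          _ = _ := by ring
      have h3 : ‖y - x‖ = 0 := by nlinarith [norm_nonneg (y - x)]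
      exact (sub_eq_zero.1 (norm_eq_zero.1 h3)).symm
    have himg : (fun x => x + t • g x) '' B = B := by
      apply Subset.antisymm
      · rintro _ ⟨x, hx, rfl⟩
        have e : x + t • g x = (1 - t) • x + t • f x := by
          simp only [g]; module
        show x + t • g x ∈ B
        rw [e]
        exact hBcv hx ((hB _).2 (hf1 x ((hB x).1 hx)).le) (by linarith) ht (by ring)
      · intro y hy
        have hc : ContractingWith (1/2) (fun x => y - t • g (p x)) := by
          refine ⟨by rw [← NNReal.coe_lt_coe]; norm_num, LipschitzWith.of_dist_le_mul ?_⟩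
          intro a b
          rw [dist_eq_norm, dist_eq_norm]
          have e : (y - t • g (p a)) - (y - t • g (p b)) = t • (g (p b) - g (p a)) := by
            module
          rw [e, norm_smul, Real.norm_of_nonneg ht]
          have h1 := hlip _ (hpB a) _ (hpB b)
          have h2 := hplip b a
          rw [norm_sub_rev b a] at h2
          calc t * ‖g (p b) - g (p a)‖ ≤ t * (L * ‖a - b‖) := by
                gcongr; exact h1.trans (by gcongr)
            _ = t * L * ‖a - b‖ := by ring
            _ ≤ 1 / 2 * ‖a - b‖ := by gcongr
            _ = _ := by simp
        have hfix : y - t • g (p hc.fixedPoint) = hc.fixedPoint := hc.fixedPoint_isFixedPt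
        set z := hc.fixedPoint
        have hz : z ∈ B := by
          by_contra hz
          have h1 : g (p z) = 0 := by
            simp only [g]; rw [hfid _ (hpout z hz), sub_self]
          rw [h1, smul_zero, sub_zero] at hfix
          exact hz (hfix ▸ hy)
        rw [hpid z hz] at hfix
        exact ⟨z, hz, (sub_eq_iff_eq_add.1 hfix).symm⟩
    have hder : ∀ x ∈ B, HasFDerivWithinAt (fun x => x + t • g x)
        (ContinuousLinearMap.id ℝ E + t • A x) B x := fun x hx =>
      ((hasFDerivAt_id x).add ((hA x hx).const_smul t)).hasFDerivWithinAt
    have hcv := integral_image_eq_integral_abs_det_fderiv_smul volume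
      (isClosed_closedBall.measurableSet : MeasurableSet B) hder hinj (fun _ => (1:ℝ))
    rw [himg] at hcv
    simp only [smul_eq_mul, mul_one] at hcv
    rw [setIntegral_const, smul_eq_mul, mul_one] at hcv
    rw [hcv]
    refine setIntegral_congr_fun isClosed_closedBall.measurableSet fun x hx => ?_
    refine (abs_of_pos (brw_det_pos (A x) t ht ?_)).symm
    have : t * ‖A x‖ ≤ t * L := by gcongr; exact hL x hx
    linarith
  have hintegr : ∀ t : ℝ, IntegrableOn (fun x => (ContinuousLinearMap.id ℝ E + t • A x).det) B := by
    intro t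
    refine ContinuousOn.integrableOn_compact hBc ?_
    exact ContinuousLinearMap.continuous_det.comp_continuousOn
      (continuousOn_const.add (hAc.const_smul t))
  obtain ⟨v, l, hv, hl, hvl⟩ := brw_interp d t0 ht0
  have hfin : ∫ x in B, (ContinuousLinearMap.id ℝ E + (1:ℝ) • A x).det = volume.real B := by
    have e : ∀ x, (ContinuousLinearMap.id ℝ E + (1:ℝ) • A x).det
        = ∑ i, l i * (ContinuousLinearMap.id ℝ E + v i • A x).det := by
      intro x
      obtain ⟨P, hPd, hP⟩ := brw_poly (A x)
      rw [← hP, hvl P hPd]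
      exact Finset.sum_congr rfl fun i _ => by rw [hP]
    simp only [e]
    rw [integral_finsetSum]
    · simp only [integral_const_mul]
      rw [Finset.sum_congr rfl fun i _ => by rw [hvol (v i) (hv i).1 (hv i).2]]
      rw [← Finset.sum_mul, hl, one_mul]
    · intro i _
      exact (hintegr (v i)).const_mul _
  have hzero : ∫ x in B, (ContinuousLinearMap.id ℝ E + (1:ℝ) • A x).det = 0 := by
    have hsph := measure_eq_zero_iff_ae_notMem.1
      (Measure.addHaar_sphere_of_ne_zero (volume : Measure E) 0 one_ne_zero)
    rw [setIntegral_congr_ae (g := fun _ => (0:ℝ)) isClosed_closedBall.measurableSet, integral_zero]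
    filter_upwards [hsph] with x hxs hxB
    have hx1 : ‖x‖ < 1 := lt_of_le_of_ne ((hB x).1 hxB) (fun h => hxs (mem_sphere_zero_iff_norm.2 h))
    have hx : x ∈ ball (0:E) 1 := mem_ball_zero_iff.2 hx1
    have hDf : HasFDerivAt f (ContinuousLinearMap.id ℝ E + (1:ℝ) • A x) x := by
      have := (hasFDerivAt_id x).add ((hA x hxB).const_smul (1:ℝ))
      refine this.congr_of_eventuallyEq (Filter.Eventually.of_forall fun y => ?_)
      simp [g]
    set D := ContinuousLinearMap.id ℝ E + (1:ℝ) • A x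
    have horth : ∀ v, inner ℝ (f x) (D v) = 0 := by
      intro v
      have h1 := hDf.inner ℝ hDf
      have h2 : HasFDerivAt (fun y => inner ℝ (f y) (f y)) (0 : E →L[ℝ] ℝ) x := by
        refine (hasFDerivAt_const (1:ℝ) x).congr_of_eventuallyEq ?_
        filter_upwards [isOpen_ball.mem_nhds hx] with y hy
        rw [real_inner_self_eq_norm_sq, hf1 y (mem_ball_zero_iff.1 hy).le, one_pow]
      have h3 := congrArg (fun T => T v) (h1.unique h2)
      simp [fderivInnerCLM_apply] at h3
      rw [real_inner_comm] at h3
      linarith [real_inner_comm (f x) (D v)]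
    by_contra hdet
    have hsurj : Function.Surjective D := by
      exact (LinearMap.equivOfDetNeZero (D : E →ₗ[ℝ] E) hdet).surjective
    obtain ⟨w, hw⟩ := hsurj (f x)
    have := horth w
    rw [hw, real_inner_self_eq_norm_sq, hf1 x hx1.le] at this
    norm_num at this
  have hpos : 0 < volume.real B :=
    ENNReal.toReal_pos (measure_closedBall_pos volume 0 one_pos).ne' hBc.measure_lt_top.ne
  linarith

lemma brw_ball {d : ℕ} (f : EuclideanSpace ℝ (Fin d) → EuclideanSpace ℝ (Fin d))
    (hf : Continuous f) (hf1 : ∀ x, ‖f x‖ ≤ 1) : ∃ x, f x = x := by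
  by_contra hno
  push Not at hno
  obtain ⟨x0, hx0, hmin⟩ := (isCompact_closedBall (0 : EuclideanSpace ℝ (Fin d)) 1).exists_isMinOn
    ⟨0, by simp⟩ (f := fun x => ‖f x - x‖) (by fun_prop)
  set m := ‖f x0 - x0‖ with hm
  have hmpos : 0 < m := norm_pos_iff.2 (sub_ne_zero.2 (hno x0))
  have hmle : ∀ x, ‖x‖ ≤ 1 → m ≤ ‖f x - x‖ := fun x hx =>
    hmin (mem_closedBall_zero_iff.2 hx)
  obtain ⟨q, hq, hqf, -⟩ := hf.exists_contDiff_approx 1 (ε := fun _ => m / 3) continuous_const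
    (fun _ => by positivity)
  let p : EuclideanSpace ℝ (Fin d) → EuclideanSpace ℝ (Fin d) := fun x => (1 + m / 3)⁻¹ • q x
  have hqn : ∀ x, ‖q x‖ ≤ 1 + m / 3 := by
    intro x
    have h1 := hqf x
    rw [dist_eq_norm] at h1
    have h2 : ‖q x‖ ≤ ‖f x‖ + ‖q x - f x‖ := norm_le_norm_add_norm_sub' _ _
    linarith [hf1 x]
  have hp1 : ∀ x, ‖p x‖ ≤ 1 := by
    intro x
    simp only [p]
    rw [norm_smul, Real.norm_of_nonneg (by positivity), inv_mul_le_iff₀ (by positivity), mul_one]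
    exact hqn x
  have hpne : ∀ x, ‖x‖ ≤ 1 → x - p x ≠ 0 := by
    intro x hx h0
    have h1 := hmle x hx
    have h2 : x = p x := sub_eq_zero.1 h0
    have h3 : q x = (1 + m / 3) • p x := by
      simp only [p]; rw [smul_inv_smul₀ (by positivity)]
    have h4 : q x - p x = (m / 3) • p x := by rw [h3]; module
    have h5 : ‖q x - p x‖ ≤ m / 3 := by
      rw [h4, norm_smul, Real.norm_of_nonneg (by positivity)]
      nlinarith [hp1 x]
    have h6 := hqf x
    rw [dist_eq_norm, norm_sub_rev] at h6
    have h7 : ‖f x - x‖ ≤ ‖f x - q x‖ + ‖q x - p x‖ := by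
      conv_lhs => rw [h2]
      refine le_trans (le_of_eq ?_) (norm_add_le _ _)
      rw [← h2]
      congr 1
      abel
    linarith
  have hpC : ContDiff ℝ 1 p := hq.const_smul _
  let u : EuclideanSpace ℝ (Fin d) → EuclideanSpace ℝ (Fin d) := fun x => x - p x
  let a : EuclideanSpace ℝ (Fin d) → ℝ := fun x => inner ℝ (u x) (u x)
  let b : EuclideanSpace ℝ (Fin d) → ℝ := fun x => inner ℝ x (u x)
  let D : EuclideanSpace ℝ (Fin d) → ℝ := fun x => b x ^ 2 + a x * (1 - inner ℝ x x)
  have huC : ContDiff ℝ 1 u := contDiff_id.sub hpC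
  have haC : ContDiff ℝ 1 a := huC.inner ℝ huC
  have hbC : ContDiff ℝ 1 b := contDiff_id.inner ℝ huC
  have hDC : ContDiff ℝ 1 D :=
    (hbC.pow 2).add (haC.mul (contDiff_const.sub (contDiff_id.inner ℝ contDiff_id)))
  have hapos : ∀ x, ‖x‖ ≤ 1 → 0 < a x := by
    intro x hx
    exact real_inner_self_pos.2 (hpne x hx)
  have hbpos : ∀ x, ‖x‖ = 1 → 0 < b x := by
    intro x hx
    have h1 := hapos x hx.le
    have h2 : a x = 1 - 2 * inner ℝ x (p x) + ‖p x‖ ^ 2 := by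
      simp only [a, u]
      rw [real_inner_self_eq_norm_sq, norm_sub_sq_real, hx]; ring
    have h3 : b x = 1 - inner ℝ x (p x) := by
      simp only [b, u]
      rw [inner_sub_right, real_inner_self_eq_norm_sq, hx]; ring
    nlinarith [hp1 x, norm_nonneg (p x)]
  have hDpos : ∀ x, ‖x‖ ≤ 1 → 0 < D x := by
    intro x hx
    simp only [D]
    rw [real_inner_self_eq_norm_sq]
    rcases eq_or_lt_of_le hx with h | h
    · have := hbpos x h
      rw [h]; norm_num; positivity
    · have := hapos x hx
      have h2 : 0 < 1 - ‖x‖ ^ 2 := by nlinarith [norm_nonneg x]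
      positivity
  refine brw_no_retract (fun x => x + ((- b x + Real.sqrt (D x)) / a x) • u x) ?_ ?_ ?_
  · intro x hx
    have h1 : ContDiffAt ℝ 1 (fun x => (- b x + Real.sqrt (D x)) / a x) x := by
      refine ContDiffAt.div ?_ haC.contDiffAt (hapos x hx).ne'
      exact hbC.contDiffAt.neg.add (hDC.contDiffAt.sqrt (hDpos x hx).ne')
    exact contDiffAt_id.add (h1.smul huC.contDiffAt)
  · intro x hx
    have ha := hapos x hx
    have hs := Real.sq_sqrt (hDpos x hx).le
    set τ := (- b x + Real.sqrt (D x)) / a x with hτ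
    have h1 : τ * a x = - b x + Real.sqrt (D x) := by rw [hτ]; field_simp
    have h2 : ‖x + τ • u x‖ ^ 2 = inner ℝ x x + 2 * τ * b x + τ ^ 2 * a x := by
      rw [← real_inner_self_eq_norm_sq]
      simp only [inner_add_left, inner_add_right, inner_smul_left, inner_smul_right, a, b,
        real_inner_comm x (u x), conj_trivial]
      ring
    have h3 : a x * (‖x + τ • u x‖ ^ 2 - 1) = 0 := by
      rw [h2]
      have : a x * (inner ℝ x x + 2 * τ * b x + τ ^ 2 * a x - 1)
        = (τ * a x + b x) ^ 2 - D x := by simp only [D]; ring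
      rw [this, h1, neg_add_cancel_comm, hs, sub_self]
    have h4 : ‖x + τ • u x‖ ^ 2 = 1 := by
      rcases mul_eq_zero.1 h3 with h | h
      · exact absurd h ha.ne'
      · linarith
    exact (pow_eq_one_iff_of_nonneg (norm_nonneg _) two_ne_zero).1 h4
  · intro x hx
    have hD : D x = b x ^ 2 := by
      simp only [D]; rw [real_inner_self_eq_norm_sq, hx]; ring
    rw [hD, Real.sqrt_sq (hbpos x hx).le]
    simp

/-- Brouwer's theorem for a compact convex subset of `Fin d → ℝ`. -/
lemma brw_convex {d : ℕ} (K : Set (Fin d → ℝ)) (hK : IsCompact K) (hcv : Convex ℝ K)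
    (hne : K.Nonempty) (f : (Fin d → ℝ) → (Fin d → ℝ)) (hf : ContinuousOn f K)
    (hm : MapsTo f K K) : ∃ x ∈ K, f x = x := by
  let e := EuclideanSpace.equiv (Fin d) ℝ
  let K' : Set (EuclideanSpace ℝ (Fin d)) := e.symm '' K
  have hK'c : IsCompact K' := hK.image e.symm.continuous
  have hK'v : Convex ℝ K' := hcv.linear_image (e.symm : (Fin d → ℝ) →ₗ[ℝ] EuclideanSpace ℝ (Fin d))
  obtain ⟨p, hpK, hpid, hplip, -⟩ := brw_proj (hne.image e.symm) hK'c.isClosed hK'v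
  have hpc : Continuous p := by
    refine (LipschitzWith.of_dist_le_mul (K := 1) fun x y => ?_).continuous
    rw [dist_eq_norm, dist_eq_norm]
    simpa using hplip x y
  have hpe : ∀ x, e (p x) ∈ K := by
    intro x
    obtain ⟨y, hy, hyx⟩ := hpK x
    rw [← hyx]; simpa using hy
  obtain ⟨R, hR0, hR⟩ : ∃ R : ℝ, 0 < R ∧ ∀ x ∈ K', ‖x‖ ≤ R := by
    obtain ⟨R, hR⟩ := hK'c.isBounded.exists_norm_le
    exact ⟨max R 1, by positivity, fun x hx => (hR x hx).trans (le_max_left _ _)⟩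
  obtain ⟨x, hx⟩ := brw_ball (fun x : EuclideanSpace ℝ (Fin d) => R⁻¹ • e.symm (f (e (p (R • x))))) (by
      have hcc : Continuous (fun x : EuclideanSpace ℝ (Fin d) => f (e (p (R • x)))) := hf.comp_continuous (f := fun x : EuclideanSpace ℝ (Fin d) => e (p (R • x)))
        (e.continuous.comp (hpc.comp (continuous_const_smul R)))
        (fun x => hpe _)
      exact (continuous_const_smul (R⁻¹ : ℝ)).comp (e.symm.continuous.comp hcc)) (by
      intro x
      rw [norm_smul, Real.norm_of_nonneg (by positivity), inv_mul_le_iff₀ hR0, mul_one]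
      exact hR _ ⟨_, hm (hpe _), rfl⟩)
  have h1 : e.symm (f (e (p (R • x)))) = R • x := by
    exact (inv_smul_eq_iff₀ hR0.ne').1 hx
  have h2 : R • x ∈ K' := h1 ▸ ⟨_, hm (hpe _), rfl⟩
  rw [hpid _ h2] at h1
  refine ⟨e (R • x), ?_, ?_⟩
  · have := hpe (R • x)
    rwa [hpid _ h2] at this
  · exact (e.symm_apply_eq).1 h1

lemma irr_cross {n : ℕ} (C : Matrix (Fin n) (Fin n) ℝ) (hC0 : ∀ i j, 0 ≤ C i j)
    (hCirr : IsIrred C) (A : Finset (Fin n)) (hA : A.Nonempty) (hA' : A ≠ Finset.univ) :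
    ∃ i, i ∉ A ∧ ∃ j ∈ A, 0 < C i j := by
  by_contra h
  push Not at h
  have hz : ∀ m : ℕ, ∀ i, i ∉ A → ∀ j ∈ A, (C ^ m) i j = 0 := by
    intro m
    induction m with
    | zero =>
      intro i hi j hj
      rw [pow_zero, Matrix.one_apply_ne]
      rintro rfl
      exact hi hj
    | succ m ih =>
      intro i hi j hj
      rw [pow_succ', Matrix.mul_apply]
      refine Finset.sum_eq_zero fun k _ => ?_
      by_cases hk : k ∈ A
      · rw [le_antisymm (h i hi k hk) (hC0 i k), zero_mul]
      · rw [ih k hk j hj, mul_zero]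
  obtain ⟨j, hj⟩ := hA
  obtain ⟨i, hi⟩ : ∃ i, i ∉ A := by
    by_contra hh
    push Not at hh
    exact hA' (Finset.eq_univ_iff_forall.2 hh)
  obtain ⟨m, -, hm⟩ := hCirr i j
  rw [hz m i hi j hj] at hm
  exact lt_irrefl _ hm

lemma irr_row {n : ℕ} (C : Matrix (Fin n) (Fin n) ℝ) (hC0 : ∀ i j, 0 ≤ C i j)
    (hCirr : IsIrred C) (i : Fin n) : ∃ j, 0 < C i j := by
  by_contra h
  push Not at h
  obtain ⟨m, hm0, hm⟩ := hCirr i i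
  obtain ⟨m, rfl⟩ := Nat.exists_eq_succ_of_ne_zero hm0.ne'
  rw [pow_succ', Matrix.mul_apply, Finset.sum_eq_zero] at hm
  · exact lt_irrefl _ hm
  · intro k _
    rw [le_antisymm (h k) (hC0 i k), zero_mul]

lemma inv_meas_bound (n : ℕ) (C : Matrix (Fin (n+1)) (Fin (n+1)) ℝ)
    (hC0 : ∀ i j, 0 ≤ C i j) (hCirr : IsIrred C) (hC11 : 0 < C 0 0)
    (K c : ℝ) (hc : 0 < c) (hK : ∀ i, ∑ j, C i j ≤ K) (hcC : ∀ i j, 0 < C i j → c ≤ C i j)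
    (w : Fin (n+1) → ℝ) (Γ : ℝ) (hw1 : ∀ j, 1 ≤ w j) (hΓ1 : 1 ≤ Γ) (hwΓ : ∀ j, j ≠ 0 → w j ≤ Γ)
    (hΓ : Γ ≤ w 0)
    (u : Fin (n+1) → ℝ) (hu : u ∈ stdSimplex ℝ (Fin (n+1)))
    (hinv : ∀ j, ∑ i, u i * (C i j * w j / ∑ k, C i k * w k) = u j) :
    ∀ i, i ≠ 0 → u i * w 0 ≤ (K / c) ^ (n+1) * Γ ^ n := by
  have hw0 : ∀ j, 0 < w j := fun j => lt_of_lt_of_le one_pos (hw1 j)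
  have hCK : ∀ i j, C i j ≤ K := fun i j =>
    (Finset.single_le_sum (fun k _ => hC0 i k) (Finset.mem_univ j)).trans (hK i)
  have hcK : c ≤ K := (hcC 0 0 hC11).trans (hCK 0 0)
  have hKpos : 0 < K := hc.trans_le hcK
  set R := K / c with hRdef
  have hR1 : 1 ≤ R := (one_le_div hc).2 hcK
  have hRc : R * c = K := by rw [hRdef]; field_simp
  let D : Fin (n+1) → ℝ := fun i => ∑ k, C i k * w k
  have hDpos : ∀ i, 0 < D i := by
    intro i
    obtain ⟨j, hj⟩ := irr_row C hC0 hCirr i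
    exact Finset.sum_pos' (fun k _ => mul_nonneg (hC0 i k) (hw0 k).le)
      ⟨j, Finset.mem_univ j, mul_pos hj (hw0 j)⟩
  have hu0 : ∀ i, 0 ≤ u i := hu.1
  have hu1 : ∀ i, u i ≤ 1 := fun i => by
    rw [← hu.2]; exact Finset.single_le_sum (fun k _ => hu0 k) (Finset.mem_univ i)
  let M : Fin (n+1) → Fin (n+1) → ℝ := fun i j => C i j * w j / D i
  have hM0 : ∀ i j, 0 ≤ M i j := fun i j =>
    div_nonneg (mul_nonneg (hC0 i j) (hw0 j).le) (hDpos i).le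
  have hMrow : ∀ i, ∑ j, M i j = 1 := fun i => by
    simp only [M]; rw [← Finset.sum_div]; exact div_self (hDpos i).ne'
  have hstep : ∀ i j, u i * M i j ≤ u j := fun i j => by
    conv_rhs => rw [← hinv j]
    exact Finset.single_le_sum (f := fun i => u i * M i j)
      (fun k _ => mul_nonneg (hu0 k) (hM0 k j)) (Finset.mem_univ i)
  -- upper bounds of `D`
  have hDH : ∀ i, D i ≤ K * w 0 := by
    intro i
    calc D i ≤ ∑ k, C i k * w 0 := by
          refine Finset.sum_le_sum fun k _ => mul_le_mul_of_nonneg_left ?_ (hC0 i k)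
          by_cases hk : k = 0
          · rw [hk]
          · exact (hwΓ k hk).trans hΓ
      _ = (∑ k, C i k) * w 0 := by rw [Finset.sum_mul]
      _ ≤ K * w 0 := mul_le_mul_of_nonneg_right (hK i) (hw0 0).le
  have hDΓ : ∀ i, C i 0 = 0 → D i ≤ K * Γ := by
    intro i hi
    calc D i ≤ ∑ k, C i k * Γ := by
          refine Finset.sum_le_sum fun k _ => ?_
          by_cases hk : k = 0
          · rw [hk, hi]; simp
          · exact mul_le_mul_of_nonneg_left (hwΓ k hk) (hC0 i k)
      _ = (∑ k, C i k) * Γ := by rw [Finset.sum_mul]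
      _ ≤ K * Γ := mul_le_mul_of_nonneg_right (hK i) (by linarith)
  -- flow out of `0`
  have hout : ∑ j : Fin n, M 0 j.succ ≤ R * Γ / w 0 := by
    have h1 : ∑ j : Fin n, M 0 j.succ = (∑ j : Fin n, C 0 j.succ * w j.succ) / D 0 := by
      simp only [M]; rw [← Finset.sum_div]
    have h2 : ∑ j : Fin n, C 0 j.succ * w j.succ ≤ K * Γ := by
      calc ∑ j : Fin n, C 0 j.succ * w j.succ ≤ ∑ j : Fin n, C 0 j.succ * Γ :=
            Finset.sum_le_sum fun j _ =>
              mul_le_mul_of_nonneg_left (hwΓ _ (Fin.succ_ne_zero j)) (hC0 _ _)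
        _ = (∑ j : Fin n, C 0 j.succ) * Γ := by rw [Finset.sum_mul]
        _ ≤ K * Γ := by
          refine mul_le_mul_of_nonneg_right ?_ (by linarith)
          have := hK 0
          rw [Fin.sum_univ_succ] at this
          linarith
    have h3 : c * w 0 ≤ D 0 := by
      calc c * w 0 ≤ C 0 0 * w 0 := mul_le_mul_of_nonneg_right (hcC 0 0 hC11) (hw0 0).le
        _ ≤ D 0 := Finset.single_le_sum (f := fun k => C 0 k * w k)
          (fun k _ => mul_nonneg (hC0 0 k) (hw0 k).le) (Finset.mem_univ 0)
    have hw00 := hw0 0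
    rw [h1, div_le_div_iff₀ (hDpos 0) hw00]
    have h4 : R * Γ * (c * w 0) ≤ R * Γ * D 0 := mul_le_mul_of_nonneg_left h3 (by positivity)
    calc (∑ j : Fin n, C 0 j.succ * w j.succ) * w 0 ≤ K * Γ * w 0 :=
          mul_le_mul_of_nonneg_right h2 hw00.le
      _ = R * Γ * (c * w 0) := by rw [← hRc]; ring
      _ ≤ _ := h4
  set F := R * Γ / w 0 with hF
  have hw00 := hw0 0
  have hFpos : 0 < F := by positivity
  have hin : ∀ i, i ≠ 0 → u i * M i 0 ≤ F := by
    intro i hi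
    obtain ⟨k, rfl⟩ := Fin.exists_succ_eq_of_ne_zero hi
    have h1 : ∑ i, u i * M i 0 = u 0 := hinv 0
    have h2 := hMrow 0
    rw [Fin.sum_univ_succ] at h1 h2
    have h3 : u k.succ * M k.succ 0 ≤ ∑ i : Fin n, u i.succ * M i.succ 0 :=
      Finset.single_le_sum (f := fun i : Fin n => u i.succ * M i.succ 0)
        (fun k _ => mul_nonneg (hu0 _) (hM0 _ _)) (Finset.mem_univ k)
    have h4 : ∑ i : Fin n, u i.succ * M i.succ 0 = u 0 * ∑ j : Fin n, M 0 j.succ := by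
      have : ∑ j : Fin n, M 0 j.succ = 1 - M 0 0 := by linarith
      rw [this]; linarith
    have h5 : u 0 * ∑ j : Fin n, M 0 j.succ ≤ 1 * F := by
      gcongr
      · exact Finset.sum_nonneg fun j _ => hM0 _ _
      · exact hu1 0
    linarith
  have hnear : ∀ i, i ≠ 0 → 0 < C i 0 → u i ≤ F * R := by
    intro i hi hpos
    have h1 := hin i hi
    have h2 : 1 / R ≤ M i 0 := by
      simp only [M]
      rw [div_le_div_iff₀ (by linarith) (hDpos i), one_mul]
      calc D i ≤ K * w 0 := hDH i
        _ = c * w 0 * R := by rw [← hRc]; ring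
        _ ≤ C i 0 * w 0 * R := by gcongr; exact hcC i 0 hpos
    have h3 : u i * (1 / R) ≤ F := (mul_le_mul_of_nonneg_left h2 (hu0 i)).trans h1
    rwa [mul_one_div, div_le_iff₀ (by linarith)] at h3
  have hfar : ∀ i j, C i 0 = 0 → 0 < C i j → u i ≤ u j * (R * Γ) := by
    intro i j hi hpos
    have h2 : 1 / (R * Γ) ≤ M i j := by
      simp only [M]
      rw [div_le_div_iff₀ (by positivity) (hDpos i), one_mul]
      calc D i ≤ K * Γ := hDΓ i hi
        _ = c * 1 * (R * Γ) := by rw [← hRc]; ring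
        _ ≤ C i j * w j * (R * Γ) := by
          gcongr
          · exact hcC i j hpos
          · exact hw1 j
    have h3 : u i * (1 / (R * Γ)) ≤ u j := (mul_le_mul_of_nonneg_left h2 (hu0 i)).trans (hstep i j)
    rwa [mul_one_div, div_le_iff₀ (by positivity)] at h3
  have hRΓ : 1 ≤ R * Γ := one_le_mul_of_one_le_of_one_le hR1 hΓ1
  have hind : ∀ k, k ≤ n → ∃ A : Finset (Fin (n+1)), 0 ∈ A ∧ A.card = k + 1 ∧
      ∀ i ∈ A, i ≠ 0 → u i * Γ ≤ F * (R * Γ) ^ k := by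
    intro k
    induction k with
    | zero =>
      intro _
      refine ⟨{0}, by simp, by simp, fun i hi hi0 => absurd (Finset.mem_singleton.1 hi) hi0⟩
    | succ k ih =>
      intro hk
      obtain ⟨A, hA0, hAc, hA⟩ := ih (by omega)
      obtain ⟨i, hiA, j, hjA, hij⟩ := irr_cross C hC0 hCirr A ⟨0, hA0⟩ (by
        rintro rfl
        simp at hAc
        omega)
      have hi0 : i ≠ 0 := fun h => hiA (h ▸ hA0)
      refine ⟨insert i A, Finset.mem_insert_of_mem hA0, by
        rw [Finset.card_insert_of_notMem hiA, hAc], ?_⟩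
      have hpow : F * (R * Γ) ^ k ≤ F * (R * Γ) ^ (k+1) := by
        exact mul_le_mul_of_nonneg_left (pow_le_pow_right₀ hRΓ (by omega)) hFpos.le
      intro l hl hl0
      rcases Finset.mem_insert.1 hl with rfl | hl
      · by_cases hc0 : 0 < C l 0
        · have h1 := hnear l hl0 hc0
          calc u l * Γ ≤ F * R * Γ := by gcongr
            _ = F * (R * Γ) ^ 1 := by ring
            _ ≤ F * (R * Γ) ^ (k+1) := by
              exact mul_le_mul_of_nonneg_left (pow_le_pow_right₀ hRΓ (by omega)) hFpos.le
        · have hc0 : C l 0 = 0 := le_antisymm (not_lt.1 hc0) (hC0 _ _)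
          have hj0 : j ≠ 0 := by
            rintro rfl
            exact hij.ne' hc0
          have h1 := hfar l j hc0 hij
          calc u l * Γ ≤ u j * (R * Γ) * Γ := by gcongr
            _ = (u j * Γ) * (R * Γ) := by ring
            _ ≤ F * (R * Γ) ^ k * (R * Γ) := by
              exact mul_le_mul_of_nonneg_right (hA j hjA hj0) (by positivity)
            _ = _ := by ring
      · exact (hA l hl hl0).trans hpow
  obtain ⟨A, -, hAc, hA⟩ := hind n le_rfl
  have hAu : A = Finset.univ := Finset.eq_univ_of_card A (by simpa using hAc)
  intro i hi
  have h1 := hA i (by rw [hAu]; exact Finset.mem_univ i) hi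
  have h2 : u i * w 0 * Γ ≤ (R ^ (n+1) * Γ ^ n) * Γ := by
    calc u i * w 0 * Γ = (u i * Γ) * w 0 := by ring
      _ ≤ F * (R * Γ) ^ n * w 0 := by gcongr
      _ = (R ^ (n+1) * Γ ^ n) * Γ := by
        rw [hF, mul_pow]; field_simp; ring
  exact le_of_mul_le_mul_right h2 (by linarith)

lemma adm_growth {g g' : ℝ → ℝ} {Lm δ : ℝ} (hg : IsAdmissible g g')
    (hL : IsLeast (ratioSet g g') Lm) (hδ : 0 < δ) (hδL : δ ≤ Lm) :
    StrictMonoOn g (Icc 0 1) ∧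
    ∀ a b, 0 ≤ a → a ≤ b → b ≤ 1 → g a * (1 + δ * (b - a)) ≤ g b := by
  obtain ⟨hd, -, -, hpos, hpos'⟩ := hg
  have hc : ContinuousOn g (Icc 0 1) := fun x hx => (hd x hx).continuousWithinAt
  have hmvt : ∀ a b, 0 ≤ a → a < b → b ≤ 1 →
      ∃ z ∈ Ioo a b, g' z = (g b - g a) / (b - a) := by
    intro a b ha hab hb
    refine exists_hasDerivAt_eq_slope g g' hab (hc.mono (Icc_subset_Icc ha hb)) ?_
    intro x hx
    exact (hd x ⟨ha.trans hx.1.le, hx.2.le.trans hb⟩).hasDerivAt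
      (Icc_mem_nhds (ha.trans_lt hx.1) (hx.2.trans_le hb))
  have hmono : StrictMonoOn g (Icc 0 1) := by
    intro a ha b hb hab
    obtain ⟨z, hz, hz'⟩ := hmvt a b ha.1 hab hb.2
    have h1 := hpos' z ⟨ha.1.trans hz.1.le, hz.2.le.trans hb.2⟩
    rw [hz'] at h1
    have := (div_pos_iff_of_pos_right (sub_pos.2 hab)).1 h1
    linarith
  refine ⟨hmono, ?_⟩
  intro a b ha hab hb
  rcases eq_or_lt_of_le hab with rfl | hab
  · simp
  obtain ⟨z, hz, hz'⟩ := hmvt a b ha hab hb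
  have hz01 : z ∈ Icc (0:ℝ) 1 := ⟨ha.trans hz.1.le, hz.2.le.trans hb⟩
  have h1 : δ ≤ g' z / g z := hδL.trans (hL.2 ⟨z, hz01, rfl⟩)
  rw [le_div_iff₀ (hpos z hz01)] at h1
  have h2 : g a ≤ g z := (hmono ⟨ha, hab.le.trans hb⟩ hz01 hz.1).le
  have h3 : δ * g a ≤ g' z := (mul_le_mul_of_nonneg_left h2 hδ.le).trans h1
  rw [hz', le_div_iff₀ (sub_pos.2 hab)] at h3
  linarith

lemma u_cont {n : ℕ} (C : Matrix (Fin (n+1)) (Fin (n+1)) ℝ) (g : ℝ → ℝ)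
    (hC0 : ∀ i j, 0 ≤ C i j) (hCirr : IsIrred C) (hgc : ContinuousOn g (Icc 0 1))
    (hgpos : ∀ x ∈ Icc (0:ℝ) 1, 0 < g x)
    (u : (Fin (n+1) → ℝ) → (Fin (n+1) → ℝ))
    (hu : ∀ x ∈ stdSimplex ℝ (Fin (n+1)), u x ∈ stdSimplex ℝ (Fin (n+1)) ∧
            Matrix.vecMul (u x) (Mg C g x) = u x ∧
            ∀ v ∈ stdSimplex ℝ (Fin (n+1)), Matrix.vecMul v (Mg C g x) = v → v = u x) :
    ContinuousOn u (stdSimplex ℝ (Fin (n+1))) := by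
  have h01 : ∀ x ∈ stdSimplex ℝ (Fin (n+1)), ∀ j, x j ∈ Icc (0:ℝ) 1 := fun x hx j =>
    ⟨hx.1 j, by rw [← hx.2]; exact Finset.single_le_sum (fun k _ => hx.1 k) (Finset.mem_univ j)⟩
  have hgj : ∀ j, ContinuousOn (fun x : Fin (n+1) → ℝ => g (x j)) (stdSimplex ℝ (Fin (n+1))) :=
    fun j => hgc.comp (continuous_apply j).continuousOn (fun x hx => h01 x hx j)
  have hMc : ∀ i j, ContinuousOn (fun x => Mg C g x i j) (stdSimplex ℝ (Fin (n+1))) := by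
    intro i j
    simp only [Mg, Matrix.of_apply]
    refine ContinuousOn.div (continuousOn_const.mul (hgj j))
      (continuousOn_finsetSum _ fun k _ => continuousOn_const.mul (hgj k)) ?_
    intro x hx
    obtain ⟨j, hj⟩ := irr_row C hC0 hCirr i
    exact (Finset.sum_pos' (fun k _ => mul_nonneg (hC0 i k) (hgpos _ (h01 x hx k)).le)
      ⟨j, Finset.mem_univ j, mul_pos hj (hgpos _ (h01 x hx j))⟩).ne'
  intro x hx
  refine (isCompact_stdSimplex ℝ (Fin (n+1))).tendsto_nhds_of_unique_mapClusterPt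
    (Filter.eventually_of_mem self_mem_nhdsWithin fun a ha => (hu a ha).1) ?_
  intro y hy hcl
  refine (hu x hx).2.2 y hy ?_
  obtain ⟨U, hU, hUy⟩ := mapClusterPt_iff_ultrafilter.1 hcl
  have h1 : Filter.Tendsto (fun a => Matrix.vecMul (u a) (Mg C g a)) U
      (nhds (Matrix.vecMul y (Mg C g x))) := by
    rw [tendsto_pi_nhds]
    intro j
    simp only [Matrix.vecMul, dotProduct]
    refine tendsto_finsetSum _ fun i _ => ?_
    exact ((tendsto_pi_nhds.1 hUy) i).mul ((hMc i j x hx).mono_left hU)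
  have h2 : (fun a => Matrix.vecMul (u a) (Mg C g a)) =ᶠ[U] u :=
    Filter.eventually_of_mem (hU self_mem_nhdsWithin) fun a ha => (hu a ha).2.1
  exact tendsto_nhds_unique (h1.congr' h2) hUy

/-- `C` is an irreducible `(n+1) × (n+1)` matrix with `C₁₁ > 0` and `εₙ ∈ (0,1)`.
For every `0 < ε < εₙ` and `L⁻(g)` large enough (depending only on `C`, `ε`, `εₙ`),
if moreover `g(εₙ)^{(n+1)−1} ≤ g(1−εₙ)`, then `u_g` has a fixed point in
`Σ_ε = {x ∈ Σ : x₁ ≥ 1 − ε}`. -/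
theorem fixed_point_near_vertex_diagonal_entry
    (n : ℕ) (C : Matrix (Fin (n+1)) (Fin (n+1)) ℝ)
    (hC0 : ∀ i j, 0 ≤ C i j) (hCirr : IsIrred C)
    (hC11 : 0 < C 0 0)
    (εn : ℝ) (hεn0 : 0 < εn) (hεn1 : εn < 1)
    (ε : ℝ) (hε0 : 0 < ε) (hε1 : ε < εn) :
    ∃ δ : ℝ, 0 < δ ∧
      ∀ g g' : ℝ → ℝ, ∀ Lm : ℝ, IsAdmissible g g' →
        g εn ^ n ≤ g (1 - εn) →
        IsLeast (ratioSet g g') Lm → δ ≤ Lm →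
        ∀ u : (Fin (n+1) → ℝ) → (Fin (n+1) → ℝ),
          (∀ x ∈ stdSimplex ℝ (Fin (n+1)), u x ∈ stdSimplex ℝ (Fin (n+1)) ∧
            Matrix.vecMul (u x) (Mg C g x) = u x ∧
            ∀ v ∈ stdSimplex ℝ (Fin (n+1)), Matrix.vecMul v (Mg C g x) = v → v = u x) →
          ∃ x ∈ stdSimplex ℝ (Fin (n+1)), 1 - ε ≤ x 0 ∧ u x = x := by
  have hKc : ∃ K c : ℝ, 0 < c ∧ (∀ i, ∑ j, C i j ≤ K) ∧ (∀ i j, 0 < C i j → c ≤ C i j) ∧ c ≤ K := by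
    obtain ⟨q, hq, hqmin⟩ := (Finset.univ.filter
      (fun q : Fin (n+1) × Fin (n+1) => 0 < C q.1 q.2)).exists_min_image (fun q => C q.1 q.2)
      ⟨(0,0), by simpa using hC11⟩
    have hqpos : 0 < C q.1 q.2 := by simpa using hq
    refine ⟨∑ i, ∑ j, C i j, C q.1 q.2, hqpos, ?_, ?_, ?_⟩
    · intro i
      exact Finset.single_le_sum (f := fun i => ∑ j, C i j)
        (fun k _ => Finset.sum_nonneg fun j _ => hC0 k j) (Finset.mem_univ i)
    · intro i j hij
      exact hqmin (i, j) (by simpa using hij)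
    · calc C q.1 q.2 ≤ ∑ j, C q.1 j :=
            Finset.single_le_sum (fun j _ => hC0 _ j) (Finset.mem_univ q.2)
        _ ≤ _ := Finset.single_le_sum (f := fun i => ∑ j, C i j)
            (fun k _ => Finset.sum_nonneg fun j _ => hC0 k j) (Finset.mem_univ q.1)
  obtain ⟨K, c, hc, hK, hcC, hcK⟩ := hKc
  have hRpos : 0 < K / c := div_pos (hc.trans_le hcK) hc
  have hgap : 0 < εn - ε := by linarith
  refine ⟨n * (K / c) ^ (n+1) / ε / (εn - ε) + 1, by positivity, ?_⟩
  set δ := n * (K / c) ^ (n+1) / ε / (εn - ε) + 1 with hδdef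
  have hδpos : 0 < δ := by positivity
  intro g g' Lm hadm hgn hL hδL u hu
  rcases Nat.eq_zero_or_pos n with rfl | hn
  · refine ⟨fun _ => 1, ⟨fun _ => zero_le_one, by simp⟩, by simp [hε0.le], ?_⟩
    have h1 := (hu (fun _ => 1) ⟨fun _ => zero_le_one, by simp⟩).1.2
    ext i
    rw [Fin.eq_zero i]
    simpa using h1
  obtain ⟨hmono, hgrow⟩ := adm_growth hadm hL hδpos hδL
  obtain ⟨hd, -, hg0, hpos, -⟩ := hadm
  have hgc : ContinuousOn g (Icc 0 1) := fun x hx => (hd x hx).continuousWithinAt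
  have hεnI : εn ∈ Icc (0:ℝ) 1 := ⟨hεn0.le, hεn1.le⟩
  have hg1 : ∀ x ∈ Icc (0:ℝ) 1, 1 ≤ g x := fun x hx => by
    rw [← hg0]; exact hmono.monotoneOn ⟨le_rfl, zero_le_one⟩ hx hx.1
  have hhalf : εn ≤ 1 - εn := by
    have h1 : g εn ≤ g (1 - εn) := (le_self_pow₀ (hg1 εn hεnI) hn.ne').trans hgn
    exact (hmono.le_iff_le hεnI ⟨by linarith, by linarith⟩).1 h1
  let S : Set (Fin (n+1) → ℝ) := stdSimplex ℝ (Fin (n+1)) ∩ {x | 1 - ε ≤ x 0}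
  have hScl : IsClosed {x : Fin (n+1) → ℝ | 1 - ε ≤ x 0} :=
    isClosed_le continuous_const (continuous_apply 0)
  have hScv : Convex ℝ {x : Fin (n+1) → ℝ | 1 - ε ≤ x 0} :=
    convex_halfSpace_ge (LinearMap.proj (R := ℝ) (φ := fun _ : Fin (n+1) => ℝ) 0).isLinear _
  have hmaps : MapsTo u S S := by
    intro x hx
    obtain ⟨hxS, hx0⟩ := hx
    have hx0' : 1 - ε ≤ x 0 := hx0
    obtain ⟨huS, huM, -⟩ := hu x hxS
    refine ⟨huS, ?_⟩
    have h01 : ∀ j, x j ∈ Icc (0:ℝ) 1 := fun j =>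
      ⟨hxS.1 j, by
        rw [← hxS.2]; exact Finset.single_le_sum (fun k _ => hxS.1 k) (Finset.mem_univ j)⟩
    have hεI : ε ∈ Icc (0:ℝ) 1 := ⟨hε0.le, by linarith⟩
    have hxj : ∀ j, j ≠ 0 → x j ≤ ε := by
      intro j hj
      obtain ⟨k, rfl⟩ := Fin.exists_succ_eq_of_ne_zero hj
      have h1 := hxS.2
      rw [Fin.sum_univ_succ] at h1
      have h2 : x k.succ ≤ ∑ i : Fin n, x i.succ :=
        Finset.single_le_sum (f := fun i : Fin n => x i.succ) (fun i _ => hxS.1 _)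
          (Finset.mem_univ k)
      linarith
    have hb := inv_meas_bound n C hC0 hCirr hC11 K c hc hK hcC (fun j => g (x j)) (g ε)
      (fun j => hg1 _ (h01 j)) (hg1 ε hεI)
      (fun j hj => hmono.monotoneOn (h01 j) hεI (hxj j hj))
      (hmono.monotoneOn hεI (h01 0) (by linarith)) (u x) huS (by
        intro j
        have := congrFun huM j
        simpa [Matrix.vecMul, dotProduct, Mg] using this)
    have h1εn : 0 < g (1 - εn) := hpos _ ⟨by linarith, by linarith⟩
    have hΓn : g ε ^ n ≤ g (1 - εn) := by
      refine le_trans ?_ hgn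
      have := hpos ε hεI
      gcongr
      exact hmono.monotoneOn hεI hεnI hε1.le
    have hH : g (1 - εn) * (1 + δ * (εn - ε)) ≤ g (x 0) := by
      have h1 := hgrow (1 - εn) (1 - ε) (by linarith) (by linarith) (by linarith)
      have h2 : g (1 - ε) ≤ g (x 0) :=
        hmono.monotoneOn ⟨by linarith, by linarith⟩ (h01 0) hx0'
      have e : (1 - ε) - (1 - εn) = εn - ε := by ring
      rw [e] at h1
      exact h1.trans h2
    have hui : ∀ i, i ≠ 0 → u x i * (1 + δ * (εn - ε)) ≤ (K / c) ^ (n+1) := by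
      intro i hi
      have h1 := hb i hi
      have h2 : u x i * (1 + δ * (εn - ε)) * g (1 - εn) ≤ (K / c) ^ (n+1) * g (1 - εn) := by
        calc u x i * (1 + δ * (εn - ε)) * g (1 - εn)
            = u x i * (g (1 - εn) * (1 + δ * (εn - ε))) := by ring
          _ ≤ u x i * g (x 0) := mul_le_mul_of_nonneg_left hH (huS.1 i)
          _ ≤ (K / c) ^ (n+1) * g ε ^ n := h1
          _ ≤ _ := by gcongr
      exact le_of_mul_le_mul_right h2 h1εn
    have hsum : (∑ i : Fin n, u x i.succ) * (1 + δ * (εn - ε)) ≤ n * (K / c) ^ (n+1) := by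
      rw [Finset.sum_mul]
      refine (Finset.sum_le_sum fun i _ => hui i.succ (Fin.succ_ne_zero i)).trans ?_
      simp
    have h1 := huS.2
    rw [Fin.sum_univ_succ] at h1
    have hδ2 : n * (K / c) ^ (n+1) ≤ ε * (1 + δ * (εn - ε)) := by
      have : ε * (δ * (εn - ε)) = n * (K / c) ^ (n+1) + ε * (εn - ε) := by
        rw [hδdef]; field_simp
      have h3 : 0 < ε * (εn - ε) := by positivity
      linarith
    have h2 : ∑ i : Fin n, u x i.succ ≤ ε :=
      le_of_mul_le_mul_right (hsum.trans hδ2) (by positivity)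
    show 1 - ε ≤ u x 0
    linarith
  have hne : S.Nonempty := ⟨Pi.single 0 1, single_mem_stdSimplex ℝ 0, by simp [hε0.le]⟩
  obtain ⟨x, hx, hxu⟩ := brw_convex S ((isCompact_stdSimplex ℝ (Fin (n+1))).inter_right hScl)
    ((convex_stdSimplex ℝ (Fin (n+1))).inter hScv) hne u
    ((u_cont C g hC0 hCirr hgc hpos u hu).mono inter_subset_left) hmaps
  exact ⟨x, hx.1, hx.2, hxu⟩
end
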